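/- arXiv:math/0311449 — 2 statements merged into one kernel-verified Lean document; each statement's English description precedes it below -/
import Mathlib

section
/- For every integer k ≥ 3 and every ε > 0 there exists n₀ such that every graph G on n ≥ n₀ vertices with minimum degree at least (1 - 1/(9k¹⁰))·(n-1) satisfies ν_{K_k}(G) ≥ (1-ε)·e(G)/C(k,2). (This expresses the bound c_{K_k} ≥ 1/(9k¹⁰).) -/
/-- `c` is a copy of `H` in `G`, i.e. a subgraph of `G` isomorphic to `H`. -/
def SimpleGraph.Subgraph.IsCopy {α β : Type*} {G : SimpleGraph α} (c : G.Subgraph)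
    (H : SimpleGraph β) : Prop :=
  Nonempty (c.coe ≃g H)


namespace KKP
open Finset

section nib
variable {β ι : Type*} [DecidableEq β]

/-- indicator of membership of a vertex in a hyperedge -/
noncomputable def ind (h : ι → Finset β) (i : ι) (v : β) : ℝ := if v ∈ h i then 1 else 0

/-- weighted degree -/
noncomputable def wdeg (I : Finset ι) (h : ι → Finset β) (w : ι → ℝ) (v : β) : ℝ :=
  ∑ i ∈ I, w i * ind h i v

/-- weighted codegree, zero on the diagonal -/
noncomputable def wcod (I : Finset ι) (h : ι → Finset β) (w : ι → ℝ) (v u : β) : ℝ :=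
  if u = v then 0 else ∑ i ∈ I, w i * ind h i v * ind h i u

lemma ind_nonneg (h : ι → Finset β) (i : ι) (v : β) : 0 ≤ ind h i v := by
  unfold ind; split_ifs <;> norm_num

lemma ind_le_one (h : ι → Finset β) (i : ι) (v : β) : ind h i v ≤ 1 := by
  unfold ind; split_ifs <;> norm_num

lemma ind_mul_self (h : ι → Finset β) (i : ι) (v : β) : ind h i v * ind h i v = ind h i v := by
  unfold ind; split_ifs <;> norm_num

lemma sum_ind (h : ι → Finset β) (i : ι) (S : Finset β) (hS : h i ⊆ S) :
    ∑ v ∈ S, ind h i v = (h i).card := by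
  unfold ind
  rw [Finset.sum_ite_mem, Finset.inter_eq_right.mpr hS]
  simp

lemma wcod_nonneg (I : Finset ι) (h : ι → Finset β) (w : ι → ℝ) (hw : ∀ i ∈ I, 0 ≤ w i)
    (u v : β) : 0 ≤ wcod I h w u v := by
  unfold wcod
  split_ifs
  · exact le_rfl
  · exact Finset.sum_nonneg fun i hi =>
      mul_nonneg (mul_nonneg (hw i hi) (ind_nonneg _ _ _)) (ind_nonneg _ _ _)

lemma wcod_comm (I : Finset ι) (h : ι → Finset β) (w : ι → ℝ)
    (u v : β) : wcod I h w u v = wcod I h w v u := by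
  unfold wcod
  by_cases huv : u = v
  · subst huv; rfl
  · rw [if_neg huv, if_neg (Ne.symm huv)]
    exact Finset.sum_congr rfl fun i _ => by ring

lemma wdeg_nonneg (I : Finset ι) (h : ι → Finset β) (w : ι → ℝ) (hw : ∀ i ∈ I, 0 ≤ w i)
    (v : β) : 0 ≤ wdeg I h w v :=
  Finset.sum_nonneg fun i hi => mul_nonneg (hw i hi) (ind_nonneg _ _ _)

lemma sum_wdeg (I : Finset ι) (h : ι → Finset β) (w : ι → ℝ) (r : ℕ) (S : Finset β)
    (hS : ∀ i ∈ I, h i ⊆ S) (hr : ∀ i ∈ I, (h i).card = r) :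
    ∑ v ∈ S, wdeg I h w v = r * ∑ i ∈ I, w i := by
  unfold wdeg
  rw [Finset.sum_comm, Finset.mul_sum]
  refine Finset.sum_congr rfl fun i hi => ?_
  rw [← Finset.mul_sum, sum_ind h i S (hS i hi), hr i hi]; ring

lemma sum_wcod (I : Finset ι) (h : ι → Finset β) (w : ι → ℝ) (r : ℕ) (S : Finset β)
    (hS : ∀ i ∈ I, h i ⊆ S) (hr : ∀ i ∈ I, (h i).card = r) (v : β) (hv : v ∈ S) :
    ∑ u ∈ S, wcod I h w v u = (r - 1) * wdeg I h w v := by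
  have h1 : ∀ u, wcod I h w v u =
      (∑ i ∈ I, w i * ind h i v * ind h i u) - (if u = v then wdeg I h w v else 0) := by
    intro u
    unfold wcod
    split_ifs with huv
    · subst huv
      unfold wdeg
      rw [eq_comm, sub_eq_zero]
      refine Finset.sum_congr rfl fun i _ => ?_
      rw [mul_assoc, ind_mul_self]
    · simp
  simp_rw [h1]
  rw [Finset.sum_sub_distrib, Finset.sum_ite_eq' S v, if_pos hv, Finset.sum_comm]
  have : ∑ i ∈ I, ∑ u ∈ S, w i * ind h i v * ind h i u = r * wdeg I h w v := by
    unfold wdeg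
    rw [Finset.mul_sum]
    refine Finset.sum_congr rfl fun i hi => ?_
    rw [← Finset.mul_sum, sum_ind h i S (hS i hi), hr i hi]; ring
  rw [this]; ring

/-- surrogate loss of degree at `v` when `f` is selected -/
noncomputable def loss (I : Finset ι) (h : ι → Finset β) (w : ι → ℝ) (S : Finset β)
    (f : ι) (v : β) : ℝ := ∑ u ∈ S, ind h f u * wcod I h w v u

lemma loss_nonneg (I : Finset ι) (h : ι → Finset β) (w : ι → ℝ) (hw : ∀ i ∈ I, 0 ≤ w i)
    (S : Finset β) (f : ι) (v : β) : 0 ≤ loss I h w S f v :=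
  Finset.sum_nonneg fun _ _ => mul_nonneg (ind_nonneg _ _ _) (wcod_nonneg _ _ _ hw _ _)

lemma loss_le (I : Finset ι) (h : ι → Finset β) (w : ι → ℝ) (r : ℕ) (S : Finset β) (α : ℝ)
    (hα : ∀ u v, wcod I h w u v ≤ α)
    (f : ι) (hS : h f ⊆ S) (hr : (h f).card = r) (v : β) : loss I h w S f v ≤ r * α := by
  unfold loss
  calc _ ≤ ∑ u ∈ S, ind h f u * α :=
        Finset.sum_le_sum fun u _ => mul_le_mul_of_nonneg_left (hα _ _) (ind_nonneg _ _ _)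
    _ = r * α := by rw [← Finset.sum_mul, sum_ind h f S hS, hr]

lemma sum_loss (I : Finset ι) (h : ι → Finset β) (w : ι → ℝ) (S : Finset β) (v : β) :
    ∑ f ∈ I, w f * loss I h w S f v = ∑ u ∈ S, wcod I h w v u * wdeg I h w u := by
  unfold loss
  simp_rw [Finset.mul_sum]
  rw [Finset.sum_comm]
  refine Finset.sum_congr rfl fun u _ => ?_
  unfold wdeg
  rw [Finset.mul_sum]
  exact Finset.sum_congr rfl fun i _ => by ring

lemma loss_eq (I : Finset ι) (h : ι → Finset β) (w : ι → ℝ) (S : Finset β)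
    (f : ι) (hS : h f ⊆ S) (v : β) (hv : v ∉ h f) :
    loss I h w S f v = ∑ i ∈ I, w i * ind h i v * ((h i ∩ h f).card : ℝ) := by
  have h1 : loss I h w S f v = ∑ u ∈ S, ∑ i ∈ I, w i * ind h i v * (ind h f u * ind h i u) := by
    unfold loss
    refine Finset.sum_congr rfl fun u _ => ?_
    unfold wcod
    split_ifs with huv
    · subst huv
      have : ind h f u = 0 := by simp [ind, hv]
      simp [this]
    · rw [Finset.mul_sum]
      exact Finset.sum_congr rfl fun i _ => by ring
  rw [h1, Finset.sum_comm]
  refine Finset.sum_congr rfl fun i _ => ?_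
  rw [← Finset.mul_sum]
  congr 1
  have : ∀ u, ind h f u * ind h i u = if u ∈ h i ∩ h f then 1 else 0 := by
    intro u; unfold ind; by_cases h1 : u ∈ h f <;> by_cases h2 : u ∈ h i <;> simp [h1, h2]
  simp_rw [this]
  rw [Finset.sum_ite_mem, Finset.inter_eq_right.mpr (Finset.inter_subset_right.trans hS)]
  simp

lemma wdeg_filter (I : Finset ι) (h : ι → Finset β) (w : ι → ℝ) 
    (f : ι) (v : β) :
    wdeg (I.filter fun i => Disjoint (h i) (h f)) h w v =
      wdeg I h w v - ∑ i ∈ I, w i * ind h i v * (if Disjoint (h i) (h f) then 0 else 1) := by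
  unfold wdeg
  rw [Finset.sum_filter, ← Finset.sum_sub_distrib]
  refine Finset.sum_congr rfl fun i _ => ?_
  split_ifs <;> ring

/-- number of ordered pairs of distinct elements -/
lemma card_bound (h : ι → Finset β) (i f : ι) :
    ((h i ∩ h f).card : ℝ) - (if Disjoint (h i) (h f) then 0 else 1) ≤
      ∑ u ∈ h f, ∑ u' ∈ h f, if u' = u then 0 else ind h i u * ind h i u' := by
  by_cases hd : Disjoint (h i) (h f)
  · rw [if_pos hd, Finset.disjoint_iff_inter_eq_empty.mp hd]
    simp only [card_empty, Nat.cast_zero, sub_zero]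
    refine Finset.sum_nonneg fun u _ => Finset.sum_nonneg fun u' _ => ?_
    split_ifs
    · exact le_rfl
    · exact mul_nonneg (ind_nonneg _ _ _) (ind_nonneg _ _ _)
  · rw [if_neg hd]
    obtain ⟨a, ha, ha'⟩ := Finset.not_disjoint_iff.mp hd
    have h0 : ∀ u ∈ h f, 0 ≤ ∑ u' ∈ h f, if u' = u then 0 else ind h i u * ind h i u' := by
      intro u _
      refine Finset.sum_nonneg fun u' _ => ?_
      split_ifs
      · exact le_rfl
      · exact mul_nonneg (ind_nonneg _ _ _) (ind_nonneg _ _ _)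
    refine le_trans ?_ (Finset.single_le_sum h0 ha')
    have h1 : ∀ u', (if u' = a then 0 else ind h i a * ind h i u') =
        ind h i u' - if u' = a then 1 else 0 := by
      intro u'
      split_ifs with hu
      · subst hu; simp [ind, ha]
      · simp [ind, ha]
    simp_rw [h1]
    rw [Finset.sum_sub_distrib, Finset.sum_ite_eq' (h f) a, if_pos ha']
    unfold ind
    rw [Finset.sum_ite_mem, Finset.inter_comm]
    simp

lemma loss_diff (I : Finset ι) (h : ι → Finset β) (w : ι → ℝ) (r : ℕ) (S : Finset β) (α : ℝ)
    (hw : ∀ i ∈ I, 0 ≤ w i) (hS : ∀ i ∈ I, h i ⊆ S) (hr : ∀ i ∈ I, (h i).card = r)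
    (hα : ∀ u v, wcod I h w u v ≤ α) (f : ι) (hf : f ∈ I) :
    ∑ v ∈ S \ h f, (loss I h w S f v - (wdeg I h w v -
      wdeg (I.filter fun i => Disjoint (h i) (h f)) h w v)) ≤ r ^ 3 * α := by
  set c : ι → ℝ := fun i => ∑ u ∈ h f, ∑ u' ∈ h f, if u' = u then 0 else ind h i u * ind h i u'
    with hc
  have c0 : ∀ i, 0 ≤ c i := fun i => 
    Finset.sum_nonneg fun u _ => Finset.sum_nonneg fun u' _ => by
      split_ifs
      · exact le_rfl
      · exact mul_nonneg (ind_nonneg _ _ _) (ind_nonneg _ _ _)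
  calc _ ≤ ∑ v ∈ S \ h f, ∑ i ∈ I, w i * ind h i v * c i := by
        refine Finset.sum_le_sum fun v hv => ?_
        rw [loss_eq I h w S f (hS f hf) v (Finset.mem_sdiff.mp hv).2, wdeg_filter, sub_sub_cancel,
          ← Finset.sum_sub_distrib]
        refine Finset.sum_le_sum fun i hi => ?_
        rw [← mul_sub]
        exact mul_le_mul_of_nonneg_left (card_bound h i f)
          (mul_nonneg (hw i hi) (ind_nonneg _ _ _))
    _ ≤ ∑ v ∈ S, ∑ i ∈ I, w i * ind h i v * c i := by
        refine Finset.sum_le_sum_of_subset_of_nonneg Finset.sdiff_subset fun v _ _ => ?_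
        exact Finset.sum_nonneg fun i hi => mul_nonneg (mul_nonneg (hw i hi) (ind_nonneg _ _ _)) (c0 i)
    _ = ∑ i ∈ I, r * (w i * c i) := by
        rw [Finset.sum_comm]
        refine Finset.sum_congr rfl fun i hi => ?_
        rw [← Finset.sum_mul, ← Finset.mul_sum, sum_ind h i S (hS i hi), hr i hi]; ring
    _ = r * ∑ u ∈ h f, ∑ u' ∈ h f, wcod I h w u u' := by
        rw [← Finset.mul_sum]
        congr 1
        simp only [hc, Finset.mul_sum]
        rw [Finset.sum_comm]
        refine Finset.sum_congr rfl fun u _ => ?_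
        rw [Finset.sum_comm]
        refine Finset.sum_congr rfl fun u' _ => ?_
        unfold wcod
        split_ifs
        · simp
        · exact Finset.sum_congr rfl fun i _ => by ring
    _ ≤ r * ∑ u ∈ h f, ∑ u' ∈ h f, α := by
        gcongr
        exact hα _ _
    _ = r ^ 3 * α := by simp [hr f hf]; ring

set_option maxHeartbeats 1000000 in
lemma step (I : Finset ι) (h : ι → Finset β) (w : ι → ℝ) (r : ℕ) (S : Finset β) (α p : ℝ)
    (hw : ∀ i ∈ I, 0 ≤ w i) (hS : ∀ i ∈ I, h i ⊆ S) (hr : ∀ i ∈ I, (h i).card = r)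
    (hα : ∀ u v, wcod I h w u v ≤ α) (hd : ∀ v, wdeg I h w v ≤ 1) 
    (hp0 : 0 ≤ p) (hp1 : p ≤ 1) (hr1 : 1 ≤ r) (hW : 0 < ∑ i ∈ I, w i) :
    ∃ f ∈ I, ∑ v ∈ S \ h f, (wdeg (I.filter fun i => Disjoint (h i) (h f)) h w v
        - p * (1 - r * (r - 1) / S.card)) ^ 2 ≤
      (∑ v ∈ S, (wdeg I h w v - p) ^ 2) * (1 + 2 * (r - 1) / ∑ i ∈ I, w i)
        + 3 * r ^ 3 * α + r ^ 4 / S.card := by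
  set W := ∑ i ∈ I, w i with hWdef
  set d := wdeg I h w with hddef
  set A := wcod I h w with hAdef
  set L := loss I h w S with hLdef
  set m : ℝ := (S.card : ℝ) with hm
  set Φ := ∑ v ∈ S, (d v - p) ^ 2 with hΦ
  set q : ℝ := p * (r * (r - 1) / m) with hq
  set X := ∑ v ∈ S, (d v - p) with hX
  have hα0 : 0 ≤ α := by
    by_contra hneg
    have hI : I.Nonempty := by
      by_contra hI
      rw [Finset.not_nonempty_iff_eq_empty] at hI
      simp [hWdef, hI] at hW
    obtain ⟨f, hf⟩ := hI
    have : (h f).Nonempty := by rw [← Finset.card_pos, hr f hf]; omega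
    obtain ⟨u, hu⟩ := this
    have := hα u u
    have := wcod_nonneg I h w hw u u
    linarith
  have hSne : S.Nonempty := by
    by_contra hne
    rw [Finset.not_nonempty_iff_eq_empty] at hne
    have := sum_wdeg I h w r S hS hr
    rw [hne] at this
    simp only [sum_empty] at this
    have hrr : (0:ℝ) < r := by exact_mod_cast hr1
    have := mul_pos hrr hW
    linarith
  have hm0 : 0 < m := by rw [hm]; exact_mod_cast hSne.card_pos
  have hr1' : (1:ℝ) ≤ r := by exact_mod_cast hr1
  have hq0 : 0 ≤ q := by
    rw [hq]; apply mul_nonneg hp0; apply div_nonneg _ hm0.le; nlinarith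
  have hd0 : ∀ v, 0 ≤ d v := wdeg_nonneg I h w hw
  have hA0 : ∀ u v, 0 ≤ A u v := wcod_nonneg I h w hw
  -- pointwise bound
  have key : ∀ f ∈ I, ∑ v ∈ S \ h f, (wdeg (I.filter fun i => Disjoint (h i) (h f)) h w v
        - p * (1 - r * (r - 1) / m)) ^ 2 ≤
      ∑ v ∈ S, ((d v - p) ^ 2 - 2 * (d v - p) * (L f v - q) + L f v ^ 2 + q ^ 2)
        + 2 * (r ^ 3 * α) := by
    intro f hf
    have h1 := loss_diff I h w r S α hw hS hr hα f hf
    have h2 : ∑ v ∈ S \ h f, ((d v - p) ^ 2 - 2 * (d v - p) * (L f v - q) + L f v ^ 2 + q ^ 2) ≤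
        ∑ v ∈ S, ((d v - p) ^ 2 - 2 * (d v - p) * (L f v - q) + L f v ^ 2 + q ^ 2) := by
      refine Finset.sum_le_sum_of_subset_of_nonneg Finset.sdiff_subset fun v _ _ => ?_
      have hl := loss_nonneg I h w hw S f v
      have := mul_nonneg hl hq0
      nlinarith [sq_nonneg ((d v - p) - (L f v - q))]
    have h3 : ∑ v ∈ S \ h f, (wdeg (I.filter fun i => Disjoint (h i) (h f)) h w v
        - p * (1 - r * (r - 1) / m)) ^ 2 ≤
        ∑ v ∈ S \ h f, (((d v - p) ^ 2 - 2 * (d v - p) * (L f v - q) + L f v ^ 2 + q ^ 2) +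
         2 * (L f v - (d v - wdeg (I.filter fun i => Disjoint (h i) (h f)) h w v))) := by
      refine Finset.sum_le_sum fun v hv => ?_
      set d' := wdeg (I.filter fun i => Disjoint (h i) (h f)) h w v with hd'
      have e1 : d v - d' = ∑ i ∈ I, w i * ind h i v * (if Disjoint (h i) (h f) then 0 else 1) := by
        rw [hd', wdeg_filter]; ring
      have e2 : 0 ≤ d v - d' := by
        rw [e1]
        refine Finset.sum_nonneg fun i hi => mul_nonneg (mul_nonneg (hw i hi) (ind_nonneg _ _ _)) ?_
        split_ifs <;> norm_num
      have e3 : d v - d' ≤ L f v := by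
        rw [e1, hLdef, loss_eq I h w S f (hS f hf) v (Finset.mem_sdiff.mp hv).2]
        refine Finset.sum_le_sum fun i hi => 
          mul_le_mul_of_nonneg_left ?_ (mul_nonneg (hw i hi) (ind_nonneg _ _ _))
        split_ifs with hdis
        · positivity
        · have : 0 < (h i ∩ h f).card := by
            rw [Finset.card_pos]
            exact Finset.not_disjoint_iff_nonempty_inter.mp hdis
          exact_mod_cast this
      have e4 : d v - p ≤ 1 := by linarith [hd v]
      have e5 : -1 ≤ d v - p := by linarith [hd0 v]
      have e6 : d' - p * (1 - r * (r - 1) / m) = (d v - p) - ((d v - d') - q) := by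
        rw [hq]; ring
      rw [e6]
      set x := d v - p
      set D := d v - d'
      set l := L f v
      have : 0 ≤ D * q := mul_nonneg e2 hq0
      nlinarith [mul_nonneg (sub_nonneg.mpr e3) (sub_nonneg.mpr e4),
        mul_nonneg (sub_nonneg.mpr e3) (by linarith : 0 ≤ x + 1),
        mul_nonneg (sub_nonneg.mpr e3) e2]
    rw [Finset.sum_add_distrib, ← Finset.mul_sum] at h3
    linarith
  -- averaging
  have hXS : X = r * W - m * p := by
    rw [hX, Finset.sum_sub_distrib, hddef, sum_wdeg I h w r S hS hr]
    simp [hm, hWdef]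
  have hX2 : X ^ 2 ≤ m * Φ := by
    rw [hX, hΦ, hm]
    exact sq_sum_le_card_mul_sum_sq
  have hQ : -∑ v ∈ S, ∑ u ∈ S, A v u * ((d v - p) * (d u - p)) ≤ (r - 1) * Φ := by
    have a1 : -∑ v ∈ S, ∑ u ∈ S, A v u * ((d v - p) * (d u - p)) ≤
        ∑ v ∈ S, ∑ u ∈ S, (A v u * (d v - p) ^ 2 / 2 + A v u * (d u - p) ^ 2 / 2) := by
      rw [← Finset.sum_neg_distrib]
      refine Finset.sum_le_sum fun v _ => ?_
      rw [← Finset.sum_neg_distrib]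
      refine Finset.sum_le_sum fun u _ => ?_
      nlinarith [mul_nonneg (hA0 v u) (sq_nonneg ((d v - p) + (d u - p)))]
    have a2 : ∑ v ∈ S, ∑ u ∈ S, A v u * (d u - p) ^ 2 / 2 = 
        ∑ v ∈ S, ∑ u ∈ S, A v u * (d v - p) ^ 2 / 2 := by
      rw [Finset.sum_comm]
      refine Finset.sum_congr rfl fun v _ => Finset.sum_congr rfl fun u _ => ?_
      rw [hAdef, wcod_comm]
    have a3 : ∑ v ∈ S, ∑ u ∈ S, A v u * (d v - p) ^ 2 / 2 ≤ (r - 1) * Φ / 2 := by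
      have : (r - 1) * Φ / 2 = ∑ v ∈ S, (r - 1) * (d v - p) ^ 2 / 2 := by
        rw [hΦ, Finset.mul_sum, Finset.sum_div]
      rw [this]
      refine Finset.sum_le_sum fun v hv => ?_
      rw [← Finset.sum_div, ← Finset.sum_mul, hAdef, sum_wcod I h w r S hS hr v hv]
      have := hd v
      gcongr
      have : (0:ℝ) ≤ r - 1 := by linarith
      nlinarith [hd v]
    simp_rw [Finset.sum_add_distrib] at a1
    linarith
  have hsumL : ∀ v, ∑ f ∈ I, w f * L f v = ∑ u ∈ S, A v u * d u := fun v => sum_loss I h w S v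
  have hlin : ∑ f ∈ I, w f * ∑ v ∈ S, (-(2 * (d v - p) * (L f v - q))) ≤ 2 * (r - 1) * Φ := by
    have b1 : ∑ f ∈ I, w f * ∑ v ∈ S, (-(2 * (d v - p) * (L f v - q))) =
        ∑ v ∈ S, (-(2 * (d v - p) * (∑ u ∈ S, A v u * d u - q * W))) := by
      simp_rw [Finset.mul_sum]
      rw [Finset.sum_comm]
      refine Finset.sum_congr rfl fun v _ => ?_
      rw [← hsumL v, hWdef, Finset.mul_sum, ← Finset.sum_sub_distrib, Finset.mul_sum,
        ← Finset.sum_neg_distrib]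
      exact Finset.sum_congr rfl fun i _ => by ring
    have b2 : ∀ v ∈ S, -(2 * (d v - p) * (∑ u ∈ S, A v u * d u - q * W)) =
        - 2 * (∑ u ∈ S, A v u * ((d v - p) * (d u - p))) - 2 * (r - 1) * p * (d v - p) ^ 2
          + (2 * q * W - 2 * (r - 1) * p ^ 2) * (d v - p) := by
      intro v hv
      have c1 : ∑ u ∈ S, A v u * d u = ∑ u ∈ S, A v u * (d u - p) + p * ((r - 1) * d v) := by
        rw [hddef, ← sum_wcod I h w r S hS hr v hv, Finset.mul_sum, ← Finset.sum_add_distrib]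
        exact Finset.sum_congr rfl fun i _ => by ring
      have c2 : ∑ u ∈ S, A v u * ((d v - p) * (d u - p)) = (d v - p) * ∑ u ∈ S, A v u * (d u - p) := by
        rw [Finset.mul_sum]
        exact Finset.sum_congr rfl fun i _ => by ring
      rw [c1, c2]; ring
    rw [b1, Finset.sum_congr rfl b2, Finset.sum_add_distrib, Finset.sum_sub_distrib,
      ← Finset.mul_sum, ← Finset.mul_sum, ← Finset.mul_sum]
    have b3 : 2 * q * W - 2 * (r - 1) * p ^ 2 = 2 * (r - 1) * p * X / m := by
      rw [hXS, hq]; field_simp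
    rw [b3]
    have b4 : 2 * (r - 1) * p * X / m * X ≤ 2 * (r - 1) * p * Φ := by
      rw [div_mul_eq_mul_div, div_le_iff₀ hm0]
      have : 0 ≤ 2 * (r - 1) * p := mul_nonneg (by linarith) hp0
      nlinarith
    linarith
  have hsq : ∑ f ∈ I, w f * ∑ v ∈ S, L f v ^ 2 ≤ W * (r ^ 3 * α) := by
    calc _ ≤ ∑ f ∈ I, w f * ∑ v ∈ S, (r * α) * L f v := by
          refine Finset.sum_le_sum fun f hf => mul_le_mul_of_nonneg_left ?_ (hw f hf)
          refine Finset.sum_le_sum fun v _ => ?_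
          rw [sq]
          exact mul_le_mul_of_nonneg_right (loss_le I h w r S α hα f (hS f hf) (hr f hf) v)
            (loss_nonneg I h w hw S f v)
      _ = (r * α) * ∑ v ∈ S, ∑ u ∈ S, A v u * d u := by
          simp_rw [← hsumL, Finset.mul_sum]
          rw [Finset.sum_comm]
          exact Finset.sum_congr rfl fun i _ => Finset.sum_congr rfl fun i _ => by ring
      _ = (r * α) * ∑ u ∈ S, (r - 1) * d u * d u := by
          rw [Finset.sum_comm]
          congr 1
          refine Finset.sum_congr rfl fun u hu => ?_
          rw [← Finset.sum_mul, hddef, ← sum_wcod I h w r S hS hr u hu]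
          congr 1
          exact Finset.sum_congr rfl fun v _ => wcod_comm _ _ _ _ _
      _ ≤ (r * α) * ∑ u ∈ S, r * d u := by
          refine mul_le_mul_of_nonneg_left (Finset.sum_le_sum fun u _ => ?_) (by positivity)
          nlinarith [hd u, hd0 u, mul_nonneg (hd0 u) (by linarith : (0:ℝ) ≤ r - 1)]
      _ = W * (r ^ 3 * α) := by
          rw [← Finset.mul_sum, hddef, sum_wdeg I h w r S hS hr]; ring
  have hqq : m * q ^ 2 ≤ r ^ 4 / m := by
    rw [le_div_iff₀ hm0]
    have : m * q ^ 2 * m = p ^ 2 * (r * (r - 1)) ^ 2 := by rw [hq]; field_simp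
    rw [this]
    have e1 : p ^ 2 ≤ 1 := pow_le_one₀ hp0 hp1
    have e2 : ((r:ℝ) * (r - 1)) ^ 2 ≤ r ^ 4 := by
      have : (r:ℝ) ^ 4 = (r * r) ^ 2 := by ring
      rw [this]
      have r0 : (0:ℝ) ≤ r - 1 := by linarith
      have r1 : (0:ℝ) ≤ r := by linarith
      exact pow_le_pow_left₀ (mul_nonneg r1 r0) (mul_le_mul_of_nonneg_left (by linarith) r1) 2
    calc _ ≤ 1 * ((r:ℝ) * (r - 1)) ^ 2 := mul_le_mul_of_nonneg_right e1 (sq_nonneg _)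
      _ ≤ _ := by rw [one_mul]; exact e2
  by_contra hcon
  push Not at hcon
  set B := Φ * (1 + 2 * (r - 1) / W) + 3 * r ^ 3 * α + r ^ 4 / m with hB
  have hfin : ∑ f ∈ I, w f * B < ∑ f ∈ I, w f * ∑ v ∈ S \ h f,
      (wdeg (I.filter fun i => Disjoint (h i) (h f)) h w v - p * (1 - r * (r - 1) / m)) ^ 2 := by
    refine Finset.sum_lt_sum (fun f hf => mul_le_mul_of_nonneg_left (hcon f hf).le (hw f hf)) ?_
    obtain ⟨f, hf, hwf⟩ := Finset.exists_lt_of_sum_lt (s := I) (f := fun _ => (0:ℝ)) (g := w)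
      (by simpa using hW)
    exact ⟨f, hf, mul_lt_mul_of_pos_left (hcon f hf) hwf⟩
  have hfin2 : ∑ f ∈ I, w f * ∑ v ∈ S \ h f,
      (wdeg (I.filter fun i => Disjoint (h i) (h f)) h w v - p * (1 - r * (r - 1) / m)) ^ 2 ≤
      ∑ f ∈ I, (w f * (Φ + m * q ^ 2 + 2 * (r ^ 3 * α)) + 
        w f * ∑ v ∈ S, (-(2 * (d v - p) * (L f v - q))) + w f * ∑ v ∈ S, L f v ^ 2) := by
    refine Finset.sum_le_sum fun f hf => ?_
    rw [← mul_add, ← mul_add]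
    refine mul_le_mul_of_nonneg_left ((key f hf).trans (le_of_eq ?_)) (hw f hf)
    have : ∑ v ∈ S, ((d v - p) ^ 2 - 2 * (d v - p) * (L f v - q) + L f v ^ 2 + q ^ 2) =
      ∑ v ∈ S, ((d v - p) ^ 2 + -(2 * (d v - p) * (L f v - q)) + L f v ^ 2 + q ^ 2) :=
      Finset.sum_congr rfl fun i _ => by ring
    rw [this, Finset.sum_add_distrib, Finset.sum_add_distrib, Finset.sum_add_distrib]
    simp only [Finset.sum_const, nsmul_eq_mul, ← hm, ← hΦ]
    ring
  rw [Finset.sum_add_distrib, Finset.sum_add_distrib, ← Finset.sum_mul] at hfin2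
  rw [← Finset.sum_mul] at hfin
  have hBW : W * B = W * Φ + 2 * (r - 1) * Φ + W * (3 * r ^ 3 * α + r ^ 4 / m) := by
    rw [hB]; field_simp; ring
  have := mul_le_mul_of_nonneg_left hqq hW.le
  rw [← hWdef] at hfin hfin2
  have e : W * (Φ + m * q ^ 2 + 2 * (r ^ 3 * α)) = W * Φ + W * (m * q ^ 2) + W * (2 * (r ^ 3 * α)) := by ring
  have e' : W * (3 * r ^ 3 * α + r ^ 4 / m) = W * (r ^ 4 / m) + W * (r ^ 3 * α) + W * (2 * (r ^ 3 * α)) := by ring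
  linarith

lemma exp_neg_two_mul_le (x : ℝ) (h0 : 0 ≤ x) (h1 : x ≤ 1 / 2) : Real.exp (-(2 * x)) ≤ 1 - x := by
  rw [Real.exp_neg]
  have h2 : 2 * x + 1 ≤ Real.exp (2 * x) := Real.add_one_le_exp _
  rw [inv_le_comm₀ (Real.exp_pos _) (by linarith)]
  refine le_trans ?_ h2
  rw [inv_le_iff_one_le_mul₀ (by linarith)]
  nlinarith

lemma wdeg_mono (I J : Finset ι) (hJ : J ⊆ I) (h : ι → Finset β) (w : ι → ℝ)
    (hw : ∀ i ∈ I, 0 ≤ w i) (v : β) : wdeg J h w v ≤ wdeg I h w v :=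
  Finset.sum_le_sum_of_subset_of_nonneg hJ fun i hi _ =>
    mul_nonneg (hw i hi) (ind_nonneg _ _ _)

lemma wcod_mono (I J : Finset ι) (hJ : J ⊆ I) (h : ι → Finset β) (w : ι → ℝ)
    (hw : ∀ i ∈ I, 0 ≤ w i) (u v : β) : wcod J h w u v ≤ wcod I h w u v := by
  unfold wcod
  split_ifs
  · exact le_rfl
  · exact Finset.sum_le_sum_of_subset_of_nonneg hJ fun i hi _ =>
      mul_nonneg (mul_nonneg (hw i hi) (ind_nonneg _ _ _)) (ind_nonneg _ _ _)

/-- invariant of the greedy process after `t` steps -/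
def Inv (I : Finset ι) (h : ι → Finset β) (w : ι → ℝ) (r : ℕ) (S : Finset β) (θ K b : ℝ)
    (t : ℕ) : Prop :=
  ∃ (M : Finset ι) (T : Finset β) (J : Finset ι) (p : ℝ), M ⊆ I ∧ J ⊆ I ∧ M.card = t ∧
    (M : Set ι).Pairwise (fun i j => Disjoint (h i) (h j)) ∧ (∀ i ∈ M, Disjoint (h i) T) ∧
    (∀ j ∈ J, h j ⊆ T) ∧ T.card + r * t = S.card ∧ Real.exp (-(2 * θ) * t) ≤ p ∧ p ≤ 1 ∧
    ∑ v ∈ T, (wdeg J h w v - p) ^ 2 ≤ t * b * Real.exp (K / S.card * t)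

set_option maxHeartbeats 2000000 in
lemma inv_step (I : Finset ι) (h : ι → Finset β) (w : ι → ℝ) (r : ℕ) (S : Finset β)
    (ε α θ K b pm N : ℝ) (hN : N = S.card) (hN0 : 0 < N) (hε : 0 < ε) 
    (hw : ∀ i ∈ I, 0 ≤ w i) (hr : ∀ i ∈ I, (h i).card = r) (hr1 : 1 ≤ r)
    (hα : ∀ u v, wcod I h w u v ≤ α) (hd : ∀ v, wdeg I h w v ≤ 1)
    (hθ : θ = r * (r - 1) / (ε * N)) (hθ2 : θ ≤ 1 / 2)
    (hpm : pm = Real.exp (-(2 * (r - 1) / ε))) (hK : K = 4 * r * (r - 1) / (ε * pm))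
    (hb : 3 * r ^ 3 * α + r ^ 4 / (ε * N) ≤ b) (hb2 : b * Real.exp K ≤ ε * pm ^ 2 / 4)
    (hb0 : 0 ≤ b)
    (t : ℕ) (ht : r * t ≤ (1 - ε) * N) (hinv : Inv I h w r S θ K b t) :
    Inv I h w r S θ K b (t + 1) := by
  classical
  obtain ⟨M, T, J, p, hMI, hJI, hMt, hMd, hMT, hJT, hTc, hp, hp1, hΦ⟩ := hinv
  have hr1' : (1:ℝ) ≤ r := by exact_mod_cast hr1
  have hr0 : (0:ℝ) ≤ r - 1 := by linarith
  have hpm0 : 0 < pm := by rw [hpm]; exact Real.exp_pos _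
  have hεN : 0 < ε * N := mul_pos hε hN0
  have hθ0 : 0 ≤ θ := by rw [hθ]; positivity
  have hK0 : 0 ≤ K := by rw [hK]; positivity
  set m : ℝ := (T.card : ℝ) with hm
  have hmN : m + r * t = N := by rw [hm, hN]; exact_mod_cast hTc
  have hmε : ε * N ≤ m := by linarith
  have hm0 : 0 < m := by linarith
  have htN : (r:ℝ) * t ≤ N := by linarith
  have ht0 : (0:ℝ) ≤ t := by positivity
  have htN' : (t:ℝ) ≤ N := by nlinarith
  have hppm : pm ≤ p := by
    refine le_trans ?_ hp
    rw [hpm]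
    apply Real.exp_le_exp.mpr
    have : θ * t ≤ (r - 1) / ε := by
      rw [hθ, div_mul_eq_mul_div, div_le_div_iff₀ hεN hε]
      nlinarith [mul_le_mul_of_nonneg_left htN (mul_nonneg hr0 hε.le)]
    have e : 2 * (r - 1) / ε = 2 * ((r - 1) / ε) := by ring
    rw [e]; linarith
  have hp0 : 0 < p := by linarith
  have hΦ2 : ∑ v ∈ T, (wdeg J h w v - p) ^ 2 ≤ m * p ^ 2 / 4 := by
    refine hΦ.trans ?_
    have e1 : K / (S.card : ℝ) * t ≤ K := by
      rw [← hN, div_mul_eq_mul_div, div_le_iff₀ hN0]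
      exact mul_le_mul_of_nonneg_left htN' hK0
    calc t * b * Real.exp (K / S.card * t) ≤ N * b * Real.exp K := by
          gcongr
      _ = N * (b * Real.exp K) := by ring
      _ ≤ N * (ε * pm ^ 2 / 4) := by gcongr
      _ = (ε * N) * pm ^ 2 / 4 := by ring
      _ ≤ m * p ^ 2 / 4 := by gcongr
  have hJr : ∀ i ∈ J, (h i).card = r := fun i hi => hr i (hJI hi)
  have hJw : ∀ i ∈ J, 0 ≤ w i := fun i hi => hw i (hJI hi)
  have hX : ∑ v ∈ T, (wdeg J h w v - p) = r * (∑ i ∈ J, w i) - m * p := by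
    rw [Finset.sum_sub_distrib, sum_wdeg J h w r T hJT hJr]
    simp [hm]
  have hX2 : (∑ v ∈ T, (wdeg J h w v - p)) ^ 2 ≤ (m * p / 2) ^ 2 := by
    have : (∑ v ∈ T, (wdeg J h w v - p)) ^ 2 ≤ m * ∑ v ∈ T, (wdeg J h w v - p) ^ 2 :=
      sq_sum_le_card_mul_sum_sq
    calc _ ≤ m * ∑ v ∈ T, (wdeg J h w v - p) ^ 2 := this
      _ ≤ m * (m * p ^ 2 / 4) := by gcongr
      _ = _ := by ring
  have hX3 := (abs_le_of_sq_le_sq' hX2 (by positivity)).1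
  rw [hX] at hX3
  have hWlow : ε * N * pm / (2 * r) ≤ ∑ i ∈ J, w i := by
    have e1 : m * p / 2 ≤ r * ∑ i ∈ J, w i := by linarith
    have e2 : ε * N * pm ≤ m * p := by gcongr
    rw [div_le_iff₀ (by positivity)]
    linarith
  have hW0 : 0 < ∑ i ∈ J, w i := lt_of_lt_of_le (by positivity) hWlow
  obtain ⟨f, hf, hstep⟩ := step J h w r T α p hJw hJT hJr
    (fun u v => (wcod_mono I J hJI h w hw u v).trans (hα u v))
    (fun v => (wdeg_mono I J hJI h w hw v).trans (hd v)) hp0.le hp1 hr1 hW0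
  have hfne : (h f).Nonempty := by rw [← Finset.card_pos, hJr f hf]; omega
  have hfM : ∀ i ∈ M, Disjoint (h i) (h f) := fun i hi => (hMT i hi).mono_right (hJT f hf)
  have hfnM : f ∉ M := by
    intro hfM'
    have := hfM f hfM'
    rw [disjoint_self] at this
    exact hfne.ne_empty this
  rw [← hm] at hstep
  refine ⟨insert f M, T \ h f, J.filter fun i => Disjoint (h i) (h f), p * (1 - r * (r - 1) / m),
    ?_, ?_, ?_, ?_, ?_, ?_, ?_, ?_, ?_, ?_⟩
  · exact Finset.insert_subset (hJI hf) hMI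
  · exact (Finset.filter_subset _ _).trans hJI
  · rw [Finset.card_insert_of_notMem hfnM, hMt]
  · rw [Finset.coe_insert]
    refine hMd.insert fun i hi _ => ⟨(hfM i hi).symm, hfM i hi⟩
  · intro i hi
    rw [Finset.mem_insert] at hi
    rcases hi with rfl | hi
    · exact Finset.disjoint_sdiff
    · exact (hMT i hi).mono_right Finset.sdiff_subset
  · intro j hj
    rw [Finset.mem_filter] at hj
    exact Finset.subset_sdiff.mpr ⟨hJT j hj.1, hj.2⟩
  · rw [Finset.card_sdiff_of_subset (hJT f hf), hJr f hf]
    have : r ≤ T.card := by rw [← hJr f hf]; exact Finset.card_le_card (hJT f hf)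
    rw [Nat.mul_succ]; omega
  · have e1 : r * (r - 1) / m ≤ θ := by rw [hθ]; gcongr
    have e2 := exp_neg_two_mul_le θ hθ0 hθ2
    have e3 : -(2 * θ) * ((t + 1 : ℕ) : ℝ) = -(2 * θ) * t + -(2 * θ) := by push_cast; ring
    rw [e3, Real.exp_add]
    exact mul_le_mul hp (by linarith) (Real.exp_pos _).le hp0.le
  · have : 0 ≤ r * (r - 1) / m := by positivity
    nlinarith
  · refine hstep.trans ?_
    have e1 : 2 * (r - 1) / ∑ i ∈ J, w i ≤ K / N := by
      have : K / N = 2 * (r - 1) / (ε * N * pm / (2 * r)) := by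
        rw [hK]; field_simp; ring
      rw [this]
      gcongr
    have e2 : (1:ℝ) + 2 * (r - 1) / ∑ i ∈ J, w i ≤ Real.exp (K / N) := by
      have := Real.add_one_le_exp (K / N)
      linarith
    have e3 : 3 * r ^ 3 * α + r ^ 4 / m ≤ b := by
      have : (r:ℝ) ^ 4 / m ≤ r ^ 4 / (ε * N) := by gcongr
      linarith
    rw [← hN] at hΦ ⊢
    have e4 : K / N * ((t + 1 : ℕ) : ℝ) = K / N * t + K / N := by push_cast; ring
    rw [e4, Real.exp_add]
    have e5 : (∑ v ∈ T, (wdeg J h w v - p) ^ 2) * (1 + 2 * (r - 1) / ∑ i ∈ J, w i) ≤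
        (t * b * Real.exp (K / N * t)) * Real.exp (K / N) := by
      apply mul_le_mul hΦ e2
      · have : (0:ℝ) ≤ 2 * (r - 1) / ∑ i ∈ J, w i := by positivity
        linarith
      · positivity
    have e6 : 1 ≤ Real.exp (K / N * t) * Real.exp (K / N) := by
      rw [← Real.exp_add]
      exact Real.one_le_exp (by positivity)
    have e7 : b ≤ b * (Real.exp (K / N * t) * Real.exp (K / N)) := le_mul_of_one_le_right hb0 e6
    rw [Nat.cast_add, Nat.cast_one]
    linarith

set_option maxHeartbeats 1000000 in
theorem nibble (r : ℕ) (hr1 : 1 ≤ r) (ε : ℝ) (hε : 0 < ε) (hε1 : ε < 1) :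
    ∃ α : ℝ, 0 < α ∧ ∃ N0 : ℕ, ∀ (β' ι' : Type) [DecidableEq β'] (I : Finset ι') (h : ι' → Finset β')
      (w : ι' → ℝ) (S : Finset β'),
      (∀ i ∈ I, 0 ≤ w i) → (∀ i ∈ I, (h i).card = r) → (∀ i ∈ I, h i ⊆ S) →
      (∀ v ∈ S, wdeg I h w v = 1) → (∀ u v, wcod I h w u v ≤ α) → N0 ≤ S.card →
      ∃ M ⊆ I, (M : Set ι').Pairwise (fun i j => Disjoint (h i) (h j)) ∧
        (1 - ε) * (S.card / r) ≤ (M.card : ℝ) := by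
  have hr1' : (1:ℝ) ≤ r := by exact_mod_cast hr1
  have hr0 : (0:ℝ) ≤ r - 1 := by linarith
  set pm : ℝ := Real.exp (-(2 * (r - 1) / ε)) with hpm
  have hpm0 : 0 < pm := Real.exp_pos _
  set K : ℝ := 4 * r * (r - 1) / (ε * pm) with hK
  set b : ℝ := ε * pm ^ 2 / 4 / Real.exp K with hb
  have hb0 : 0 < b := by positivity
  refine ⟨b / (6 * r ^ 3), by positivity, ⌈2 * r ^ 4 / (ε * b)⌉₊ + ⌈2 * r * (r - 1) / ε⌉₊ + 1, ?_⟩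
  intro β' ι' _ I h w S hw hr hS hd hα hN
  set N : ℝ := (S.card : ℝ) with hNdef
  have hN' : ((⌈2 * r ^ 4 / (ε * b)⌉₊ + ⌈2 * r * (r - 1) / ε⌉₊ + 1 : ℕ) : ℝ) ≤ N := by
    rw [hNdef]; exact_mod_cast hN
  push_cast at hN'
  have hc1 := Nat.le_ceil (2 * (r:ℝ) ^ 4 / (ε * b))
  have hc2 := Nat.le_ceil (2 * (r:ℝ) * (r - 1) / ε)
  have hx1 : 0 ≤ 2 * (r:ℝ) ^ 4 / (ε * b) := by positivity
  have hx2 : 0 ≤ 2 * (r:ℝ) * (r - 1) / ε := by positivity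
  have hN1 : 2 * (r:ℝ) ^ 4 / (ε * b) ≤ N := by linarith
  have hN2 : 2 * (r:ℝ) * (r - 1) / ε ≤ N := by linarith
  have hN0 : 0 < N := by linarith
  have hd1 : ∀ v, wdeg I h w v ≤ 1 := by
    intro v
    by_cases hv : v ∈ S
    · exact (hd v hv).le
    · have : wdeg I h w v = 0 := by
        refine Finset.sum_eq_zero fun i hi => ?_
        have : v ∉ h i := fun hvi => hv (hS i hi hvi)
        simp [ind, this]
      rw [this]; norm_num
  set θ : ℝ := r * (r - 1) / (ε * N) with hθ
  have hθ2 : θ ≤ 1 / 2 := by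
    rw [hθ, div_le_iff₀ (by positivity)]
    rw [div_le_iff₀ hε] at hN2
    linarith
  have hbb : 3 * r ^ 3 * (b / (6 * r ^ 3)) + r ^ 4 / (ε * N) ≤ b := by
    have e1 : 3 * (r:ℝ) ^ 3 * (b / (6 * r ^ 3)) = b / 2 := by field_simp; ring
    have e2 : (r:ℝ) ^ 4 / (ε * N) ≤ b / 2 := by
      rw [div_le_iff₀ (by positivity)] at hN1 ⊢
      linarith
    linarith
  have hb2 : b * Real.exp K ≤ ε * pm ^ 2 / 4 := by
    rw [hb, div_mul_cancel₀ _ (Real.exp_pos _).ne']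
  have main : ∀ t : ℕ, r * t ≤ (1 - ε) * N + r → Inv I h w r S θ K b t := by
    intro t
    induction t with
    | zero =>
      intro _
      refine ⟨∅, S, I, 1, by simp, subset_rfl, by simp, by simp, by simp, hS, by simp, by simp,
        le_rfl, ?_⟩
      have : ∑ v ∈ S, (wdeg I h w v - 1) ^ 2 = 0 :=
        Finset.sum_eq_zero fun v hv => by rw [hd v hv]; norm_num
      rw [this]; simp
    | succ t ih =>
      intro ht
      push_cast at ht
      exact inv_step I h w r S ε _ θ K b pm N hNdef hN0 hε hw hr hr1 hα hd1 hθ hθ2 hpm hK hbb hb2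
        hb0.le t (by linarith) (ih (by linarith))
  have hq0 : 0 ≤ (1 - ε) * (N / r) := mul_nonneg (by linarith) (by positivity)
  have hfl := Nat.floor_le hq0
  have hfl2 := Nat.lt_floor_add_one ((1 - ε) * (N / r))
  obtain ⟨M, T, J, p, hMI, -, hMt, hMd, -⟩ := main (⌊(1 - ε) * (N / r)⌋₊ + 1) (by
    rw [Nat.cast_add, Nat.cast_one]
    have : r * ((1 - ε) * (N / r)) = (1 - ε) * N := by field_simp
    nlinarith [mul_le_mul_of_nonneg_left hfl (by linarith : (0:ℝ) ≤ r)])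
  refine ⟨M, hMI, hMd, ?_⟩
  rw [hMt, Nat.cast_add, Nat.cast_one]
  exact hfl2.le

end nib

end KKP

namespace KKP

section frac
variable {V : Type*} [Fintype V] [DecidableEq V]

/-- cliques of size `j` containing `e` -/
def QQ (G : SimpleGraph V) [DecidableRel G.Adj] (j : ℕ) (e : Finset V) : Finset (Finset V) :=
  (G.cliqueFinset j).filter (fun K => e ⊆ K)

lemma mem_QQ (G : SimpleGraph V) [DecidableRel G.Adj] (j : ℕ) (e K : Finset V) :
    K ∈ QQ G j e ↔ (G.IsClique (K : Set V) ∧ K.card = j) ∧ e ⊆ K := by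
  unfold QQ
  rw [Finset.mem_filter, SimpleGraph.mem_cliqueFinset_iff, SimpleGraph.isNClique_iff]

lemma clique_mono (G : SimpleGraph V) {K L : Finset V} (hKL : K ⊆ L)
    (hL : G.IsClique (L : Set V)) : G.IsClique (K : Set V) :=
  hL.subset (by exact_mod_cast hKL)

lemma below_card (G : SimpleGraph V) [DecidableRel G.Adj] (j : ℕ) (e K' : Finset V)
    (he : e.card = 2) (hK' : K' ∈ QQ G (j + 1) e) :
    ((QQ G j e).filter (fun K => K ⊆ K')).card = j - 1 := by
  rw [mem_QQ] at hK'
  obtain ⟨⟨hc, hcard⟩, heK⟩ := hK'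
  have : (QQ G j e).filter (fun K => K ⊆ K') = (K' \ e).image (fun v => K'.erase v) := by
    ext K
    rw [Finset.mem_filter, mem_QQ, Finset.mem_image]
    constructor
    · rintro ⟨⟨⟨_, hK⟩, heK2⟩, hKK'⟩
      have h1 : (K' \ K).card = 1 := by
        rw [Finset.card_sdiff_of_subset hKK', hK, hcard]; omega
      obtain ⟨v, hv⟩ := Finset.card_eq_one.mp h1
      have hv' : v ∈ K' \ K := by rw [hv]; exact Finset.mem_singleton_self v
      rw [Finset.mem_sdiff] at hv'
      refine ⟨v, Finset.mem_sdiff.mpr ⟨hv'.1, fun h => hv'.2 (heK2 h)⟩, ?_⟩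
      rw [Finset.erase_eq, ← hv, Finset.sdiff_sdiff_eq_self hKK']
    · rintro ⟨v, hv, rfl⟩
      rw [Finset.mem_sdiff] at hv
      refine ⟨⟨⟨clique_mono G (Finset.erase_subset _ _) hc, ?_⟩, ?_⟩, Finset.erase_subset _ _⟩
      · rw [Finset.card_erase_of_mem hv.1, hcard]; omega
      · intro x hx
        exact Finset.mem_erase.mpr ⟨fun h => hv.2 (h ▸ hx), heK hx⟩
  rw [this, Finset.card_image_of_injOn, Finset.card_sdiff_of_subset heK, he, hcard]
  · omega
  · intro a ha b hb hab
    have ha' := (Finset.mem_sdiff.mp (Finset.mem_coe.mp ha)).1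
    by_contra hne
    have : a ∈ K'.erase b := Finset.mem_erase.mpr ⟨hne, ha'⟩
    simp only at hab
    rw [← hab] at this
    exact Finset.notMem_erase _ _ this

lemma above_card_le (G : SimpleGraph V) [DecidableRel G.Adj] (j : ℕ) (e K : Finset V)
    (hK : K ∈ QQ G j e) :
    ((QQ G (j + 1) e).filter (fun K' => K ⊆ K')).card ≤ Fintype.card V := by
  rw [mem_QQ] at hK
  have : (QQ G (j + 1) e).filter (fun K' => K ⊆ K') ⊆ Finset.univ.image (fun v => insert v K) := by
    intro K' hK'
    rw [Finset.mem_filter, mem_QQ] at hK'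
    obtain ⟨⟨⟨_, hcard⟩, _⟩, hKK'⟩ := hK'
    have h1 : (K' \ K).card = 1 := by
      rw [Finset.card_sdiff_of_subset hKK', hK.1.2, hcard]; omega
    obtain ⟨v, hv⟩ := Finset.card_eq_one.mp h1
    refine Finset.mem_image.mpr ⟨v, Finset.mem_univ _, ?_⟩
    rw [← Finset.sdiff_union_of_subset hKK', hv]
    rfl
  exact (Finset.card_le_card this).trans (Finset.card_image_le.trans (by simp))

lemma above_card_ge (G : SimpleGraph V) [DecidableRel G.Adj] (j D : ℕ) (e K : Finset V)
    (hD : ∀ v, (Finset.univ.filter (fun u => ¬ G.Adj v u)).card ≤ D)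
    (hK : K ∈ QQ G j e) :
    Fintype.card V ≤ ((QQ G (j + 1) e).filter (fun K' => K ⊆ K')).card + j * D := by
  rw [mem_QQ] at hK
  set B := K.biUnion (fun v => Finset.univ.filter (fun u => ¬ G.Adj v u)) with hB
  have hBc : B.card ≤ j * D := by
    rw [← hK.1.2]
    exact Finset.card_biUnion_le_card_mul _ _ _ fun v _ => hD v
  have hadj : ∀ v ∉ B, ∀ u ∈ K, G.Adj u v := by
    intro v hv u hu
    by_contra hn
    exact hv (Finset.mem_biUnion.mpr ⟨u, hu, by simpa using hn⟩)
  have hnot : ∀ v ∉ B, v ∉ K := fun v hv hvK => G.loopless.irrefl v (hadj v hv v hvK)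
  have : (Finset.univ \ B).image (fun v => insert v K) ⊆
      (QQ G (j + 1) e).filter (fun K' => K ⊆ K') := by
    intro K' hK'
    obtain ⟨v, hv, rfl⟩ := Finset.mem_image.mp hK'
    have hv := (Finset.mem_sdiff.mp hv).2
    rw [Finset.mem_filter, mem_QQ]
    refine ⟨⟨⟨?_, ?_⟩, hK.2.trans (Finset.subset_insert _ _)⟩, Finset.subset_insert _ _⟩
    · rw [Finset.coe_insert]
      exact hK.1.1.insert fun u hu _ => (hadj v hv u hu).symm
    · rw [Finset.card_insert_of_notMem (hnot v hv), hK.1.2]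
  have h2 := Finset.card_le_card this
  rw [Finset.card_image_of_injOn, Finset.card_sdiff_of_subset (Finset.subset_univ _),
    Finset.card_univ] at h2
  · omega
  · intro a ha b hb hab
    have ha' := hnot a (Finset.mem_sdiff.mp (Finset.mem_coe.mp ha)).2
    have : a ∈ insert b K := by
      simp only at hab
      rw [← hab]; exact Finset.mem_insert_self _ _
    rcases Finset.mem_insert.mp this with h | h
    · exact h
    · exact absurd h ha'

lemma QQ_two (G : SimpleGraph V) [DecidableRel G.Adj] (e : Finset V)
    (he : e ∈ G.cliqueFinset 2) : (QQ G 2 e).card = 1 := by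
  rw [SimpleGraph.mem_cliqueFinset_iff, SimpleGraph.isNClique_iff] at he
  rw [Finset.card_eq_one]
  refine ⟨e, ?_⟩
  ext K
  rw [mem_QQ, Finset.mem_singleton]
  constructor
  · rintro ⟨⟨_, h2⟩, h3⟩
    exact (Finset.eq_of_subset_of_card_le h3 (by omega)).symm
  · rintro rfl
    exact ⟨he, subset_rfl⟩

lemma QQ_bounds (G : SimpleGraph V) [DecidableRel G.Adj] (D k : ℕ) (γ : ℝ) (e : Finset V)
    (hD : ∀ v, (Finset.univ.filter (fun u => ¬ G.Adj v u)).card ≤ D)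
    (hγ : ((k + 1) * D : ℝ) ≤ γ * Fintype.card V) (hγ1 : γ ≤ 1)
    (he : e ∈ G.cliqueFinset 2) (j : ℕ) (hj : j ≤ k) :
    ((Fintype.card V : ℝ) * (1 - γ)) ^ j ≤ ((QQ G (j + 2) e).card : ℝ) * j.factorial ∧
    ((QQ G (j + 2) e).card : ℝ) * j.factorial ≤ (Fintype.card V : ℝ) ^ j := by
  have hec : e.card = 2 := (SimpleGraph.mem_cliqueFinset_iff.mp he).card_eq
  induction j with
  | zero => simp [QQ_two G e he]
  | succ j ih =>
    obtain ⟨ih1, ih2⟩ := ih (by omega)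
    have hdc := Finset.sum_card_bipartiteAbove_eq_sum_card_bipartiteBelow
      (s := QQ G (j + 2) e) (t := QQ G (j + 2 + 1) e) (fun K K' => K ⊆ K')
    have h1 : ∑ K' ∈ QQ G (j + 2 + 1) e,
        (Finset.bipartiteBelow (fun K K' => K ⊆ K') (QQ G (j + 2) e) K').card =
        (QQ G (j + 2 + 1) e).card * (j + 1) := by
      unfold Finset.bipartiteBelow
      rw [Finset.sum_congr rfl fun K' hK' => below_card G (j + 2) e K' hec hK']
      simp
    have h2 : ∑ K ∈ QQ G (j + 2) e,
        (Finset.bipartiteAbove (fun K K' => K ⊆ K') (QQ G (j + 2 + 1) e) K).card ≤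
        (QQ G (j + 2) e).card * Fintype.card V := by
      refine (Finset.sum_le_sum fun K hK => above_card_le G (j + 2) e K hK).trans ?_
      simp
    have h3 : (QQ G (j + 2) e).card * Fintype.card V ≤ ∑ K ∈ QQ G (j + 2) e,
        (Finset.bipartiteAbove (fun K K' => K ⊆ K') (QQ G (j + 2 + 1) e) K).card +
        (QQ G (j + 2) e).card * ((j + 2) * D) := by
      have := Finset.sum_le_sum fun K hK => above_card_ge G (j + 2) D e K hD hK
      rw [Finset.sum_add_distrib] at this
      simpa [Finset.bipartiteAbove] using this
    rw [hdc, h1] at h2 h3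
    rw [show j + 1 + 2 = j + 2 + 1 by ring, Nat.factorial_succ]
    set n : ℝ := (Fintype.card V : ℝ) with hn
    set a : ℝ := ((QQ G (j + 2) e).card : ℝ) with ha
    set a' : ℝ := ((QQ G (j + 2 + 1) e).card : ℝ) with ha'
    have h2' : a' * (j + 1) ≤ a * n := by rw [ha, ha', hn]; exact_mod_cast h2
    have h3' : a * n ≤ a' * (j + 1) + a * ((j + 2) * D) := by
      rw [ha, ha', hn]; exact_mod_cast h3
    have hjD : ((j:ℝ) + 2) * D ≤ γ * n := by
      refine le_trans ?_ hγ
      have : (j:ℝ) + 1 ≤ k := by exact_mod_cast hj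
      have hD0 : (0:ℝ) ≤ D := by positivity
      nlinarith
    have ha0 : 0 ≤ a := by positivity
    have hf0 : (0:ℝ) ≤ j.factorial := by positivity
    have hn0 : 0 ≤ n := by positivity
    have h4 : a * (n * (1 - γ)) ≤ a' * (j + 1) := by
      have := mul_le_mul_of_nonneg_left hjD ha0
      linarith
    push_cast
    constructor
    · rw [pow_succ]
      calc (n * (1 - γ)) ^ j * (n * (1 - γ)) ≤ (a * j.factorial) * (n * (1 - γ)) := by
            refine mul_le_mul_of_nonneg_right ih1 (mul_nonneg hn0 (by linarith))
        _ = a * (n * (1 - γ)) * j.factorial := by ring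
        _ ≤ a' * (j + 1) * j.factorial := by gcongr
        _ = _ := by ring
    · rw [pow_succ]
      calc a' * ((j + 1) * j.factorial) = a' * (j + 1) * j.factorial := by ring
        _ ≤ a * n * j.factorial := by gcongr
        _ = (a * j.factorial) * n := by ring
        _ ≤ _ := by gcongr

/-- gadget weight -/
noncomputable def xg (k : ℕ) (e K : Finset V) : ℝ :=
  ((k:ℝ) - 2) / k - ((k:ℝ) - 2) / (k - 1) * (∑ v ∈ e, if v ∈ K then (1:ℝ) else 0)
    + if e ⊆ K then 1 else 0

lemma cnt (k : ℕ) (Q A : Finset V) (hQ : Q.card = k + 2) (hA : A ⊆ Q) (hA4 : A.card ≤ k + 1) :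
    ∑ K ∈ Q.powersetCard k, (if A ⊆ K then (1:ℝ) else 0) =
      (k + 2 - A.card) * (k + 1 - A.card) / 2 := by
  rw [← Finset.sum_filter, Finset.sum_const, nsmul_eq_mul, mul_one]
  have : ((Q.powersetCard k).filter (fun K => A ⊆ K)).card =
      ((Q \ A).powersetCard 2).card := by
    refine Finset.card_nbij' (fun K => Q \ K) (fun P => Q \ P) ?_ ?_ ?_ ?_
    · intro K hK
      simp only [Finset.coe_filter, Set.mem_ofPred_eq, Finset.mem_powersetCard] at hK
      simp only [Finset.mem_coe, Finset.mem_powersetCard]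
      refine ⟨Finset.sdiff_subset_sdiff subset_rfl hK.2, ?_⟩
      rw [Finset.card_sdiff_of_subset hK.1.1, hQ, hK.1.2]; omega
    · intro P hP
      simp only [Finset.mem_coe, Finset.mem_powersetCard] at hP
      simp only [Finset.coe_filter, Set.mem_ofPred_eq, Finset.mem_powersetCard]
      have hPQ : P ⊆ Q := hP.1.trans Finset.sdiff_subset
      refine ⟨⟨Finset.sdiff_subset, ?_⟩, ?_⟩
      · rw [Finset.card_sdiff_of_subset hPQ, hQ, hP.2]; omega
      · refine Finset.subset_sdiff.mpr ⟨hA, ?_⟩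
        exact (Finset.subset_sdiff.mp hP.1).2.symm
    · intro K hK
      simp only [Finset.coe_filter, Set.mem_ofPred_eq, Finset.mem_powersetCard] at hK
      exact Finset.sdiff_sdiff_eq_self hK.1.1
    · intro P hP
      simp only [Finset.mem_coe, Finset.mem_powersetCard] at hP
      exact Finset.sdiff_sdiff_eq_self (hP.1.trans Finset.sdiff_subset)
  rw [this, Finset.card_powersetCard, Nat.cast_choose_two, Finset.card_sdiff_of_subset hA, hQ,
    Nat.cast_sub (by omega)]
  push_cast
  ring

lemma gadget (k : ℕ) (hk : 3 ≤ k) (Q e f : Finset V) (hQ : Q.card = k + 2) (he : e ⊆ Q)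
    (hf : f ⊆ Q) (hec : e.card = 2) (hfc : f.card = 2) :
    ∑ K ∈ Q.powersetCard k, (if f ⊆ K then xg k e K else 0) = if e = f then 1 else 0 := by
  obtain ⟨a, b, hab, rfl⟩ := Finset.card_eq_two.mp hec
  have hk' : (3:ℝ) ≤ k := by exact_mod_cast hk
  have hk0 : (k:ℝ) ≠ 0 := by linarith
  have hk1 : (k:ℝ) - 1 ≠ 0 := by linarith
  have haQ : a ∈ Q := he (by simp)
  have hbQ : b ∈ Q := he (by simp)
  have h1 : ∀ K : Finset V, (if f ⊆ K then xg k {a, b} K else 0) =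
      ((k:ℝ) - 2) / k * (if f ⊆ K then 1 else 0) - ((k:ℝ) - 2) / (k - 1) *
      (if insert a f ⊆ K then 1 else 0) - ((k:ℝ) - 2) / (k - 1) *
      (if insert b f ⊆ K then 1 else 0) + (if insert a (insert b f) ⊆ K then 1 else 0) := by
    intro K
    unfold xg
    rw [Finset.sum_pair hab]
    by_cases h1 : f ⊆ K <;> by_cases h2 : a ∈ K <;> by_cases h3 : b ∈ K <;>
      simp [h1, h2, h3, Finset.insert_subset_iff]
    ring
  simp_rw [h1]
  rw [Finset.sum_add_distrib, Finset.sum_sub_distrib, Finset.sum_sub_distrib, ← Finset.mul_sum,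
    ← Finset.mul_sum, ← Finset.mul_sum]
  have hfa : insert a f ⊆ Q := Finset.insert_subset haQ hf
  have hfb : insert b f ⊆ Q := Finset.insert_subset hbQ hf
  have hfab : insert a (insert b f) ⊆ Q := Finset.insert_subset haQ hfb
  have ca : (insert a f).card = if a ∈ f then 2 else 3 := by
    split_ifs with h
    · rw [Finset.insert_eq_of_mem h, hfc]
    · rw [Finset.card_insert_of_notMem h, hfc]
  have cb : (insert b f).card = if b ∈ f then 2 else 3 := by
    split_ifs with h
    · rw [Finset.insert_eq_of_mem h, hfc]
    · rw [Finset.card_insert_of_notMem h, hfc]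
  have cab : (insert a (insert b f)).card = (if a ∈ f then 0 else 1) + if b ∈ f then 2 else 3 := by
    split_ifs with h h' h'
    · rw [Finset.insert_eq_of_mem (by simp [h]), cb, if_pos h']
    · rw [Finset.insert_eq_of_mem (by simp [h]), cb, if_neg h']
    · rw [Finset.card_insert_of_notMem (by simp [h, hab]), cb, if_pos h']
    · rw [Finset.card_insert_of_notMem (by simp [h, hab]), cb, if_neg h']
  have hef : ({a, b} : Finset V) = f ↔ (a ∈ f ∧ b ∈ f) := by
    constructor
    · rintro rfl; simp
    · rintro ⟨h1, h2⟩
      refine Finset.eq_of_subset_of_card_le ?_ (by omega)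
      intro x hx
      simp only [Finset.mem_insert, Finset.mem_singleton] at hx
      rcases hx with rfl | rfl <;> assumption
  rw [cnt k Q f hQ hf (by omega), cnt k Q _ hQ hfa (by rw [ca]; split_ifs <;> omega),
    cnt k Q _ hQ hfb (by rw [cb]; split_ifs <;> omega),
    cnt k Q _ hQ hfab (by rw [cab]; split_ifs <;> omega), ca, cb, cab, hfc]
  simp only [hef]
  by_cases h1 : a ∈ f <;> by_cases h2 : b ∈ f <;> simp [h1, h2] <;> field_simp <;> ring

lemma xg_abs (k : ℕ) (hk : 3 ≤ k) (e K : Finset V) (he : e.card = 2) : |xg k e K| ≤ 4 := by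
  have hk' : (3:ℝ) ≤ k := by exact_mod_cast hk
  unfold xg
  have h1 : 0 ≤ ((k:ℝ) - 2) / k := div_nonneg (by linarith) (by linarith)
  have h2 : ((k:ℝ) - 2) / k ≤ 1 := by rw [div_le_one (by linarith)]; linarith
  have h3 : 0 ≤ ((k:ℝ) - 2) / (k - 1) := div_nonneg (by linarith) (by linarith)
  have h4 : ((k:ℝ) - 2) / (k - 1) ≤ 1 := by rw [div_le_one (by linarith)]; linarith
  have h5 : 0 ≤ ∑ v ∈ e, (if v ∈ K then (1:ℝ) else 0) :=
    Finset.sum_nonneg fun v _ => by split_ifs <;> norm_num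
  have h6 : ∑ v ∈ e, (if v ∈ K then (1:ℝ) else 0) ≤ 2 := by
    calc _ ≤ ∑ v ∈ e, (1:ℝ) := Finset.sum_le_sum fun v _ => by split_ifs <;> norm_num
      _ = 2 := by simp [he]
  have h7 : (0:ℝ) ≤ (if e ⊆ K then 1 else 0) := by split_ifs <;> norm_num
  have h8 : (if e ⊆ K then (1:ℝ) else 0) ≤ 1 := by split_ifs <;> norm_num
  rw [abs_le]
  constructor <;> nlinarith

lemma sup_count (A : Finset V) (a : ℕ) :
    (((Finset.univ : Finset V).powersetCard a).filter (fun L => A ⊆ L)).card ≤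
      Fintype.card V ^ (a - A.card) := by
  have : (((Finset.univ : Finset V).powersetCard a).filter (fun L => A ⊆ L)).card ≤
      ((Finset.univ : Finset V).powersetCard (a - A.card)).card := by
    refine Finset.card_le_card_of_injOn (fun L => L \ A) ?_ ?_
    · intro L hL
      simp only [Finset.coe_filter, Set.mem_ofPred_eq, Finset.mem_powersetCard] at hL
      simp only [Finset.mem_coe, Finset.mem_powersetCard]
      refine ⟨Finset.subset_univ _, ?_⟩
      rw [Finset.card_sdiff_of_subset hL.2, hL.1.2]
    · intro L hL L' hL' hLL
      simp only [Finset.coe_filter, Set.mem_ofPred_eq] at hL hL'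
      simp only at hLL
      rw [← Finset.sdiff_union_of_subset hL.2, hLL, Finset.sdiff_union_of_subset hL'.2]
  refine this.trans ?_
  rw [Finset.card_powersetCard, Finset.card_univ]
  exact Nat.choose_le_pow _ _

lemma sum_correction (G : SimpleGraph V) [DecidableRel G.Adj] (k : ℕ) (hk : 3 ≤ k)
    (g : Finset V → ℝ) (f Q : Finset V) (hf : f ∈ G.cliqueFinset 2)
    (hQ : Q ∈ G.cliqueFinset (k + 2)) :
    ∑ K ∈ QQ G k f, (if K ⊆ Q then ∑ e ∈ Q.powersetCard 2, g e * xg k e K else 0) =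
      if f ⊆ Q then g f else 0 := by
  rw [SimpleGraph.mem_cliqueFinset_iff, SimpleGraph.isNClique_iff] at hf hQ
  split_ifs with hfQ
  · have h1 : (QQ G k f).filter (fun K => K ⊆ Q) = (Q.powersetCard k).filter (fun K => f ⊆ K) := by
      ext K
      rw [Finset.mem_filter, Finset.mem_filter, mem_QQ, Finset.mem_powersetCard]
      constructor
      · rintro ⟨⟨⟨_, h2⟩, h3⟩, h4⟩
        exact ⟨⟨h4, h2⟩, h3⟩
      · rintro ⟨⟨h4, h2⟩, h3⟩
        exact ⟨⟨⟨clique_mono G h4 hQ.1, h2⟩, h3⟩, h4⟩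
    rw [← Finset.sum_filter, h1, Finset.sum_comm]
    have h2 : ∀ e ∈ Q.powersetCard 2,
        ∑ K ∈ (Q.powersetCard k).filter (fun K => f ⊆ K), g e * xg k e K =
          if e = f then g f else 0 := by
      intro e he
      rw [Finset.mem_powersetCard] at he
      rw [← Finset.mul_sum, Finset.sum_filter, gadget k hk Q e f hQ.2 he.1 hfQ he.2 hf.2]
      split_ifs with hef
      · rw [hef, mul_one]
      · rw [mul_zero]
    rw [Finset.sum_congr rfl h2, Finset.sum_ite_eq' _ f, if_pos]
    exact Finset.mem_powersetCard.mpr ⟨hfQ, hf.2⟩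
  · refine Finset.sum_eq_zero fun K hK => if_neg fun hKQ => hfQ ?_
    exact ((mem_QQ _ _ _ _).mp hK).2.trans hKQ

lemma frac_decomp (G : SimpleGraph V) [DecidableRel G.Adj] (D k l : ℕ) (γ : ℝ) (hk : 3 ≤ k)
    (hkl : k = l + 2)
    (hD : ∀ v, (Finset.univ.filter (fun u => ¬ G.Adj v u)).card ≤ D)
    (hγ : ((k + 1) * D : ℝ) ≤ γ * Fintype.card V) (hγ0 : 0 ≤ γ) (hγ1 : 100 * (k:ℝ) ^ 5 * γ ≤ 1)
    (hn : 0 < Fintype.card V) :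
    ∃ w : Finset V → ℝ, (∀ K ∈ G.cliqueFinset k, 0 ≤ w K ∧
      w K ≤ 2 * (l.factorial / (Fintype.card V : ℝ) ^ l)) ∧
      ∀ f ∈ G.cliqueFinset 2, ∑ K ∈ QQ G k f, w K = 1 := by
  set n : ℝ := (Fintype.card V : ℝ) with hndef
  have hn0 : 0 < n := by rw [hndef]; exact_mod_cast hn
  have hk' : (3:ℝ) ≤ k := by exact_mod_cast hk
  have hkl' : (k:ℝ) = l + 2 := by rw [hkl]; push_cast; ring
  have hk5 : (k:ℝ) ≤ k ^ 5 := le_self_pow₀ (by linarith) (by norm_num)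
  have hkγ : k * γ ≤ 1 / 2 := by
    have := mul_le_mul_of_nonneg_right hk5 hγ0
    linarith
  have hγ1' : γ ≤ 1 := by nlinarith
  set c : ℝ := l.factorial / n ^ l with hc
  have hc0 : 0 < c := by positivity
  have bern : ∀ j : ℕ, j ≤ k → 1 - k * γ ≤ (1 - γ) ^ j := by
    intro j hj
    have h1 := one_add_mul_le_pow (a := -γ) (by linarith) j
    have h2 : (j:ℝ) ≤ k := by exact_mod_cast hj
    have h3 := mul_le_mul_of_nonneg_right h2 hγ0
    rw [← sub_eq_add_neg] at h1
    linarith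
  set g : Finset V → ℝ := fun e => (1 - c * (QQ G k e).card) / (QQ G (k + 2) e).card with hg
  set g0 : ℝ := k * γ * (2 * k.factorial / n ^ k) with hg0
  have hNpos : ∀ e ∈ G.cliqueFinset 2, n ^ k / (2 * k.factorial) ≤ ((QQ G (k + 2) e).card : ℝ) := by
    intro e he
    have h1 := (QQ_bounds G D k γ e hD hγ hγ1' he k le_rfl).1
    rw [mul_pow] at h1
    have h2 := bern k le_rfl
    have h3 : n ^ k * (1 / 2) ≤ n ^ k * (1 - γ) ^ k := by
      gcongr
      linarith
    rw [div_le_iff₀ (by positivity)]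
    linarith
  have hNpos' : ∀ e ∈ G.cliqueFinset 2, 0 < ((QQ G (k + 2) e).card : ℝ) := fun e he =>
    lt_of_lt_of_le (by positivity) (hNpos e he)
  have hdef : ∀ e ∈ G.cliqueFinset 2, 0 ≤ 1 - c * (QQ G k e).card ∧
      1 - c * (QQ G k e).card ≤ k * γ := by
    intro e he
    obtain ⟨h1, h2⟩ := QQ_bounds G D k γ e hD hγ hγ1' he l (by omega)
    rw [← hkl] at h1 h2
    have h3 : c * (QQ G k e).card = ((QQ G k e).card * l.factorial) / n ^ l := by
      rw [hc]; ring
    constructor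
    · rw [h3, sub_nonneg, div_le_one (by positivity)]
      exact h2
    · have h4 : (1 - γ) ^ l ≤ c * (QQ G k e).card := by
        rw [h3, le_div_iff₀ (by positivity)]
        rw [mul_pow] at h1
        linarith
      have := bern l (by omega)
      linarith
  have hgb : ∀ e ∈ G.cliqueFinset 2, |g e| ≤ g0 := by
    intro e he
    obtain ⟨h1, h2⟩ := hdef e he
    have h3 := hNpos e he
    rw [abs_of_nonneg (div_nonneg h1 (hNpos' e he).le)]
    have : g0 = k * γ / (n ^ k / (2 * k.factorial)) := by rw [hg0]; field_simp
    rw [this]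
    gcongr
  have hg00 : 0 ≤ g0 := by positivity
  set cor : Finset V → ℝ := fun K => ∑ Q ∈ G.cliqueFinset (k + 2),
    if K ⊆ Q then ∑ e ∈ Q.powersetCard 2, g e * xg k e K else 0 with hcor
  have hcorb : ∀ K ∈ G.cliqueFinset k, |cor K| ≤ c := by
    intro K hK
    have hKc : K.card = k := (SimpleGraph.mem_cliqueFinset_iff.mp hK).card_eq
    have hin : ∀ Q ∈ G.cliqueFinset (k + 2), |∑ e ∈ Q.powersetCard 2, g e * xg k e K| ≤
        (k + 2) ^ 2 * (4 * g0) := by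
      intro Q hQ
      rw [SimpleGraph.mem_cliqueFinset_iff, SimpleGraph.isNClique_iff] at hQ
      calc _ ≤ ∑ e ∈ Q.powersetCard 2, |g e * xg k e K| := Finset.abs_sum_le_sum_abs _ _
        _ ≤ ∑ e ∈ Q.powersetCard 2, 4 * g0 := by
            refine Finset.sum_le_sum fun e he => ?_
            rw [Finset.mem_powersetCard] at he
            rw [abs_mul, mul_comm]
            refine mul_le_mul (xg_abs k hk e K he.2) (hgb e ?_) (abs_nonneg _) (by norm_num)
            rw [SimpleGraph.mem_cliqueFinset_iff, SimpleGraph.isNClique_iff]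
            exact ⟨clique_mono G he.1 hQ.1, he.2⟩
        _ = ((k + 2).choose 2 : ℕ) * (4 * g0) := by
            rw [Finset.sum_const, Finset.card_powersetCard, hQ.2, nsmul_eq_mul]
        _ ≤ (k + 2) ^ 2 * (4 * g0) := by
            gcongr
            exact_mod_cast Nat.choose_le_pow (k + 2) 2
    have hcount : (((G.cliqueFinset (k + 2)).filter (fun Q => K ⊆ Q)).card : ℝ) ≤ n ^ 2 := by
      have h1 : (G.cliqueFinset (k + 2)).filter (fun Q => K ⊆ Q) ⊆
          ((Finset.univ : Finset V).powersetCard (k + 2)).filter (fun L => K ⊆ L) := by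
        refine Finset.filter_subset_filter _ fun Q hQ => ?_
        rw [Finset.mem_powersetCard]
        exact ⟨Finset.subset_univ _, (SimpleGraph.mem_cliqueFinset_iff.mp hQ).card_eq⟩
      have h2 := (Finset.card_le_card h1).trans (sup_count K (k + 2))
      rw [hKc, Nat.add_sub_cancel_left] at h2
      rw [hndef]; exact_mod_cast h2
    calc |cor K| ≤ ∑ Q ∈ (G.cliqueFinset (k + 2)).filter (fun Q => K ⊆ Q),
          |∑ e ∈ Q.powersetCard 2, g e * xg k e K| := by
          simp only [hcor]
          rw [← Finset.sum_filter]
          exact Finset.abs_sum_le_sum_abs _ _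
      _ ≤ ∑ Q ∈ (G.cliqueFinset (k + 2)).filter (fun Q => K ⊆ Q), (k + 2) ^ 2 * (4 * g0) :=
          Finset.sum_le_sum fun Q hQ => hin Q (Finset.mem_filter.mp hQ).1
      _ = ((G.cliqueFinset (k + 2)).filter (fun Q => K ⊆ Q)).card * ((k + 2) ^ 2 * (4 * g0)) := by
          rw [Finset.sum_const, nsmul_eq_mul]
      _ ≤ n ^ 2 * ((k + 2) ^ 2 * (4 * g0)) := by gcongr
      _ = (8 * (k + 2) ^ 2 * k * (k * (k - 1)) * γ) * c := by
          have e1 : (k.factorial : ℝ) = k * (k - 1) * l.factorial := by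
            rw [hkl']
            rw [hkl, Nat.factorial_succ, Nat.factorial_succ]
            push_cast; ring
          have e2 : n ^ k = n ^ 2 * n ^ l := by rw [hkl, pow_add]; ring
          rw [hg0, hc, e1, e2]
          field_simp
          ring
      _ ≤ 1 * c := by
          refine mul_le_mul_of_nonneg_right (le_trans ?_ hγ1) hc0.le
          refine mul_le_mul_of_nonneg_right ?_ hγ0
          have e1 : ((k:ℝ) + 2) ^ 2 ≤ 3 * k ^ 2 := by nlinarith
          have e2 : (k:ℝ) * (k - 1) ≤ k * k := by nlinarith
          have e3 : 0 ≤ (k:ℝ) * (k - 1) := by nlinarith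
          calc 8 * ((k:ℝ) + 2) ^ 2 * k * (k * (k - 1)) ≤ 8 * (3 * (k:ℝ) ^ 2) * k * ((k:ℝ) * k) := by gcongr
            _ = 24 * (k:ℝ) ^ 5 := by ring
            _ ≤ 100 * (k:ℝ) ^ 5 := by gcongr; norm_num
      _ = c := one_mul c
  refine ⟨fun K => c + cor K, ?_, ?_⟩
  · intro K hK
    have := abs_le.mp (hcorb K hK)
    constructor <;> linarith
  · intro f hf
    rw [Finset.sum_add_distrib]
    simp only [hcor]
    rw [Finset.sum_comm, Finset.sum_congr rfl fun Q hQ => sum_correction G k hk g f Q hf hQ,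
      ← Finset.sum_filter, Finset.sum_const, Finset.sum_const, nsmul_eq_mul, nsmul_eq_mul]
    change (QQ G k f).card * c + (QQ G (k + 2) f).card * g f = 1
    simp only [hg]
    rw [mul_div_cancel₀ _ (hNpos' f hf).ne']
    ring

end frac

section final
variable {V : Type*} [Fintype V] [DecidableEq V]

lemma wdeg_clique (G : SimpleGraph V) [DecidableRel G.Adj] (k : ℕ) (w : Finset V → ℝ)
    (f : Finset V) (hf : f.card = 2) :
    wdeg (G.cliqueFinset k) (fun K => K.powersetCard 2) w f = ∑ K ∈ QQ G k f, w K := by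
  unfold wdeg QQ ind
  rw [Finset.sum_filter]
  refine Finset.sum_congr rfl fun K _ => ?_
  simp [Finset.mem_powersetCard, hf]

lemma wcod_clique (G : SimpleGraph V) [DecidableRel G.Adj] (k l : ℕ) (hl : k = l + 3)
    (w : Finset V → ℝ) (B : ℝ) (hB : 0 ≤ B)
    (hw : ∀ K ∈ G.cliqueFinset k, w K ≤ B) (u v : Finset V) :
    wcod (G.cliqueFinset k) (fun K => K.powersetCard 2) w u v ≤
      B * (Fintype.card V : ℝ) ^ l := by
  have hpos : 0 ≤ B * (Fintype.card V : ℝ) ^ l := by positivity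
  unfold wcod
  split_ifs with huv
  · exact hpos
  by_cases hu : u.card = 2
  swap
  · refine le_trans (le_of_eq (Finset.sum_eq_zero fun K _ => ?_)) hpos
    simp [ind, Finset.mem_powersetCard, hu]
  by_cases hv : v.card = 2
  swap
  · refine le_trans (le_of_eq (Finset.sum_eq_zero fun K _ => ?_)) hpos
    simp [ind, Finset.mem_powersetCard, hv]
  have h3 : 3 ≤ (u ∪ v).card := by
    by_contra hlt
    have h1 : u = u ∪ v := Finset.eq_of_subset_of_card_le Finset.subset_union_left (by omega)
    have h2 : v = u ∪ v := Finset.eq_of_subset_of_card_le Finset.subset_union_right (by omega)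
    exact huv (h2.trans h1.symm)
  obtain ⟨A, hA, hA3⟩ := Finset.exists_subset_card_eq h3
  have hcount := sup_count A k
  rw [hA3, hl, Nat.add_sub_cancel] at hcount
  calc _ ≤ ∑ K ∈ G.cliqueFinset k, (if A ⊆ K then B else 0) := by
        refine Finset.sum_le_sum fun K hK => ?_
        have : w K * ind (fun K => K.powersetCard 2) K u * ind (fun K => K.powersetCard 2) K v =
            if u ⊆ K ∧ v ⊆ K then w K else 0 := by
          by_cases h1 : u ⊆ K <;> by_cases h2 : v ⊆ K <;>
            simp [ind, Finset.mem_powersetCard, hu, hv, h1, h2]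
        rw [this]
        by_cases h1 : u ⊆ K ∧ v ⊆ K
        · rw [if_pos h1, if_pos (hA.trans (Finset.union_subset h1.1 h1.2))]
          exact hw K hK
        · rw [if_neg h1]
          split_ifs
          · exact hB
          · exact le_rfl
    _ = ((G.cliqueFinset k).filter (fun K => A ⊆ K)).card * B := by
        rw [← Finset.sum_filter, Finset.sum_const, nsmul_eq_mul]
    _ ≤ (Fintype.card V : ℝ) ^ l * B := by
        refine mul_le_mul_of_nonneg_right ?_ hB
        have h1 : (G.cliqueFinset k).filter (fun Q => A ⊆ Q) ⊆
            ((Finset.univ : Finset V).powersetCard (l + 3)).filter (fun L => A ⊆ L) := by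
          refine Finset.filter_subset_filter _ fun Q hQ => ?_
          rw [Finset.mem_powersetCard, ← hl]
          exact ⟨Finset.subset_univ _, (SimpleGraph.mem_cliqueFinset_iff.mp hQ).card_eq⟩
        exact_mod_cast (Finset.card_le_card h1).trans hcount
    _ = _ := mul_comm _ _

lemma mem_clique_two (G : SimpleGraph V) [DecidableRel G.Adj] (a b : V) (hab : G.Adj a b) :
    ({a, b} : Finset V) ∈ G.cliqueFinset 2 := by
  rw [SimpleGraph.mem_cliqueFinset_iff, SimpleGraph.isNClique_iff]
  refine ⟨?_, Finset.card_pair hab.ne⟩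
  rw [Finset.coe_pair, SimpleGraph.isClique_pair]
  exact fun _ => hab

lemma edge_ncard (G : SimpleGraph V) [DecidableRel G.Adj] :
    G.edgeSet.ncard = (G.cliqueFinset 2).card := by
  rw [← Set.ncard_coe_finset]
  refine Set.ncard_congr (fun e _ => e.toFinset) ?_ ?_ ?_
  · intro e he
    induction e with | _ a b =>
    rw [SimpleGraph.mem_edgeSet] at he
    rw [Sym2.toFinset_mk_eq]
    exact mem_clique_two G a b he
  · intro e e' _ _ h
    ext x
    rw [← Sym2.mem_toFinset, h, Sym2.mem_toFinset]
  · intro s hs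
    rw [Finset.mem_coe, SimpleGraph.mem_cliqueFinset_iff, SimpleGraph.isNClique_iff] at hs
    obtain ⟨a, b, hab, rfl⟩ := Finset.card_eq_two.mp hs.2
    refine ⟨s(a, b), ?_, Sym2.toFinset_mk_eq⟩
    rw [SimpleGraph.mem_edgeSet]
    exact hs.1 (by simp) (by simp) hab

lemma copy_of_clique (G : SimpleGraph V) (k : ℕ) (K : Finset V) (hK : G.IsClique (K : Set V))
    (hKc : K.card = k) :
    Nonempty (((⊤ : G.Subgraph).induce (K : Set V)).coe ≃g (⊤ : SimpleGraph (Fin k))) := by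
  have e : K ≃ Fin k := Fintype.equivFinOfCardEq (by simpa using hKc)
  refine ⟨⟨e, ?_⟩⟩
  rintro ⟨a, ha⟩ ⟨b, hb⟩
  simp only [SimpleGraph.top_adj, ne_eq,
    SimpleGraph.Subgraph.coe_adj, SimpleGraph.Subgraph.induce_adj, SimpleGraph.Subgraph.top_adj]
  constructor
  · intro h
    refine ⟨ha, hb, hK ha hb fun hab => h ?_⟩
    subst hab; rfl
  · rintro ⟨_, _, h⟩ h'
    have : a = b := congrArg Subtype.val (e.injective h')
    exact h.ne this

end final
end KKP

/-- For every integer `k ≥ 3` and every `ε > 0` there exists `n₀` such that every graph `G` on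
`n ≥ n₀` vertices with minimum degree at least `(1 - 1/(9k^10))·(n-1)` has a `K_k`-packing
(a set of pairwise edge-disjoint copies of `K_k`) of size at least `(1-ε)·e(G)/C(k,2)`. -/
theorem kk_packing_of_min_degree (k : ℕ) (hk : 3 ≤ k) (ε : ℝ) (hε : 0 < ε) :
    ∃ n₀ : ℕ, ∀ n : ℕ, n₀ ≤ n → ∀ G : SimpleGraph (Fin n),
      (∀ v, ((1 : ℝ) - 1 / (9 * (k : ℝ) ^ 10)) * ((n : ℝ) - 1) ≤ ((G.neighborSet v).ncard : ℝ)) →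
      ∃ P : Finset G.Subgraph,
        (∀ c ∈ P, c.IsCopy (⊤ : SimpleGraph (Fin k))) ∧
        (P : Set G.Subgraph).Pairwise (fun c d => Disjoint c.edgeSet d.edgeSet) ∧
        (1 - ε) * ((G.edgeSet.ncard : ℝ) / ((k : ℝ) * ((k : ℝ) - 1) / 2)) ≤ (P.card : ℝ) := by
  classical
  obtain ⟨l, hl⟩ : ∃ l, k = l + 3 := ⟨k - 3, by omega⟩
  have hk' : (3:ℝ) ≤ k := by exact_mod_cast hk
  set ε' : ℝ := min ε (1 / 2) with hε'
  have hε'0 : 0 < ε' := by rw [hε']; positivity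
  have hε'1 : ε' < 1 := lt_of_le_of_lt (min_le_right _ _) (by norm_num)
  have hε'ε : ε' ≤ ε := min_le_left _ _
  have hr1 : 1 ≤ k.choose 2 := Nat.choose_pos (by omega)
  have hnib : ∃ α : ℝ, 0 < α ∧ ∃ N0 : ℕ, ∀ (n : ℕ) (I : Finset (Finset (Fin n)))
      (h : Finset (Fin n) → Finset (Finset (Fin n))) (w : Finset (Fin n) → ℝ)
      (S : Finset (Finset (Fin n))),
      (∀ i ∈ I, 0 ≤ w i) → (∀ i ∈ I, (h i).card = k.choose 2) → (∀ i ∈ I, h i ⊆ S) →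
      (∀ v ∈ S, KKP.wdeg I h w v = 1) → (∀ u v, KKP.wcod I h w u v ≤ α) → N0 ≤ S.card →
      ∃ M ⊆ I, (M : Set (Finset (Fin n))).Pairwise (fun i j => Disjoint (h i) (h j)) ∧
        (1 - ε') * (S.card / (k.choose 2 : ℕ)) ≤ (M.card : ℝ) := by
    obtain ⟨α, hα, N0, H⟩ := KKP.nibble (k.choose 2) hr1 ε' hε'0 hε'1
    exact ⟨α, hα, N0, fun n => H (Finset (Fin n)) (Finset (Fin n))⟩
  obtain ⟨α, hα, N0, hnib⟩ := hnib
  set η : ℝ := 1 / (9 * (k:ℝ) ^ 10) with hη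
  have hη0 : 0 < η := by positivity
  set γ : ℝ := 2 * (k + 1) * η with hγ
  have hγ0 : 0 ≤ γ := by positivity
  have hk4 : (81:ℝ) ≤ k ^ 4 := by
    calc (81:ℝ) = 3 ^ 4 := by norm_num
      _ ≤ k ^ 4 := by gcongr
  have hγ1 : 100 * (k:ℝ) ^ 5 * γ ≤ 1 := by
    rw [hγ, hη]
    have : 100 * (k:ℝ) ^ 5 * (2 * (k + 1) * (1 / (9 * (k:ℝ) ^ 10))) =
        200 * (k ^ 5 * (k + 1)) / (9 * (k:ℝ) ^ 10) := by ring
    rw [this, div_le_one (by positivity)]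
    calc 200 * ((k:ℝ) ^ 5 * (k + 1)) ≤ 200 * ((k:ℝ) ^ 5 * (2 * k)) := by gcongr; linarith
      _ = 400 * (k:ℝ) ^ 6 := by ring
      _ ≤ (9 * (k:ℝ) ^ 4) * k ^ 6 := by gcongr; linarith
      _ = _ := by ring
  have hηhalf : η ≤ 1 / 2 := by
    have h5 : (1:ℝ) ≤ k ^ 5 := one_le_pow₀ (by linarith)
    have : η ≤ γ := by rw [hγ]; nlinarith
    nlinarith
  refine ⟨⌈1 / η⌉₊ + ⌈2 * ((l + 1).factorial : ℝ) / α⌉₊ + 2 * N0 + 1, ?_⟩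
  intro n hn G hdeg
  have hn' : ((⌈1 / η⌉₊ + ⌈2 * ((l + 1).factorial : ℝ) / α⌉₊ + 2 * N0 + 1 : ℕ) : ℝ) ≤ n := by
    exact_mod_cast hn
  rw [Nat.cast_add, Nat.cast_add, Nat.cast_add, Nat.cast_mul, Nat.cast_one, Nat.cast_ofNat] at hn'
  have hc1 := Nat.le_ceil (1 / η)
  have hc2 := Nat.le_ceil (2 * ((l + 1).factorial : ℝ) / α)
  have hx1 : 0 ≤ 1 / η := by positivity
  have hx2 : 0 ≤ 2 * ((l + 1).factorial : ℝ) / α := by positivity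
  have hN00 : (0:ℝ) ≤ N0 := by positivity
  have hn1 : 1 / η ≤ n := by linarith
  have hn2 : 2 * ((l + 1).factorial : ℝ) / α ≤ n := by linarith
  have hn3 : 2 * (N0:ℝ) + 1 ≤ n := by linarith
  have hnpos : (0:ℝ) < n := by linarith
  have hnpos' : 0 < n := by exact_mod_cast hnpos
  have hnb : ∀ v, (G.neighborSet v).ncard = (Finset.univ.filter (fun u => G.Adj v u)).card := by
    intro v
    rw [← Set.ncard_coe_finset]
    congr 1
    ext u
    simp
  set D : ℕ := ⌊1 + η * ((n:ℝ) - 1)⌋₊ with hDdef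
  have hD : ∀ v, (Finset.univ.filter (fun u => ¬ G.Adj v u)).card ≤ D := by
    intro v
    apply Nat.le_floor
    have h1 := Finset.card_filter_add_card_filter_not (s := (Finset.univ : Finset (Fin n)))
      (fun u => G.Adj v u)
    have h2 := hdeg v
    rw [hnb v] at h2
    rw [Finset.card_univ, Fintype.card_fin] at h1
    have h1' : ((Finset.univ.filter (fun u => G.Adj v u)).card : ℝ) +
      (Finset.univ.filter (fun u => ¬ G.Adj v u)).card = n := by exact_mod_cast h1
    linarith
  have hηn : 1 ≤ η * n := by rwa [div_le_iff₀' hη0] at hn1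
  have hDγ : ((k + 1) * D : ℝ) ≤ γ * Fintype.card (Fin n) := by
    rw [Fintype.card_fin]
    have h0 : 0 ≤ 1 + η * ((n:ℝ) - 1) := by linarith
    have h1 : (D:ℝ) ≤ 1 + η * ((n:ℝ) - 1) := Nat.floor_le h0
    have h2 : (D:ℝ) ≤ 2 * (η * n) := by linarith
    calc ((k + 1) * D : ℝ) ≤ (k + 1) * (2 * (η * n)) := by gcongr
      _ = γ * n := by rw [hγ]; ring
  obtain ⟨w, hw1, hw2⟩ := KKP.frac_decomp G D k (l + 1) γ hk hl hD hDγ hγ0 hγ1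
    (by rw [Fintype.card_fin]; exact hnpos')
  have hS : ∀ K ∈ G.cliqueFinset k, K.powersetCard 2 ⊆ G.cliqueFinset 2 := by
    intro K hK f hf
    rw [SimpleGraph.mem_cliqueFinset_iff, SimpleGraph.isNClique_iff] at hK ⊢
    rw [Finset.mem_powersetCard] at hf
    exact ⟨KKP.clique_mono G hf.1 hK.1, hf.2⟩
  have hcod : ∀ u v, KKP.wcod (G.cliqueFinset k) (fun K => K.powersetCard 2) w u v ≤ α := by
    intro u v
    have h1 := KKP.wcod_clique G k l hl w _ (by positivity) (fun K hK => (hw1 K hK).2) u v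
    refine h1.trans ?_
    rw [Fintype.card_fin]
    have : 2 * (((l + 1).factorial : ℝ) / (n:ℝ) ^ (l + 1)) * (n:ℝ) ^ l =
        2 * ((l + 1).factorial : ℝ) / n := by
      rw [pow_succ]; field_simp
    rw [this, div_le_iff₀ hnpos]
    rwa [div_le_iff₀' hα] at hn2
  have hScard : N0 ≤ (G.cliqueFinset 2).card := by
    let v : Fin n := ⟨0, hnpos'⟩
    have h1 : (Finset.univ.filter (fun u => G.Adj v u)).card ≤ (G.cliqueFinset 2).card := by
      refine Finset.card_le_card_of_injOn (fun u => {v, u}) ?_ ?_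
      · intro u hu
        have hu' : G.Adj v u := by simpa using hu
        exact KKP.mem_clique_two G v u hu'
      · intro a ha b hb hab
        have ha' : G.Adj v a := by simpa using ha
        have : a ∈ ({v, b} : Finset (Fin n)) := by
          simp only at hab
          rw [← hab]; simp
        rw [Finset.mem_insert, Finset.mem_singleton] at this
        rcases this with h | h
        · exact absurd h ha'.ne'
        · exact h
    have h2 := hdeg v
    rw [hnb v] at h2
    have h3 : (N0:ℝ) ≤ (1 - η) * ((n:ℝ) - 1) := by nlinarith
    have h4 : (N0:ℝ) ≤ ((Finset.univ.filter (fun u => G.Adj v u)).card : ℝ) := h3.trans h2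
    exact (by exact_mod_cast h4 : N0 ≤ _).trans h1
  obtain ⟨M, hMI, hMd, hMc⟩ := hnib n (G.cliqueFinset k) (fun K => K.powersetCard 2) w
    (G.cliqueFinset 2) (fun K hK => (hw1 K hK).1)
    (fun K hK => by
      rw [Finset.card_powersetCard, (SimpleGraph.mem_cliqueFinset_iff.mp hK).card_eq])
    hS
    (fun f hf => by
      rw [KKP.wdeg_clique G k w f (SimpleGraph.mem_cliqueFinset_iff.mp hf).card_eq, hw2 f hf])
    hcod hScard
  refine ⟨M.image (fun K : Finset (Fin n) => (⊤ : G.Subgraph).induce (K : Set (Fin n))), ?_, ?_, ?_⟩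
  · intro c hc
    obtain ⟨K, hK, rfl⟩ := Finset.mem_image.mp hc
    have hKc := hMI hK
    rw [SimpleGraph.mem_cliqueFinset_iff, SimpleGraph.isNClique_iff] at hKc
    exact KKP.copy_of_clique G k K hKc.1 hKc.2
  · intro c hc d hd hcd
    rw [Finset.mem_coe, Finset.mem_image] at hc hd
    obtain ⟨K, hK, rfl⟩ := hc
    obtain ⟨L, hL, rfl⟩ := hd
    have hKL : K ≠ L := fun h => hcd (by rw [h])
    have hdis := hMd hK hL hKL
    rw [Set.disjoint_left]
    intro e he he'
    induction e with | _ a b =>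
    rw [SimpleGraph.Subgraph.mem_edgeSet, SimpleGraph.Subgraph.induce_adj] at he he'
    obtain ⟨ha, hb, hab⟩ := he
    obtain ⟨ha', hb', -⟩ := he'
    have hne : a ≠ b := hab.adj_sub.ne
    have hdis' := Finset.disjoint_left.mp hdis
    refine @hdis' ({a, b} : Finset (Fin n)) ?_ ?_
    · rw [Finset.mem_powersetCard]
      refine ⟨?_, Finset.card_pair hne⟩
      rw [Finset.insert_subset_iff, Finset.singleton_subset_iff]
      exact ⟨ha, hb⟩
    · rw [Finset.mem_powersetCard]
      refine ⟨?_, Finset.card_pair hne⟩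
      rw [Finset.insert_subset_iff, Finset.singleton_subset_iff]
      exact ⟨ha', hb'⟩
  · rw [Finset.card_image_of_injective]
    · rw [KKP.edge_ncard G]
      rw [Nat.cast_choose_two] at hMc
      refine le_trans ?_ hMc
      have : (0:ℝ) ≤ ((G.cliqueFinset 2).card : ℝ) / ((k : ℝ) * ((k : ℝ) - 1) / 2) := by
        apply div_nonneg (by positivity)
        nlinarith
      exact mul_le_mul_of_nonneg_right (by linarith) this
    · intro K L hKL
      have := congrArg SimpleGraph.Subgraph.verts hKL
      simpa using this
end

section
/- For every integer k ≥ 3, every graph H with k vertices and at least one edge, and every ε > 0, there exists n₀ such that every graph G on n ≥ n₀ vertices with minimum degree at least (1 - 1/(9k¹⁰))·(n-1) satisfies ν_H(G) ≥ (1-ε)·e(G)/e(H). -/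
section Helpers

open Finset

set_option maxHeartbeats 2000000 in
/-- Averaged potential inequality for one step of the deterministic nibble. -/
lemma nibble_step {α ι : Type*} [DecidableEq α] (I : Finset ι) (E : ι → Finset α) (w : ι → ℝ)
    (S : Finset α) (r : ℕ) (hr : 1 ≤ r) (hw : ∀ i, 0 ≤ w i) (hES : ∀ i ∈ I, E i ⊆ S)
    (hcard : ∀ i ∈ I, (E i).card = r) (δ D q : ℝ) (hδ : 0 ≤ δ) (hD0 : 0 ≤ D) (hD1 : D ≤ 1)
    (x : ι → α → ℝ) (hx : x = fun i v => if v ∈ E i then 1 else 0)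
    (d : α → ℝ) (hd : d = fun v => ∑ i ∈ I, w i * x i v)
    (hd1 : ∀ v ∈ S, d v ≤ 1)
    (g : α → α → ℝ) (hg : g = fun u v => ∑ i ∈ I, w i * x i u * x i v)
    (hgδ : ∀ u ∈ S, ∀ v ∈ S, u ≠ v → g u v ≤ δ)
    (hS : 0 < (S.card : ℝ)) (hSδ : 1 ≤ δ * S.card)
    (hq : q = r * (r - 1) * D / S.card)
    (c : ι → α → ℝ)
    (hc : c = fun i v => ∑ j ∈ I, w j * x j v * (if Disjoint (E j) (E i) then 0 else 1)) :
    ∑ i ∈ I, w i * ∑ v ∈ S, (1 - x i v) * (d v - c i v - (D - q)) ^ 2 ≤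
      (∑ i ∈ I, w i) * (∑ v ∈ S, (d v - D) ^ 2 + 8 * r ^ 4 * δ)
        + 2 * r * ∑ v ∈ S, (d v - D) ^ 2 ∧
    (r * ∑ i ∈ I, w i - S.card * D) ^ 2 ≤ S.card * ∑ v ∈ S, (d v - D) ^ 2 := by
  have hr1 : (1 : ℝ) ≤ r := by exact_mod_cast hr
  have hx01 : ∀ i v, x i v = 0 ∨ x i v = 1 := by
    intro i v; rw [hx]; by_cases h : v ∈ E i <;> simp [h]
  have hx0 : ∀ i v, 0 ≤ x i v := by
    intro i v; rcases hx01 i v with h | h <;> simp [h]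
  have hxx : ∀ i v, x i v * x i v = x i v := by
    intro i v; rcases hx01 i v with h | h <;> simp [h]
  have hxsum : ∀ i ∈ I, ∑ v ∈ S, x i v = r := by
    intro i hi
    rw [hx]
    simp only [Finset.sum_ite_mem, Finset.sum_const, nsmul_eq_mul, mul_one]
    rw [Finset.inter_eq_right.mpr (hES i hi), hcard i hi]
  have hd0 : ∀ v, 0 ≤ d v := by
    intro v; rw [hd]; exact Finset.sum_nonneg fun i _ => mul_nonneg (hw i) (hx0 i v)
  have hg0 : ∀ u v, 0 ≤ g u v := by
    intro u v; rw [hg]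
    exact Finset.sum_nonneg fun i _ => mul_nonneg (mul_nonneg (hw i) (hx0 i u)) (hx0 i v)
  have hgd : ∀ v, g v v = d v := by
    intro v; rw [hg, hd]; exact Finset.sum_congr rfl fun i _ => by rw [mul_assoc, hxx]
  have hgsymm : ∀ u v, g u v = g v u := by
    intro u v; rw [hg]; exact Finset.sum_congr rfl fun i _ => by ring
  -- `m` is the off-diagonal part of `g`
  obtain ⟨m, hm⟩ : ∃ m : α → α → ℝ, m = fun u v => g u v - if u = v then d v else 0 := ⟨_, rfl⟩
  have hm0 : ∀ u v, 0 ≤ m u v := by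
    intro u v; rw [hm]; by_cases h : u = v
    · subst h; simp [hgd]
    · simp [h, hg0]
  have hmδ : ∀ u ∈ S, ∀ v ∈ S, m u v ≤ δ := by
    intro u hu v hv; rw [hm]; by_cases h : u = v
    · subst h; simp [hgd, hδ]
    · simpa [h] using hgδ u hu v hv h
  have hmsymm : ∀ u v, m u v = m v u := by
    intro u v; rw [hm]; by_cases h : u = v
    · subst h; rfl
    · simp [h, Ne.symm h, hgsymm u v]
  have hmrow : ∀ v ∈ S, ∑ u ∈ S, m u v = (r - 1) * d v := by
    intro v hv
    rw [hm]
    simp only [Finset.sum_sub_distrib, Finset.sum_ite_eq', hv, if_true]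
    have : ∑ u ∈ S, g u v = r * d v := by
      rw [hg, hd]
      simp only
      rw [Finset.sum_comm, Finset.mul_sum]
      refine Finset.sum_congr rfl fun i hi => ?_
      rw [← hxsum i hi, Finset.sum_mul]
      exact Finset.sum_congr rfl fun u _ => by ring
    rw [this]; ring
  obtain ⟨t, ht⟩ : ∃ t : ι → α → ℝ, t = fun i v => ∑ u ∈ S, x i u * m u v := ⟨_, rfl⟩
  have ht0 : ∀ i v, 0 ≤ t i v := by
    intro i v; rw [ht]; exact Finset.sum_nonneg fun u _ => mul_nonneg (hx0 i u) (hm0 u v)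
  have htδ : ∀ i ∈ I, ∀ v ∈ S, t i v ≤ r * δ := by
    intro i hi v hv
    rw [ht, ← hxsum i hi, Finset.sum_mul]
    exact Finset.sum_le_sum fun u hu => mul_le_mul_of_nonneg_left (hmδ u hu v hv) (hx0 i u)
  have htsum : ∀ i ∈ I, ∑ v ∈ S, t i v ≤ r ^ 2 := by
    intro i hi
    rw [ht]; simp only
    rw [Finset.sum_comm]
    calc ∑ u ∈ S, ∑ v ∈ S, x i u * m u v = ∑ u ∈ S, x i u * ((r - 1) * d u) := by
          refine Finset.sum_congr rfl fun u hu => ?_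
          rw [← Finset.mul_sum, ← hmrow u hu]
          congr 1
          exact Finset.sum_congr rfl fun v _ => hmsymm u v
      _ ≤ ∑ u ∈ S, x i u * r := by
          refine Finset.sum_le_sum fun u hu => mul_le_mul_of_nonneg_left ?_ (hx0 i u)
          nlinarith [hd1 u hu, hd0 u]
      _ = r ^ 2 := by rw [← Finset.sum_mul, hxsum i hi]; ring
  -- intersection sizes
  obtain ⟨s, hs⟩ : ∃ s : ι → ι → ℝ, s = fun i j => ∑ u ∈ S, x i u * x j u := ⟨_, rfl⟩
  have hsnat : ∀ i ∈ I, ∀ j, s i j = ((E i ∩ E j).card : ℝ) := by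
    intro i hi j
    rw [hs, hx]
    have h1 : ∀ u ∈ S, ((if u ∈ E i then (1 : ℝ) else 0) * if u ∈ E j then 1 else 0) =
        if u ∈ E i ∩ E j then 1 else 0 := by
      intro u _
      by_cases h : u ∈ E i <;> by_cases h' : u ∈ E j <;> simp [h, h']
    simp only
    rw [Finset.sum_congr rfl h1]
    simp only [Finset.sum_ite_mem, Finset.sum_const, nsmul_eq_mul, mul_one]
    rw [Finset.inter_eq_right.mpr (Finset.inter_subset_left.trans (hES i hi))]
  have hind : ∀ i ∈ I, ∀ j, (if Disjoint (E j) (E i) then (0 : ℝ) else 1) ≤ s i j ∧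
      s i j - (if Disjoint (E j) (E i) then (0 : ℝ) else 1) ≤ s i j * s i j - s i j := by
    intro i hi j
    rw [hsnat i hi j]
    by_cases h : Disjoint (E j) (E i)
    · have : E i ∩ E j = ∅ := Finset.disjoint_iff_inter_eq_empty.mp h.symm
      simp [h, this]
    · have h1 : 1 ≤ (E i ∩ E j).card := by
        rw [Nat.one_le_iff_ne_zero, Ne, Finset.card_eq_zero]
        exact fun h' => h (Finset.disjoint_iff_inter_eq_empty.mpr h').symm
      have h2 : (1 : ℝ) ≤ ((E i ∩ E j).card : ℝ) := by exact_mod_cast h1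
      simp only [h, if_false]
      exact ⟨h2, by nlinarith⟩
  have hts : ∀ i, ∀ v ∈ S, x i v = 0 → t i v = ∑ j ∈ I, w j * x j v * s i j := by
    intro i v hv h0
    rw [ht, hm, hg, hs]
    simp only [mul_sub, Finset.sum_sub_distrib, mul_ite, mul_zero, Finset.sum_ite_eq', hv,
      if_true, h0, zero_mul, sub_zero, Finset.mul_sum]
    rw [Finset.sum_comm]
    exact Finset.sum_congr rfl fun j _ => Finset.sum_congr rfl fun u _ => by ring
  have hc0 : ∀ i v, 0 ≤ c i v := by
    intro i v; rw [hc]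
    refine Finset.sum_nonneg fun j _ => mul_nonneg (mul_nonneg (hw j) (hx0 j v)) ?_
    split_ifs <;> norm_num
  have hct : ∀ i ∈ I, ∀ v ∈ S, x i v = 0 → c i v ≤ t i v := by
    intro i hi v hv h0
    rw [hts i v hv h0, hc]
    exact Finset.sum_le_sum fun j _ =>
      mul_le_mul_of_nonneg_left (hind i hi j).1 (mul_nonneg (hw j) (hx0 j v))
  have hss : ∀ i ∈ I, ∑ j ∈ I, w j * (s i j * s i j - s i j) ≤ r ^ 2 * δ := by
    intro i hi
    have h1 : ∑ v ∈ S, x i v * t i v = ∑ j ∈ I, w j * (s i j * s i j - s i j) := by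
      rw [ht, hm, hg, hd, hs]
      simp only [mul_sub, Finset.sum_sub_distrib, mul_ite, mul_zero, Finset.sum_ite_eq', 
        Finset.mul_sum]
      congr 1
      · have : ∀ v ∈ S, ∑ u ∈ S, ∑ j ∈ I, x i v * (x i u * (w j * x j u * x j v)) =
            ∑ j ∈ I, ∑ u ∈ S, x i v * (x i u * (w j * x j u * x j v)) :=
          fun v _ => Finset.sum_comm
        rw [Finset.sum_congr rfl this, Finset.sum_comm]
        refine Finset.sum_congr rfl fun j _ => ?_
        refine Finset.sum_congr rfl fun v _ => ?_
        rw [Finset.sum_mul, Finset.mul_sum]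
        exact Finset.sum_congr rfl fun u _ => by ring
      · have : ∀ v ∈ S, x i v * (if v ∈ S then ∑ j ∈ I, x i v * (w j * x j v) else 0)
            = ∑ j ∈ I, w j * (x i v * x j v) := by
          intro v hv
          rw [if_pos hv, Finset.mul_sum]
          refine Finset.sum_congr rfl fun j _ => ?_
          rw [← mul_assoc, hxx]; ring
        simp only [mul_ite, mul_zero, Finset.mul_sum] at this
        rw [Finset.sum_congr rfl this, Finset.sum_comm]
    rw [← h1]
    calc ∑ v ∈ S, x i v * t i v ≤ ∑ v ∈ S, x i v * (r * δ) :=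
          Finset.sum_le_sum fun v hv => mul_le_mul_of_nonneg_left (htδ i hi v hv) (hx0 i v)
      _ = r ^ 2 * δ := by rw [← Finset.sum_mul, hxsum i hi]; ring
  have hdiff : ∀ i ∈ I, ∑ v ∈ S, (1 - x i v) * (t i v - c i v) ≤ r ^ 3 * δ := by
    intro i hi
    calc ∑ v ∈ S, (1 - x i v) * (t i v - c i v)
        ≤ ∑ v ∈ S, ∑ j ∈ I, w j * x j v * (s i j * s i j - s i j) := by
          refine Finset.sum_le_sum fun v hv => ?_
          have hnn : ∀ j ∈ I, w j * x j v * (s i j -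
              (if Disjoint (E j) (E i) then (0 : ℝ) else 1)) ≤
              w j * x j v * (s i j * s i j - s i j) := fun j _ =>
            mul_le_mul_of_nonneg_left (hind i hi j).2 (mul_nonneg (hw j) (hx0 j v))
          rcases hx01 i v with h | h
          · rw [h, hts i v hv h, hc, sub_zero, one_mul, ← Finset.sum_sub_distrib]
            refine Finset.sum_le_sum fun j hj => ?_
            rw [← mul_sub]; exact hnn j hj
          · rw [h, sub_self, zero_mul]
            refine Finset.sum_nonneg fun j hj => le_trans ?_ (hnn j hj)
            exact mul_nonneg (mul_nonneg (hw j) (hx0 j v)) (sub_nonneg.mpr (hind i hi j).1)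
      _ = r * ∑ j ∈ I, w j * (s i j * s i j - s i j) := by
          rw [Finset.sum_comm, Finset.mul_sum]
          refine Finset.sum_congr rfl fun j hj => ?_
          rw [← hxsum j hj, Finset.sum_mul]
          exact Finset.sum_congr rfl fun v _ => by ring
      _ ≤ r * (r ^ 2 * δ) := mul_le_mul_of_nonneg_left (hss i hi) (by linarith)
      _ = r ^ 3 * δ := by ring
  have hq0 : 0 ≤ q := by
    rw [hq]; exact div_nonneg (mul_nonneg (mul_nonneg (by linarith) (by linarith)) hD0) hS.le
  have hqS : q * S.card ≤ r ^ 2 := by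
    rw [hq, div_mul_cancel₀ _ hS.ne']
    have : (r : ℝ) * (r - 1) * D ≤ r * (r - 1) * 1 :=
      mul_le_mul_of_nonneg_left hD1 (mul_nonneg (by linarith) (by linarith))
    nlinarith
  have hqδ : q ≤ r ^ 2 * δ := by
    have : q * 1 ≤ q * (δ * S.card) := mul_le_mul_of_nonneg_left hSδ hq0
    nlinarith
  -- pointwise estimate
  have hpt : ∀ i ∈ I, ∀ v ∈ S, (1 - x i v) * (d v - c i v - (D - q)) ^ 2 ≤
      (d v - D) ^ 2 - 2 * ((d v - D) * (t i v - q)) + 2 * (x i v * (r * δ + q)) +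
        2 * ((1 - x i v) * (t i v - c i v)) + (r * δ * t i v + q ^ 2) := by
    intro i hi v hv
    have a1 : d v - D ≤ 1 := by linarith [hd1 v hv]
    have a2 : -1 ≤ d v - D := by linarith [hd0 v]
    have a3 := ht0 i v
    have a4 := htδ i hi v hv
    rcases hx01 i v with h | h
    · have a5 := hct i hi v hv h
      have a6 := hc0 i v
      rw [h]
      have e1 : (d v - D) * (t i v - c i v) ≤ 1 * (t i v - c i v) :=
        mul_le_mul_of_nonneg_right a1 (by linarith)
      have e2 : c i v * c i v ≤ (r * δ) * t i v :=
        mul_le_mul (by linarith) a5 a6 (by linarith)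
      nlinarith [mul_nonneg a6 hq0]
    · rw [h]
      have e1 : (d v - D) * t i v ≤ 1 * t i v := mul_le_mul_of_nonneg_right a1 a3
      have e2 : -1 * q ≤ (d v - D) * q := mul_le_mul_of_nonneg_right a2 hq0
      nlinarith [sq_nonneg (d v - D), sq_nonneg q, mul_nonneg (le_trans a3 a4) a3]
  have hi_bound : ∀ i ∈ I, ∑ v ∈ S, (1 - x i v) * (d v - c i v - (D - q)) ^ 2 ≤
      ∑ v ∈ S, (d v - D) ^ 2 - 2 * ∑ v ∈ S, (d v - D) * (t i v - q) + 8 * r ^ 4 * δ := by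
    intro i hi
    have h1 := Finset.sum_le_sum (hpt i hi)
    simp only [Finset.sum_add_distrib, Finset.sum_sub_distrib, ← Finset.mul_sum,
      ← Finset.sum_mul, hxsum i hi, Finset.sum_const, nsmul_eq_mul] at h1
    have h2 := hdiff i hi
    have h3 : r * δ * ∑ v ∈ S, t i v ≤ r * δ * r ^ 2 :=
      mul_le_mul_of_nonneg_left (htsum i hi) (by positivity)
    have h4 : (S.card : ℝ) * q ^ 2 ≤ r ^ 2 * (r ^ 2 * δ) := by
      calc (S.card : ℝ) * q ^ 2 = (q * S.card) * q := by ring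
        _ ≤ r ^ 2 * (r ^ 2 * δ) := mul_le_mul hqS hqδ hq0 (by positivity)
    have h5 : (r : ℝ) * (r * δ + q) ≤ r * (r * δ + r ^ 2 * δ) :=
      mul_le_mul_of_nonneg_left (by linarith) (by linarith)
    have p2 : (r : ℝ) ^ 2 * δ ≤ r ^ 4 * δ :=
      mul_le_mul_of_nonneg_right (pow_le_pow_right₀ hr1 (by norm_num)) hδ
    have p3 : (r : ℝ) ^ 3 * δ ≤ r ^ 4 * δ :=
      mul_le_mul_of_nonneg_right (pow_le_pow_right₀ hr1 (by norm_num)) hδ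
    have h6 : ∑ v ∈ S, (d v - D) * (t i v - q) =
      ∑ v ∈ S, (d v - D) * (t i v - q) := rfl
    nlinarith
  -- the main term
  obtain ⟨Φ, hΦ⟩ : ∃ Φ : ℝ, Φ = ∑ v ∈ S, (d v - D) ^ 2 := ⟨_, rfl⟩
  obtain ⟨F, hF⟩ : ∃ F : ℝ, F = ∑ v ∈ S, (d v - D) := ⟨_, rfl⟩
  obtain ⟨W, hW⟩ : ∃ W : ℝ, W = ∑ i ∈ I, w i := ⟨_, rfl⟩
  have hWF : r * W = S.card * D + F := by
    rw [hF, Finset.sum_sub_distrib, Finset.sum_const, nsmul_eq_mul, hW, hd]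
    simp only
    rw [Finset.sum_comm, Finset.mul_sum]
    have : ∀ i ∈ I, ∑ v ∈ S, w i * x i v = r * w i := by
      intro i hi; rw [← Finset.mul_sum, hxsum i hi]; ring
    rw [Finset.sum_congr rfl this]; ring
  have hFΦ : F ^ 2 ≤ S.card * Φ := by
    rw [hF, hΦ]; exact sq_sum_le_card_mul_sum_sq
  obtain ⟨Z, hZ⟩ : ∃ Z : ℝ, Z = ∑ v ∈ S, ∑ u ∈ S, (d v - D) * (d u - D) * m u v := ⟨_, rfl⟩
  have hZle : -Z ≤ r * Φ := by
    have key : ∑ v ∈ S, ∑ u ∈ S, (d v - D) ^ 2 * m u v ≤ r * Φ := by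
      rw [hΦ, Finset.mul_sum]
      refine Finset.sum_le_sum fun v hv => ?_
      rw [← Finset.mul_sum, hmrow v hv, mul_comm]
      refine mul_le_mul_of_nonneg_right ?_ (sq_nonneg _)
      nlinarith [hd1 v hv, hd0 v]
    have key2 : ∑ v ∈ S, ∑ u ∈ S, (d u - D) ^ 2 * m u v =
        ∑ v ∈ S, ∑ u ∈ S, (d v - D) ^ 2 * m u v := by
      rw [Finset.sum_comm]
      exact Finset.sum_congr rfl fun u _ => Finset.sum_congr rfl fun v _ => by rw [hmsymm]
    have key3 : 0 ≤ ∑ v ∈ S, ∑ u ∈ S, ((d v - D) + (d u - D)) ^ 2 * m u v :=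
      Finset.sum_nonneg fun v _ => Finset.sum_nonneg fun u _ =>
        mul_nonneg (sq_nonneg _) (hm0 u v)
    have key4 : ∑ v ∈ S, ∑ u ∈ S, ((d v - D) + (d u - D)) ^ 2 * m u v =
        ∑ v ∈ S, ∑ u ∈ S, (d v - D) ^ 2 * m u v + ∑ v ∈ S, ∑ u ∈ S, (d u - D) ^ 2 * m u v
          + 2 * Z := by
      rw [hZ]
      simp only [Finset.mul_sum, ← Finset.sum_add_distrib]
      exact Finset.sum_congr rfl fun v _ => Finset.sum_congr rfl fun u _ => by ring
    linarith
  have hmain : ∑ i ∈ I, w i * ∑ v ∈ S, (d v - D) * (t i v - q) =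
      (r - 1) * D * (D * F + Φ) + Z - q * W * F := by
    have h1 : ∀ v ∈ S, ∑ i ∈ I, w i * t i v = (r - 1) * D * d v + ∑ u ∈ S, (d u - D) * m u v := by
      intro v hv
      have : ∑ i ∈ I, w i * t i v = ∑ u ∈ S, d u * m u v := by
        rw [ht, hd]
        simp only [Finset.mul_sum, Finset.sum_mul]
        rw [Finset.sum_comm]
        exact Finset.sum_congr rfl fun u _ => Finset.sum_congr rfl fun i _ => by ring
      rw [this]
      simp only [sub_mul, Finset.sum_sub_distrib]
      rw [← Finset.mul_sum, hmrow v hv]; ring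
    calc ∑ i ∈ I, w i * ∑ v ∈ S, (d v - D) * (t i v - q)
        = ∑ v ∈ S, (d v - D) * (∑ i ∈ I, w i * t i v - W * q) := by
          simp only [Finset.mul_sum]
          rw [Finset.sum_comm]
          refine Finset.sum_congr rfl fun v _ => ?_
          rw [hW, Finset.sum_mul, ← Finset.sum_sub_distrib, Finset.mul_sum]
          exact Finset.sum_congr rfl fun i _ => by ring
      _ = ∑ v ∈ S, ((r - 1) * D * D * (d v - D) + (r - 1) * D * (d v - D) ^ 2 +
            ∑ u ∈ S, (d v - D) * (d u - D) * m u v - q * W * (d v - D)) := by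
          refine Finset.sum_congr rfl fun v hv => ?_
          rw [h1 v hv]
          simp only [mul_assoc, ← Finset.mul_sum]
          ring
      _ = _ := by
          rw [Finset.sum_sub_distrib, Finset.sum_add_distrib, Finset.sum_add_distrib,
            ← Finset.mul_sum, ← Finset.mul_sum, ← Finset.mul_sum, ← hF, ← hΦ, ← hZ]
          ring
  have hmain2 : -(2 * ∑ i ∈ I, w i * ∑ v ∈ S, (d v - D) * (t i v - q)) ≤ 2 * r * Φ := by
    rw [hmain]
    have e1 : q * W = (r - 1) * D * D + (r - 1) * D * (F / S.card) := by
      have : q * W = (r - 1) * D / S.card * (r * W) := by rw [hq]; ring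
      rw [this, hWF, mul_add, div_mul_eq_mul_div, mul_div_assoc,
        mul_div_cancel_left₀ _ hS.ne']
      ring
    rw [e1]
    have e2 : F / S.card * F ≤ Φ := by
      rw [div_mul_eq_mul_div, div_le_iff₀ hS]; nlinarith
    have e3 : (r - 1) * D * (F / S.card * F) ≤ (r - 1) * D * Φ :=
      mul_le_mul_of_nonneg_left e2 (mul_nonneg (by linarith) hD0)
    nlinarith
  rw [← hW, ← hΦ]
  refine ⟨?_, by rw [hWF, add_sub_cancel_left]; exact hFΦ⟩
  calc ∑ i ∈ I, w i * ∑ v ∈ S, (1 - x i v) * (d v - c i v - (D - q)) ^ 2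
      ≤ ∑ i ∈ I, w i * (Φ - 2 * ∑ v ∈ S, (d v - D) * (t i v - q) + 8 * r ^ 4 * δ) := by
        refine Finset.sum_le_sum fun i hi => mul_le_mul_of_nonneg_left ?_ (hw i)
        rw [hΦ]; exact hi_bound i hi
    _ = W * (Φ + 8 * r ^ 4 * δ) -
          2 * ∑ i ∈ I, w i * ∑ v ∈ S, (d v - D) * (t i v - q) := by
        rw [hW, Finset.sum_mul, Finset.mul_sum, ← Finset.sum_sub_distrib]
        exact Finset.sum_congr rfl fun i _ => by ring
    _ ≤ _ := by linarith

set_option maxHeartbeats 1000000 in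
/-- Deterministic version of the Rödl nibble for weighted hypergraphs with a perfect fractional
matching and small codegrees. -/
theorem nibble (r : ℕ) (hr : 1 ≤ r) (ε : ℝ) (hε : 0 < ε) : ∃ δ : ℝ, 0 < δ ∧
    ∀ {α ι : Type} [DecidableEq α] (I : Finset ι) (E : ι → Finset α) (w : ι → ℝ) (V : Finset α),
      (∀ i, 0 ≤ w i) → (∀ i ∈ I, E i ⊆ V) → (∀ i ∈ I, (E i).card = r) →
      (∀ v ∈ V, ∑ i ∈ I, w i * (if v ∈ E i then 1 else 0) = 1) →
      (∀ u ∈ V, ∀ v ∈ V, u ≠ v →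
        ∑ i ∈ I, w i * (if u ∈ E i then 1 else 0) * (if v ∈ E i then 1 else 0) ≤ δ) →
      1 ≤ δ * (ε * V.card) →
      ∃ M ⊆ I, (∀ i ∈ M, ∀ j ∈ M, i ≠ j → Disjoint (E i) (E j)) ∧
        (1 - ε) * (V.card / r) ≤ (M.card : ℝ) := by
  classical
  have hr1 : (1 : ℝ) ≤ r := by exact_mod_cast hr
  obtain ⟨c, hc⟩ : ∃ c : ℝ, c = Real.exp (-(2 * r / ε)) := ⟨_, rfl⟩
  have hc0 : 0 < c := by rw [hc]; exact Real.exp_pos _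
  obtain ⟨C, hC⟩ : ∃ C : ℝ, C = 4 * r ^ 2 / (ε * c) := ⟨_, rfl⟩
  have hC0 : 0 < C := by rw [hC]; positivity
  obtain ⟨δ, hδ⟩ : ∃ δ : ℝ, δ = min (1 / (2 * (r : ℝ) ^ 2)) (ε * c ^ 2 / (32 * r ^ 4 * Real.exp C)) :=
    ⟨_, rfl⟩
  have hδ0 : 0 < δ := by
    rw [hδ]; refine lt_min (by positivity) ?_
    have := Real.exp_pos C
    positivity
  have hδ1 : r ^ 2 * δ ≤ 1 / 2 := by
    have : δ ≤ 1 / (2 * (r : ℝ) ^ 2) := by rw [hδ]; exact min_le_left _ _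
    rw [le_div_iff₀ (by positivity)] at this
    linarith
  have hδ2 : 8 * r ^ 4 * δ * Real.exp C ≤ ε * c ^ 2 / 4 := by
    have h : δ ≤ ε * c ^ 2 / (32 * r ^ 4 * Real.exp C) := by rw [hδ]; exact min_le_right _ _
    have := Real.exp_pos C
    rw [le_div_iff₀ (by positivity)] at h
    linarith
  refine ⟨δ, hδ0, ?_⟩
  intro α ι _ I E w V hw hEV hcard hdeg hcod hN
  obtain ⟨N, hNdef⟩ : ∃ N : ℝ, N = V.card := ⟨_, rfl⟩
  rw [← hNdef] at hN ⊢
  have hN0 : 0 < N := by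
    by_contra h
    push Not at h
    have : δ * (ε * N) ≤ 0 :=
      mul_nonpos_of_nonneg_of_nonpos hδ0.le (mul_nonpos_of_nonneg_of_nonpos hε.le h)
    linarith
  obtain ⟨η, hη⟩ : ∃ η : ℝ, η = 8 * r ^ 4 * δ := ⟨_, rfl⟩
  have hη0 : 0 < η := by rw [hη]; positivity
  obtain ⟨κ, hκ⟩ : ∃ κ : ℝ, κ = Real.exp (-(2 * (r ^ 2 / (ε * N)))) := ⟨_, rfl⟩
  have hκ0 : 0 < κ := by rw [hκ]; exact Real.exp_pos _
  obtain ⟨x, hx⟩ : ∃ x : ι → α → ℝ, x = fun i v => if v ∈ E i then 1 else 0 := ⟨_, rfl⟩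
  have hx0 : ∀ i v, 0 ≤ x i v := by
    intro i v; rw [hx]; by_cases h : v ∈ E i <;> simp [h]
  have claim : ∀ t : ℕ, (∀ s < t, (r : ℝ) * s ≤ (1 - ε) * N) →
      ∃ M ⊆ I, M.card = t ∧ (∀ i ∈ M, ∀ j ∈ M, i ≠ j → Disjoint (E i) (E j)) ∧
        ∃ (D : ℝ) (S : Finset α), κ ^ t ≤ D ∧ D ≤ 1 ∧ S ⊆ V ∧ (∀ i ∈ M, Disjoint (E i) S) ∧
          (S.card : ℝ) = N - r * t ∧
          ∑ v ∈ S, (∑ i ∈ I with E i ⊆ S, w i * x i v - D) ^ 2 ≤ η * t * (1 + C / N) ^ t := by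
    intro t
    induction t with
    | zero =>
      intro _
      refine ⟨∅, by simp, by simp, by simp, 1, V, by simp, le_refl _, le_refl _, by simp,
        by simp [hNdef], ?_⟩
      rw [Finset.filter_true_of_mem hEV]
      have : ∀ v ∈ V, (∑ i ∈ I, w i * x i v - 1) ^ 2 = 0 := by
        intro v hv; rw [hx]; simp only; rw [hdeg v hv]; simp
      rw [Finset.sum_eq_zero this]; simp
    | succ t ih =>
      intro hs
      obtain ⟨M, hMI, hMt, hMd, D, S, hDκ, hD1, hSV, hMS, hScard, hΦ⟩ :=
        ih fun s hs' => hs s (by omega)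
      have hrt := hs t (by omega)
      have hSε : ε * N ≤ S.card := by rw [hScard]; linarith
      have hS0 : 0 < (S.card : ℝ) := lt_of_lt_of_le (by positivity) hSε
      have hrtN : r * t ≤ N := by nlinarith
      have htN : (t : ℝ) ≤ N := by
        have : (1 : ℝ) * t ≤ r * t := mul_le_mul_of_nonneg_right hr1 (by positivity)
        linarith
      have hcD : c ≤ D := by
        refine le_trans ?_ hDκ
        rw [hκ, hc, ← Real.exp_nat_mul, Real.exp_le_exp]
        have : (t : ℝ) * (r ^ 2 / (ε * N)) ≤ r / ε := by
          rw [mul_div_assoc', div_le_div_iff₀ (by positivity) hε]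
          have : r * t * (r * ε) ≤ N * (r * ε) := mul_le_mul_of_nonneg_right hrtN (by positivity)
          nlinarith
        have e : 2 * (r : ℝ) / ε = 2 * (r / ε) := by ring
        rw [e]; linarith
      have hD0 : 0 < D := lt_of_lt_of_le hc0 hcD
      obtain ⟨J, hJ⟩ : ∃ J : Finset ι, J = I.filter (fun i => E i ⊆ S) := ⟨_, rfl⟩
      rw [← hJ] at hΦ
      have hJI : J ⊆ I := by rw [hJ]; exact Finset.filter_subset _ _
      have hJS : ∀ i ∈ J, E i ⊆ S := by intro i hi; rw [hJ] at hi; exact (Finset.mem_filter.mp hi).2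
      obtain ⟨d, hd⟩ : ∃ d : α → ℝ, d = fun v => ∑ i ∈ J, w i * x i v := ⟨_, rfl⟩
      obtain ⟨g, hg⟩ : ∃ g : α → α → ℝ, g = fun u v => ∑ i ∈ J, w i * x i u * x i v := ⟨_, rfl⟩
      obtain ⟨q, hq⟩ : ∃ q : ℝ, q = r * (r - 1) * D / S.card := ⟨_, rfl⟩
      obtain ⟨cc, hcc⟩ : ∃ cc : ι → α → ℝ, cc = fun i v =>
        ∑ j ∈ J, w j * x j v * (if Disjoint (E j) (E i) then 0 else 1) := ⟨_, rfl⟩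
      have hd1 : ∀ v ∈ S, d v ≤ 1 := by
        intro v hv
        have h1 := hdeg v (hSV hv)
        rw [hd, ← h1]; simp only
        have h2 : ∑ i ∈ J, w i * x i v ≤ ∑ i ∈ I, w i * x i v :=
          Finset.sum_le_sum_of_subset_of_nonneg hJI fun i _ _ => mul_nonneg (hw i) (hx0 i v)
        refine h2.trans (le_of_eq ?_)
        rw [hx]
      have hgδ : ∀ u ∈ S, ∀ v ∈ S, u ≠ v → g u v ≤ δ := by
        intro u hu v hv huv
        refine le_trans ?_ (hcod u (hSV hu) v (hSV hv) huv)
        have h2 : ∑ i ∈ J, w i * x i u * x i v ≤ ∑ i ∈ I, w i * x i u * x i v :=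
          Finset.sum_le_sum_of_subset_of_nonneg hJI fun i _ _ =>
            mul_nonneg (mul_nonneg (hw i) (hx0 i u)) (hx0 i v)
        rw [hg]
        refine h2.trans (le_of_eq ?_)
        rw [hx]
      have hSδ : 1 ≤ δ * S.card := hN.trans (mul_le_mul_of_nonneg_left hSε hδ0.le)
      obtain ⟨st1, st2⟩ := nibble_step J E w S r hr hw hJS (fun i hi => hcard i (hJI hi)) δ D q
        hδ0.le hD0.le hD1 x hx d hd hd1 g hg hgδ hS0 hSδ hq cc hcc
      obtain ⟨Φ, hΦdef⟩ : ∃ Φ : ℝ, Φ = ∑ v ∈ S, (d v - D) ^ 2 := ⟨_, rfl⟩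
      obtain ⟨W, hW⟩ : ∃ W : ℝ, W = ∑ i ∈ J, w i := ⟨_, rfl⟩
      have hΦ' : Φ ≤ η * t * (1 + C / N) ^ t := by rw [hΦdef, hd]; exact hΦ
      rw [← hΦdef, ← hW] at st1 st2
      rw [← hη] at st1
      have hΦ0 : 0 ≤ Φ := by rw [hΦdef]; exact Finset.sum_nonneg fun v _ => sq_nonneg _
      have hpow : (1 + C / N) ^ t ≤ Real.exp C := by
        calc (1 + C / N) ^ t ≤ (Real.exp (C / N)) ^ t := by
              refine pow_le_pow_left₀ (by positivity) ?_ t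
              linarith [Real.add_one_le_exp (C / N)]
          _ = Real.exp (t * (C / N)) := by rw [← Real.exp_nat_mul]
          _ ≤ Real.exp C := by
              rw [Real.exp_le_exp, mul_div_assoc', div_le_iff₀ hN0]
              nlinarith
      have hΦsmall : Φ ≤ ε * N * c ^ 2 / 4 := by
        calc Φ ≤ η * t * (1 + C / N) ^ t := hΦ'
          _ ≤ η * N * Real.exp C := by gcongr
          _ = (8 * r ^ 4 * δ * Real.exp C) * N := by rw [hη]; ring
          _ ≤ (ε * c ^ 2 / 4) * N := mul_le_mul_of_nonneg_right hδ2 hN0.le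
          _ = _ := by ring
      have hWlow : S.card * D / 2 ≤ r * W := by
        have h1 : (r * W - S.card * D) ^ 2 ≤ (S.card * D / 2) ^ 2 := by
          refine st2.trans ?_
          have h2 : Φ ≤ S.card * D ^ 2 / 4 := by
            refine hΦsmall.trans ?_
            have : ε * N * c ^ 2 ≤ S.card * D ^ 2 := by gcongr
            linarith
          have h3 : (S.card : ℝ) * Φ ≤ S.card * (S.card * D ^ 2 / 4) :=
            mul_le_mul_of_nonneg_left h2 hS0.le
          nlinarith
        have h4 := abs_le_of_sq_le_sq' h1 (by positivity)
        linarith [h4.1]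
      have hWlow2 : ε * N * c / 2 ≤ r * W := by
        refine le_trans ?_ hWlow
        have : ε * N * c ≤ S.card * D := by gcongr
        linarith
      have hW0 : 0 < W := by
        have : 0 < r * W := lt_of_lt_of_le (by positivity) hWlow2
        exact pos_of_mul_pos_right this (by linarith)
      have hWC : 2 * r ≤ W * (C / N) := by
        have h1 : r * W * (C / N) ≥ (ε * N * c / 2) * (C / N) :=
          mul_le_mul_of_nonneg_right hWlow2 (by positivity)
        have h2 : (ε * N * c / 2) * (C / N) = r * (2 * r) := by
          rw [hC]; field_simp; ring
        rw [h2] at h1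
        have h3 : (r : ℝ) * (2 * r) ≤ r * (W * (C / N)) := by linarith
        exact le_of_mul_le_mul_left h3 (by linarith)
      have hsum : ∑ i ∈ J, w i * ∑ v ∈ S, (1 - x i v) * (d v - cc i v - (D - q)) ^ 2 ≤
          W * (Φ * (1 + C / N) + η) := by
        refine st1.trans ?_
        have := mul_le_mul_of_nonneg_right hWC hΦ0
        linarith
      obtain ⟨i, hiJ, hi⟩ : ∃ i ∈ J, ∑ v ∈ S, (1 - x i v) * (d v - cc i v - (D - q)) ^ 2 ≤
          Φ * (1 + C / N) + η := by
        by_contra hcon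
        push Not at hcon
        have hle : ∑ i ∈ J, w i * (∑ v ∈ S, (1 - x i v) * (d v - cc i v - (D - q)) ^ 2 -
            (Φ * (1 + C / N) + η)) ≤ 0 := by
          simp only [mul_sub, Finset.sum_sub_distrib, ← Finset.sum_mul]
          rw [← hW]; linarith
        have hpos : ∃ i ∈ J, 0 < w i := by
          by_contra h
          push Not at h
          have : W ≤ 0 := by rw [hW]; exact Finset.sum_nonpos h
          linarith
        have : 0 < ∑ i ∈ J, w i * (∑ v ∈ S, (1 - x i v) * (d v - cc i v - (D - q)) ^ 2 -
            (Φ * (1 + C / N) + η)) := by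
          refine Finset.sum_pos' (fun i hi => mul_nonneg (hw i) (sub_nonneg.mpr (hcon i hi).le)) ?_
          obtain ⟨i, hi, hwi⟩ := hpos
          exact ⟨i, hi, mul_pos hwi (sub_pos.mpr (hcon i hi))⟩
        linarith
      have hiI := hJI hiJ
      have hiS := hJS i hiJ
      have hiM : i ∉ M := by
        intro h
        have h1 := hMS i h
        have h2 : E i = ∅ := by
          have := h1.mono_right hiS
          simpa using this
        have := hcard i hiI
        rw [h2] at this; simp at this; omega
      have hJ' : I.filter (fun j => E j ⊆ S \ E i) = J.filter (fun j => Disjoint (E j) (E i)) := by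
        rw [hJ, Finset.filter_filter]
        refine Finset.filter_congr fun j _ => ?_
        rw [Finset.subset_sdiff]
      refine ⟨insert i M, Finset.insert_subset hiI hMI, by rw [Finset.card_insert_of_notMem hiM, hMt],
        ?_, D - q, S \ E i, ?_, ?_, Finset.sdiff_subset.trans hSV, ?_, ?_, ?_⟩
      · intro a ha b hb hab
        rw [Finset.mem_insert] at ha hb
        rcases ha with rfl | ha <;> rcases hb with rfl | hb
        · exact absurd rfl hab
        · exact ((hMS b hb).mono_right hiS).symm
        · exact (hMS a ha).mono_right hiS
        · exact hMd a ha b hb hab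
      · -- D - q ≥ κ^(t+1)
        have hy : r * (r - 1) / (S.card : ℝ) ≤ r ^ 2 / (ε * N) := by
          refine div_le_div₀ (by positivity) (by nlinarith) (by positivity) hSε
        have hy2 : r ^ 2 / (ε * N) ≤ 1 / 2 := by
          rw [div_le_iff₀ (by positivity)]
          have : r ^ 2 * 1 ≤ r ^ 2 * (δ * (ε * N)) := mul_le_mul_of_nonneg_left hN (by positivity)
          have h3 : r ^ 2 * δ * (ε * N) ≤ 1 / 2 * (ε * N) :=
            mul_le_mul_of_nonneg_right hδ1 (by positivity)
          linarith
        obtain ⟨y, hydef⟩ : ∃ y : ℝ, y = r ^ 2 / (ε * N) := ⟨_, rfl⟩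
        rw [← hydef] at hy hy2 hκ
        have hy0 : 0 ≤ y := by rw [hydef]; positivity
        have hκy : κ ≤ 1 - y := by
          rw [hκ, Real.exp_neg, inv_le_iff_one_le_mul₀ (Real.exp_pos _)]
          have h1 := Real.add_one_le_exp (2 * y)
          have h2 : (1 - y) * (2 * y + 1) ≤ (1 - y) * Real.exp (2 * y) :=
            mul_le_mul_of_nonneg_left h1 (by linarith)
          nlinarith
        have : D - q = D * (1 - r * (r - 1) / (S.card : ℝ)) := by rw [hq]; ring
        rw [this, pow_succ]
        exact mul_le_mul hDκ (by linarith) hκ0.le hD0.le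
      · have : 0 ≤ q := by
          rw [hq]
          exact div_nonneg (mul_nonneg (mul_nonneg (by linarith) (by linarith)) hD0.le) hS0.le
        linarith
      · intro a ha
        rw [Finset.mem_insert] at ha
        rcases ha with rfl | ha
        · exact Finset.disjoint_sdiff
        · exact (hMS a ha).mono_right Finset.sdiff_subset
      · rw [Finset.cast_card_sdiff hiS, hScard, hcard i hiI]; push_cast; ring
      · rw [hJ']
        calc ∑ v ∈ S \ E i, (∑ j ∈ J with Disjoint (E j) (E i), w j * x j v - (D - q)) ^ 2
            = ∑ v ∈ S, (1 - x i v) * (d v - cc i v - (D - q)) ^ 2 := by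
              rw [← Finset.sum_sdiff hiS]
              have h0 : ∑ v ∈ E i, (1 - x i v) * (d v - cc i v - (D - q)) ^ 2 = 0 :=
                Finset.sum_eq_zero fun v hv => by rw [hx]; simp [hv]
              rw [h0, add_zero]
              refine Finset.sum_congr rfl fun v hv => ?_
              have h1 : x i v = 0 := by rw [hx]; simp [(Finset.mem_sdiff.mp hv).2]
              have h2 : ∑ j ∈ J with Disjoint (E j) (E i), w j * x j v = d v - cc i v := by
                rw [hd, hcc]; simp only
                rw [← Finset.sum_sub_distrib, Finset.sum_filter]
                refine Finset.sum_congr rfl fun j _ => ?_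
                split_ifs <;> ring
              rw [h1, h2]; ring
          _ ≤ Φ * (1 + C / N) + η := hi
          _ ≤ (η * t * (1 + C / N) ^ t) * (1 + C / N) + η * (1 + C / N) ^ (t + 1) := by
              refine add_le_add (mul_le_mul_of_nonneg_right hΦ' (by positivity)) ?_
              refine le_mul_of_one_le_right hη0.le (one_le_pow₀ ?_)
              have : 0 < C / N := by positivity
              linarith
          _ = η * ((t + 1 : ℕ) : ℝ) * (1 + C / N) ^ (t + 1) := by push_cast; ring
  obtain ⟨M, hMI, hMt, hMd, -⟩ := claim ⌈(1 - ε) * (N / r)⌉₊ (by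
    intro s hs
    rw [Nat.lt_ceil] at hs
    have : r * (s : ℝ) ≤ r * ((1 - ε) * (N / r)) := mul_le_mul_of_nonneg_left hs.le (by linarith)
    refine this.trans (le_of_eq ?_)
    field_simp)
  refine ⟨M, hMI, hMd, ?_⟩
  rw [hMt]; exact Nat.le_ceil _

lemma card_filter_superset {V : Type*} [DecidableEq V] (R g : Finset V) (m : ℕ) (hg : g ⊆ R)
    (hm : g.card ≤ m) :
    ((R.powersetCard m).filter (fun K => g ⊆ K)).card = (R.card - g.card).choose (m - g.card) := by
  rw [← Finset.card_sdiff_of_subset hg, ← Finset.card_powersetCard]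
  refine Finset.card_nbij' (fun K => K \ g) (fun L => L ∪ g) ?_ ?_ ?_ ?_
  · intro K hK
    simp only [coe_filter, mem_powersetCard, Set.mem_ofPred_eq, mem_coe] at hK ⊢
    exact ⟨Finset.sdiff_subset_sdiff hK.1.1 subset_rfl,
      by rw [Finset.card_sdiff_of_subset hK.2, hK.1.2]⟩
  · intro L hL
    simp only [coe_filter, mem_powersetCard, Set.mem_ofPred_eq, mem_coe] at hL ⊢
    have hd : Disjoint L g := (Finset.subset_sdiff.mp hL.1).2
    exact ⟨⟨Finset.union_subset (hL.1.trans Finset.sdiff_subset) hg,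
      by rw [Finset.card_union_of_disjoint hd, hL.2]; omega⟩, Finset.subset_union_right⟩
  · intro K hK
    simp only [coe_filter, mem_powersetCard, Set.mem_ofPred_eq] at hK
    exact Finset.sdiff_union_of_subset hK.2
  · intro L hL
    simp only [mem_powersetCard, mem_coe] at hL
    have hd : Disjoint L g := (Finset.subset_sdiff.mp hL.1).2
    exact Finset.union_sdiff_cancel_right hd

/-- The coefficients of the local edge gadget. -/
noncomputable def gadgetCoef {V : Type*} [DecidableEq V] (k : ℕ) (K : Finset V) (a b : V) : ℝ :=
  2 / (k * (k - 1)) - ((if a ∉ K then 1 else 0) + (if b ∉ K then 1 else 0)) / (k - 1) +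
    (if a ∉ K then 1 else 0) * (if b ∉ K then 1 else 0)

lemma abs_gadgetCoef_le {V : Type*} [DecidableEq V] (k : ℕ) (hk : 3 ≤ k) (K : Finset V) (a b : V) :
    |gadgetCoef k K a b| ≤ 1 := by
  have hk3 : (3 : ℝ) ≤ k := by exact_mod_cast hk
  have h1 : (1 : ℝ) / (k - 1) ≤ 1 / 2 := one_div_le_one_div_of_le (by norm_num) (by linarith)
  have h0 : (0 : ℝ) < 1 / (k - 1) := one_div_pos.mpr (by linarith)
  have e : (2 : ℝ) / (k * (k - 1)) = 2 / k * (1 / (k - 1)) := by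
    rw [div_mul_div_comm, mul_one]
  have h2 : (2 : ℝ) / k ≤ 1 := by rw [div_le_one (by linarith)]; linarith
  have h3 : (0 : ℝ) < 2 / k := by positivity
  unfold gadgetCoef
  rw [e, div_eq_mul_one_div (_ + _) ((k : ℝ) - 1)]
  obtain ⟨z, hz⟩ : ∃ z : ℝ, z = 1 / (k - 1) := ⟨_, rfl⟩
  obtain ⟨y, hy⟩ : ∃ y : ℝ, y = 2 / k := ⟨_, rfl⟩
  rw [← hz] at h0 h1 ⊢
  rw [← hy] at h2 h3 ⊢
  have h4 : y * z ≤ 1 * z := mul_le_mul_of_nonneg_right h2 h0.le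
  have h5 : 0 < y * z := mul_pos h3 h0
  rw [abs_le]
  by_cases ha : a ∉ K <;> by_cases hb : b ∉ K <;> simp only [ha, hb, if_true, if_false,
    not_true_eq_false, not_false_eq_true] <;> constructor <;> linarith

lemma gadget_sum {V : Type*} [DecidableEq V] (k : ℕ) (hk : 3 ≤ k) (Q : Finset V)
    (hQ : Q.card = k + 2) (g₁ g₂ a b : V) (h₁ : g₁ ∈ Q) (h₂ : g₂ ∈ Q) (hg : g₁ ≠ g₂)
    (ha : a ∈ Q) (hb : b ∈ Q) (hab : a ≠ b) :
    ∑ K ∈ Q.powersetCard k with (g₁ ∈ K ∧ g₂ ∈ K), gadgetCoef k K a b =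
      if a ∈ ({g₁, g₂} : Finset V) ∧ b ∈ ({g₁, g₂} : Finset V) then 1 else 0 := by
  have hk3 : (3 : ℝ) ≤ k := by exact_mod_cast hk
  have hgc : ({g₁, g₂} : Finset V).card = 2 := Finset.card_pair hg
  have cnt : ∀ A ⊆ Q, (((Q.powersetCard k).filter (fun K => g₁ ∈ K ∧ g₂ ∈ K)).filter
      (fun K => Disjoint K A)).card =
      if Disjoint A {g₁, g₂} then (k - A.card).choose (k - 2) else 0 := by
    intro A hA
    split_ifs with h
    · have h1 : ({g₁, g₂} : Finset V) ⊆ Q \ A := by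
        rw [Finset.subset_sdiff]
        refine ⟨?_, h.symm⟩
        intro z hz; simp only [mem_insert, mem_singleton] at hz
        rcases hz with rfl | rfl <;> assumption
      have h2 := card_filter_superset (Q \ A) {g₁, g₂} k h1 (by omega)
      rw [Finset.card_sdiff_of_subset hA, hgc, hQ] at h2
      have h3 : k + 2 - A.card - 2 = k - A.card := by omega
      rw [h3] at h2
      rw [← h2]
      congr 1
      ext K
      simp only [mem_filter, mem_powersetCard, Finset.subset_sdiff, Finset.insert_subset_iff,
        Finset.singleton_subset_iff]
      tauto
    · rw [Finset.card_eq_zero, Finset.filter_eq_empty_iff]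
      intro K hK hd
      apply h
      refine (hd.mono_left ?_).symm
      rw [mem_filter] at hK
      intro z hz; simp only [mem_insert, mem_singleton] at hz
      rcases hz with rfl | rfl
      · exact hK.2.1
      · exact hK.2.2
  have c0 := cnt ∅ (by simp)
  have ca := cnt {a} (by simpa using ha)
  have cb := cnt {b} (by simpa using hb)
  have cab := cnt {a, b} (by
    intro z hz; simp only [mem_insert, mem_singleton] at hz
    rcases hz with rfl | rfl <;> assumption)
  have e1 : (k - 1).choose (k - 2) = k - 1 := by
    have : k - 1 = (k - 2) + 1 := by omega
    rw [this, Nat.choose_succ_self_right]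
  have e0 : k.choose (k - 2) = k.choose 2 := Nat.choose_symm (by omega)
  simp only [Finset.disjoint_empty_right, Finset.filter_true, Finset.disjoint_empty_left, if_true,
    Finset.card_empty, Nat.sub_zero, e0] at c0
  simp only [Finset.disjoint_singleton_right, Finset.disjoint_singleton_left, card_singleton, e1]
    at ca cb
  rw [Finset.card_pair hab, Nat.choose_self] at cab
  have hdab : Disjoint ({a, b} : Finset V) {g₁, g₂} ↔
      a ∉ ({g₁, g₂} : Finset V) ∧ b ∉ ({g₁, g₂} : Finset V) := by
    rw [Finset.disjoint_insert_left, Finset.disjoint_singleton_left]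
  have hdab' : ∀ K : Finset V, Disjoint K {a, b} ↔ a ∉ K ∧ b ∉ K := by
    intro K; rw [Finset.disjoint_insert_right, Finset.disjoint_singleton_right]
  simp only [hdab, hdab'] at cab
  unfold gadgetCoef
  have hmul : ∀ K : Finset V, ((if a ∉ K then (1 : ℝ) else 0) * if b ∉ K then 1 else 0) =
      if a ∉ K ∧ b ∉ K then 1 else 0 := by
    intro K; by_cases h : a ∈ K <;> by_cases h' : b ∈ K <;> simp [h, h']
  simp only [hmul, Finset.sum_add_distrib, Finset.sum_sub_distrib, ← Finset.sum_div,
    Finset.sum_const, Finset.sum_boole, nsmul_eq_mul, c0, ca, cb, cab]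
  rw [Nat.cast_choose_two]
  have hk0 : (k : ℝ) ≠ 0 := by linarith
  have hk1 : (k : ℝ) - 1 ≠ 0 := by linarith
  have e2 : (k : ℝ) * (k - 1) / 2 * 2 / (k * (k - 1)) = 1 := by field_simp
  rw [e2]
  have e3 : ((k - 1 : ℕ) : ℝ) = k - 1 := by rw [Nat.cast_sub (by omega)]; simp
  by_cases p : a ∈ ({g₁, g₂} : Finset V) <;> by_cases q : b ∈ ({g₁, g₂} : Finset V) <;>
    simp only [p, q, not_true_eq_false, not_false_eq_true, if_true, if_false, and_true, and_false,
      true_and, false_and, and_self, e3, Nat.cast_zero, Nat.cast_one] <;>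
    field_simp <;> ring

open Classical in
/-- The `(i+2)`-cliques containing two given vertices. -/
noncomputable def edgeCliques {V : Type*} [Fintype V] (G : SimpleGraph V) (m : ℕ) (a b : V) :
    Finset (Finset V) :=
  (G.cliqueFinset m).filter (fun K => a ∈ K ∧ b ∈ K)

open Classical in
lemma edgeCliques_succ {V : Type*} [Fintype V] (G : SimpleGraph V) (i : ℕ) (a b : V)
    (hab : G.Adj a b) (Δ : ℝ)
    (hΔ : ∀ v, ((univ.filter (fun u => u ≠ v ∧ ¬ G.Adj v u)).card : ℝ) ≤ Δ) :
    ((edgeCliques G (i + 2) a b).card : ℝ) * (Fintype.card V - (i + 2) - (i + 2) * Δ) ≤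
      (i + 1) * (edgeCliques G (i + 3) a b).card := by
  -- pairs (clique, extension vertex)
  have hbij : (((edgeCliques G (i + 2) a b).sigma
        (fun K => univ.filter (fun v => ∀ u ∈ K, G.Adj u v)))).card =
      ((edgeCliques G (i + 3) a b).sigma (fun K => (K.erase a).erase b)).card := by
    refine Finset.card_nbij' (fun p => ⟨insert p.2 p.1, p.2⟩) (fun p => ⟨p.1.erase p.2, p.2⟩)
      ?_ ?_ ?_ ?_
    · rintro ⟨K, v⟩ hp
      simp only [coe_sigma, Set.mem_sigma_iff, mem_coe, edgeCliques, mem_filter,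
        SimpleGraph.mem_cliqueFinset_iff, mem_univ, true_and] at hp ⊢
      obtain ⟨⟨hK, haK, hbK⟩, hv⟩ := hp
      refine ⟨⟨hK.insert fun u hu => (hv u hu).symm, mem_insert_of_mem haK,
        mem_insert_of_mem hbK⟩, ?_⟩
      simp only [mem_erase, mem_insert, true_or, and_true]
      exact ⟨(hv b hbK).ne', (hv a haK).ne'⟩
    · rintro ⟨K, v⟩ hp
      simp only [coe_sigma, Set.mem_sigma_iff, mem_coe, edgeCliques, mem_filter,
        SimpleGraph.mem_cliqueFinset_iff, mem_univ, true_and, mem_erase] at hp ⊢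
      obtain ⟨⟨hK, haK, hbK⟩, hvb, hva, hvK⟩ := hp
      refine ⟨⟨hK.erase_of_mem hvK, ⟨Ne.symm hva, haK⟩, ⟨Ne.symm hvb, hbK⟩⟩, ?_⟩
      rintro u ⟨huv, huK⟩
      exact hK.1 huK hvK huv
    · rintro ⟨K, v⟩ hp
      simp only [coe_sigma, Set.mem_sigma_iff, mem_coe, mem_filter, mem_univ, true_and] at hp
      have : v ∉ K := fun h => (hp.2 v h).ne rfl
      simp [Finset.erase_insert this]
    · rintro ⟨K, v⟩ hp
      simp only [coe_sigma, Set.mem_sigma_iff, mem_coe, mem_erase] at hp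
      simp [Finset.insert_erase hp.2.2.2]
  rw [Finset.card_sigma, Finset.card_sigma] at hbij
  have h1 : ∀ K ∈ edgeCliques G (i + 3) a b, ((K.erase a).erase b).card = i + 1 := by
    intro K hK
    simp only [edgeCliques, mem_filter, SimpleGraph.mem_cliqueFinset_iff] at hK
    rw [Finset.card_erase_of_mem (by simp [hK.2.2, hab.ne']), Finset.card_erase_of_mem hK.2.1,
      hK.1.2]
    omega
  rw [Finset.sum_congr rfl h1, Finset.sum_const, smul_eq_mul] at hbij
  have h2 : ∀ K ∈ edgeCliques G (i + 2) a b, (Fintype.card V - (i + 2) - (i + 2) * Δ : ℝ) ≤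
      ((univ.filter (fun v => ∀ u ∈ K, G.Adj u v)).card : ℝ) := by
    intro K hK
    simp only [edgeCliques, mem_filter, SimpleGraph.mem_cliqueFinset_iff] at hK
    have hcov : (univ : Finset V) ⊆ univ.filter (fun v => ∀ u ∈ K, G.Adj u v) ∪
        (K ∪ K.biUnion fun u => univ.filter (fun v => v ≠ u ∧ ¬ G.Adj u v)) := by
      intro v _
      simp only [mem_union, mem_filter, mem_univ, true_and, mem_biUnion]
      by_cases h : ∀ u ∈ K, G.Adj u v
      · exact Or.inl h
      · push Not at h
        obtain ⟨u, hu, huv⟩ := h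
        by_cases hvu : v = u
        · subst hvu; exact Or.inr (Or.inl hu)
        · exact Or.inr (Or.inr ⟨u, hu, hvu, huv⟩)
    have hc := (Finset.card_le_card hcov).trans
      ((Finset.card_union_le _ _).trans (Nat.add_le_add_left
        ((Finset.card_union_le _ _).trans (Nat.add_le_add_left Finset.card_biUnion_le _)) _))
    rw [Finset.card_univ, hK.1.2] at hc
    have hc' : (Fintype.card V : ℝ) ≤ (univ.filter (fun v => ∀ u ∈ K, G.Adj u v)).card +
        (((i + 2 : ℕ) : ℝ) + ∑ u ∈ K, ((univ.filter (fun v => v ≠ u ∧ ¬ G.Adj u v)).card : ℝ)) := by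
      exact_mod_cast hc
    have hs : ∑ u ∈ K, ((univ.filter (fun v => v ≠ u ∧ ¬ G.Adj u v)).card : ℝ) ≤ (i + 2) * Δ := by
      refine (Finset.sum_le_sum fun u _ => hΔ u).trans ?_
      rw [Finset.sum_const, hK.1.2, nsmul_eq_mul]; push_cast; exact le_refl _
    push_cast at hc'
    linarith
  have h3 := Finset.sum_le_sum h2
  rw [Finset.sum_const, nsmul_eq_mul] at h3
  refine h3.trans (le_of_eq ?_)
  have : ((∑ K ∈ edgeCliques G (i + 2) a b,
      (univ.filter (fun v => ∀ u ∈ K, G.Adj u v)).card : ℕ) : ℝ) =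
      (((edgeCliques G (i + 3) a b).card * (i + 1) : ℕ) : ℝ) := by rw [hbij]
  push_cast at this
  rw [this]; ring

lemma edgeCliques_upper {V : Type*} [Fintype V] (G : SimpleGraph V) (i : ℕ) (a b : V)
    (hab : a ≠ b) :
    (edgeCliques G (i + 2) a b).card ≤ (Fintype.card V - 2).choose i := by
  classical
  have h := card_filter_superset (univ : Finset V) {a, b} (i + 2) (by simp)
    (by rw [Finset.card_pair hab]; omega)
  rw [Finset.card_pair hab, Finset.card_univ] at h
  simp only [Nat.add_sub_cancel] at h
  rw [← h]
  refine Finset.card_le_card fun K hK => ?_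
  simp only [edgeCliques, mem_filter, SimpleGraph.mem_cliqueFinset_iff] at hK
  simp only [mem_filter, mem_powersetCard, Finset.subset_univ, true_and,
    Finset.insert_subset_iff, Finset.singleton_subset_iff]
  exact ⟨hK.1.2, hK.2⟩

open Classical in
lemma edgeCliques_lower {V : Type*} [Fintype V] (G : SimpleGraph V) (k : ℕ) (a b : V)
    (hab : G.Adj a b) (Δ θ : ℝ) (hθ : 0 ≤ θ) (hθ1 : (k + 2) ^ 2 * θ ≤ 1)
    (hn : k + 2 ≤ Fintype.card V)
    (hΔθ : Δ ≤ θ * (Fintype.card V - 2 - k))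
    (hΔ : ∀ v, ((univ.filter (fun u => u ≠ v ∧ ¬ G.Adj v u)).card : ℝ) ≤ Δ) (i : ℕ) (hi : i ≤ k) :
    (1 - (i + 2) ^ 2 * θ) * (Fintype.card V - 2).choose i ≤
      ((edgeCliques G (i + 2) a b).card : ℝ) := by
  induction i with
  | zero =>
    have : ({a, b} : Finset V) ∈ edgeCliques G 2 a b := by
      simp only [edgeCliques, mem_filter, SimpleGraph.mem_cliqueFinset_iff, mem_insert, true_or,
        mem_singleton, or_true, and_true]
      rw [SimpleGraph.isNClique_iff]
      refine ⟨?_, Finset.card_pair hab.ne⟩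
      rw [Finset.coe_pair, SimpleGraph.isClique_pair]
      exact fun _ => hab
    have h1 : 1 ≤ (edgeCliques G 2 a b).card := Finset.card_pos.mpr ⟨_, this⟩
    have h2 : (1 : ℝ) ≤ ((edgeCliques G 2 a b).card : ℝ) := by exact_mod_cast h1
    simp only [Nat.choose_zero_right, Nat.cast_one, mul_one, zero_add, Nat.cast_zero]
    nlinarith
  | succ i ih =>
    have ih' := ih (by omega)
    have hik : (i : ℝ) + 1 ≤ k := by exact_mod_cast hi
    have hi0 : (0 : ℝ) ≤ i := by positivity
    have hs := edgeCliques_succ G i a b hab Δ hΔ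
    have hnk : (k : ℝ) + 2 ≤ Fintype.card V := by exact_mod_cast hn
    obtain ⟨n, hndef⟩ : ∃ n : ℝ, n = Fintype.card V := ⟨_, rfl⟩
    have hch : ((Fintype.card V - 2).choose (i + 1) : ℝ) * (i + 1) =
        (Fintype.card V - 2).choose i * (n - 2 - i) := by
      have := Nat.choose_succ_right_eq (Fintype.card V - 2) i
      have h' : (((Fintype.card V - 2).choose (i + 1) * (i + 1) : ℕ) : ℝ) =
        (((Fintype.card V - 2).choose i * (Fintype.card V - 2 - i) : ℕ) : ℝ) := by rw [this]
      rw [Nat.cast_mul, Nat.cast_mul, Nat.cast_sub (by omega), Nat.cast_sub (by omega)] at h'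
      push_cast at h'
      rw [hndef]; exact h'
    rw [← hndef] at hs hnk hΔθ
    obtain ⟨A, hA⟩ : ∃ A : ℝ, A = (edgeCliques G (i + 2) a b).card := ⟨_, rfl⟩
    obtain ⟨A', hA'⟩ : ∃ A' : ℝ, A' = (edgeCliques G (i + 1 + 2) a b).card := ⟨_, rfl⟩
    obtain ⟨B, hB⟩ : ∃ B : ℝ, B = (Fintype.card V - 2).choose i := ⟨_, rfl⟩
    obtain ⟨B', hB'⟩ : ∃ B' : ℝ, B' = (Fintype.card V - 2).choose (i + 1) := ⟨_, rfl⟩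
    have hs2 : A * (n - (i + 2) - (i + 2) * Δ) ≤ (i + 1) * A' := by rw [hA, hA']; exact hs
    rw [← hA', ← hB']
    rw [← hA, ← hB] at ih'
    rw [← hB, ← hB'] at hch
    have hA0 : 0 ≤ A := by rw [hA]; positivity
    have hB0 : 0 ≤ B := by rw [hB]; positivity
    have hm : 0 ≤ n - 2 - i := by linarith
    have d1 : Δ ≤ θ * (n - 2 - i) :=
      hΔθ.trans (mul_le_mul_of_nonneg_left (by linarith) hθ)
    have d2 : ((i : ℝ) + 2) * Δ ≤ (i + 2) * (θ * (n - 2 - i)) :=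
      mul_le_mul_of_nonneg_left d1 (by linarith)
    have d3 : A * ((n - 2 - i) * (1 - (i + 2) * θ)) ≤ (i + 1) * A' :=
      le_trans (mul_le_mul_of_nonneg_left (by linarith) hA0) hs2
    have hsm : ((i : ℝ) + 2) * θ ≤ 1 := by
      refine le_trans (mul_le_mul_of_nonneg_right ?_ hθ) hθ1
      nlinarith
    have d4 : (1 - (i + 2) ^ 2 * θ) * B * ((n - 2 - i) * (1 - (i + 2) * θ)) ≤
        A * ((n - 2 - i) * (1 - (i + 2) * θ)) :=
      mul_le_mul_of_nonneg_right ih' (mul_nonneg hm (by linarith))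
    have d5 : (1 - (i + 2) ^ 2 * θ) * B * ((n - 2 - i) * (1 - (i + 2) * θ)) =
        ((1 - (i + 2) ^ 2 * θ) * (1 - (i + 2) * θ)) * (B' * (i + 1)) := by rw [hch]; ring
    have d6 : (1 - ((i : ℝ) + 1 + 2) ^ 2 * θ) ≤ (1 - (i + 2) ^ 2 * θ) * (1 - (i + 2) * θ) := by
      have : 0 ≤ ((i : ℝ) + 2) ^ 2 * θ * ((i + 2) * θ) := by positivity
      nlinarith
    have hB'0 : 0 ≤ B' := by rw [hB']; positivity
    have d7 : (1 - ((i : ℝ) + 1 + 2) ^ 2 * θ) * (B' * (i + 1)) ≤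
        ((1 - (i + 2) ^ 2 * θ) * (1 - (i + 2) * θ)) * (B' * (i + 1)) :=
      mul_le_mul_of_nonneg_right d6 (by positivity)
    have d8 : ((i : ℝ) + 1) * ((1 - ((i : ℝ) + 1 + 2) ^ 2 * θ) * B') ≤ (i + 1) * A' := by
      linarith
    push_cast
    exact le_of_mul_le_mul_left d8 (by linarith)

set_option maxHeartbeats 1000000 in
open Classical in
/-- Smooth fractional `K_k`-decompositions of very dense graphs. -/
theorem fractional_clique_decomposition {V : Type*} [Fintype V] (G : SimpleGraph V) (k : ℕ)
    (hk : 3 ≤ k) (hn : 2 * k + 10 ≤ Fintype.card V)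
    (hΔ : ∀ v, ((univ.filter (fun u => u ≠ v ∧ ¬ G.Adj v u)).card : ℝ) ≤
      1 / (9 * (k : ℝ) ^ 10) * (Fintype.card V - 1)) :
    ∃ W : Finset V → ℝ, (∀ K ∈ G.cliqueFinset k, 0 ≤ W K) ∧
      (∀ K ∈ G.cliqueFinset k, W K ≤ 2 / ((Fintype.card V - 2).choose (k - 2) : ℝ)) ∧
      ∀ a b, G.Adj a b → ∑ K ∈ edgeCliques G k a b, W K = 1 := by
  have hk3 : (3 : ℝ) ≤ k := by exact_mod_cast hk
  have hnR : 2 * (k : ℝ) + 10 ≤ Fintype.card V := by exact_mod_cast hn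
  obtain ⟨θ, hθ⟩ : ∃ θ : ℝ, θ = 2 / (9 * (k : ℝ) ^ 10) := ⟨_, rfl⟩
  have hθ0 : 0 ≤ θ := by rw [hθ]; positivity
  have hk4 : (81 : ℝ) ≤ k ^ 4 := by
    have := pow_le_pow_left₀ (by norm_num) hk3 4
    norm_num at this; exact this
  have hkk : ((k : ℝ) + 2) ^ 4 ≤ 16 * k ^ 4 := by
    have := pow_le_pow_left₀ (by linarith) (show (k : ℝ) + 2 ≤ 2 * k by linarith) 4
    calc _ ≤ _ := this
      _ = _ := by ring
  -- the key numerical inequality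
  have hnum : (k : ℝ) * (k - 1) / 2 * ((k + 1) * (k + 2) ^ 3 * θ) ≤ 1 := by
    have h1 : (k : ℝ) * (k - 1) / 2 * ((k + 1) * (k + 2) ^ 3) ≤ k ^ 2 / 2 * (16 * k ^ 4) := by
      refine mul_le_mul (by nlinarith) ?_ (by positivity) (by positivity)
      refine le_trans ?_ hkk
      have : (0 : ℝ) ≤ (k + 2) ^ 3 := by positivity
      nlinarith
    have h2 : (k : ℝ) ^ 2 / 2 * (16 * k ^ 4) * θ ≤ 1 := by
      have e : (k : ℝ) ^ 2 / 2 * (16 * k ^ 4) * θ = 16 / (9 * k ^ 4) := by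
        rw [hθ]; field_simp
      rw [e, div_le_one (by positivity)]
      linarith
    calc _ = (k : ℝ) * (k - 1) / 2 * ((k + 1) * (k + 2) ^ 3) * θ := by ring
      _ ≤ (k : ℝ) ^ 2 / 2 * (16 * k ^ 4) * θ := mul_le_mul_of_nonneg_right h1 hθ0
      _ ≤ 1 := h2
  have hθ2 : ((k : ℝ) + 2) ^ 2 * θ ≤ 1 / 2 := by
    have h1 : ((k : ℝ) + 2) ^ 2 * θ * 2 ≤ (k : ℝ) * (k - 1) / 2 * ((k + 1) * (k + 2) ^ 3 * θ) := by
      have e : (k : ℝ) * (k - 1) / 2 * ((k + 1) * (k + 2) ^ 3 * θ) =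
        (k + 2) ^ 2 * θ * (k * (k - 1) / 2 * ((k + 1) * (k + 2))) := by ring
      rw [e]
      refine mul_le_mul_of_nonneg_left ?_ (by positivity)
      have a1 : (3 : ℝ) ≤ k * (k - 1) / 2 := by nlinarith
      have a2 : (1 : ℝ) ≤ (k + 1) * (k + 2) := by nlinarith
      nlinarith
    linarith
  have hΔθ : 1 / (9 * (k : ℝ) ^ 10) * (Fintype.card V - 1) ≤ θ * (Fintype.card V - 2 - k) := by
    have e : θ = 1 / (9 * (k : ℝ) ^ 10) * 2 := by rw [hθ]; ring
    rw [e, mul_assoc]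
    exact mul_le_mul_of_nonneg_left (by linarith) (by positivity)
  have hk2 : k - 2 + 2 = k := by omega
  have hk2R : ((k - 2 : ℕ) : ℝ) = k - 2 := by rw [Nat.cast_sub (by omega)]; simp
  have lowk : ∀ a b, G.Adj a b → (1 - (k + 2) ^ 2 * θ) * (Fintype.card V - 2).choose (k - 2) ≤
      ((edgeCliques G k a b).card : ℝ) := by
    intro a b hab
    have := edgeCliques_lower G k a b hab _ θ hθ0 (by linarith) (by omega) hΔθ hΔ (k - 2) (by omega)
    rw [hk2, hk2R] at this
    refine le_trans (mul_le_mul_of_nonneg_right ?_ (by positivity)) this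
    have : ((k : ℝ) - 2 + 2) ^ 2 * θ ≤ (k + 2) ^ 2 * θ :=
      mul_le_mul_of_nonneg_right (by nlinarith) hθ0
    linarith
  have upk : ∀ a b, G.Adj a b → ((edgeCliques G k a b).card : ℝ) ≤
      (Fintype.card V - 2).choose (k - 2) := by
    intro a b hab
    have := edgeCliques_upper G (k - 2) a b hab.ne
    rw [hk2] at this
    exact_mod_cast this
  have lowk2 : ∀ a b, G.Adj a b → 1 / 2 * ((Fintype.card V - 2).choose k : ℝ) ≤
      ((edgeCliques G (k + 2) a b).card : ℝ) := by
    intro a b hab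
    have := edgeCliques_lower G k a b hab _ θ hθ0 (by linarith) (by omega) hΔθ hΔ k le_rfl
    refine le_trans (mul_le_mul_of_nonneg_right ?_ (by positivity)) this
    linarith
  obtain ⟨B, hB⟩ : ∃ B : ℝ, B = (Fintype.card V - 2).choose (k - 2) := ⟨_, rfl⟩
  obtain ⟨B2, hB2⟩ : ∃ B2 : ℝ, B2 = (Fintype.card V - 2).choose k := ⟨_, rfl⟩
  obtain ⟨P, hP⟩ : ∃ P : ℝ, P = (Fintype.card V - k).choose 2 := ⟨_, rfl⟩
  rw [← hB] at lowk upk ⊢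
  rw [← hB2] at lowk2
  have hB0 : 0 < B := by
    rw [hB]; exact_mod_cast Nat.choose_pos (by omega)
  have hB20 : 0 < B2 := by
    rw [hB2]; exact_mod_cast Nat.choose_pos (by omega)
  have hBP : B2 * (k * (k - 1) / 2) = B * P := by
    have h := Nat.choose_mul (n := Fintype.card V - 2) (k := k) (s := k - 2) (by omega)
    have e1 : k.choose (k - 2) = k.choose 2 := Nat.choose_symm (by omega)
    have e2 : k - (k - 2) = 2 := by omega
    have e3 : Fintype.card V - 2 - (k - 2) = Fintype.card V - k := by omega
    rw [e1, e2, e3] at h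
    rw [hB, hB2, hP, ← Nat.cast_choose_two]
    exact_mod_cast h
  obtain ⟨y, hy⟩ : ∃ y : V → V → ℝ, y = fun a b => if G.Adj a b then
    (1 - 1 / B * (edgeCliques G k a b).card) / (edgeCliques G (k + 2) a b).card else 0 := ⟨_, rfl⟩
  have hsymm : ∀ m a b, edgeCliques G m a b = edgeCliques G m b a := by
    intro m a b; unfold edgeCliques
    exact Finset.filter_congr fun K _ => and_comm
  have hysymm : ∀ a b, y a b = y b a := by
    intro a b; rw [hy]; simp only; rw [hsymm k a b, hsymm (k + 2) a b, G.adj_comm]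
  have hyb : ∀ a b, |y a b| ≤ 2 * ((k + 2) ^ 2 * θ) / B2 := by
    intro a b
    rw [hy]; simp only
    split_ifs with hab
    · have h1 := lowk a b hab
      have h2 := upk a b hab
      have h3 := lowk2 a b hab
      have h5 : 0 < ((edgeCliques G (k + 2) a b).card : ℝ) := lt_of_lt_of_le (by positivity) h3
      have h4 : 0 ≤ 1 - 1 / B * ((edgeCliques G k a b).card : ℝ) := by
        rw [one_div_mul_eq_div, sub_nonneg, div_le_one hB0]; exact h2
      have h6 : 1 - 1 / B * ((edgeCliques G k a b).card : ℝ) ≤ (k + 2) ^ 2 * θ := by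
        rw [one_div_mul_eq_div, sub_le_comm, le_div_iff₀ hB0]; exact h1
      rw [abs_of_nonneg (div_nonneg h4 h5.le)]
      rw [div_le_div_iff₀ h5 hB20]
      have := mul_le_mul h6 h3 (by positivity) (by positivity)
      linarith
    · rw [abs_zero]; positivity
  obtain ⟨R, hR⟩ : ∃ R : Finset V → ℝ, R = fun K => ∑ Q ∈ G.cliqueFinset (k + 2) with K ⊆ Q,
    ∑ p ∈ Q.offDiag, y p.1 p.2 * gadgetCoef k K p.1 p.2 := ⟨_, rfl⟩
  have hRb : ∀ K ∈ G.cliqueFinset k, |R K| ≤ 2 / B := by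
    intro K hK
    rw [SimpleGraph.mem_cliqueFinset_iff] at hK
    have h1 : ∀ Q ∈ (G.cliqueFinset (k + 2)).filter (fun Q => K ⊆ Q),
        |∑ p ∈ Q.offDiag, y p.1 p.2 * gadgetCoef k K p.1 p.2| ≤
          (k + 2) * (k + 1) * (2 * ((k + 2) ^ 2 * θ) / B2) := by
      intro Q hQ
      rw [mem_filter, SimpleGraph.mem_cliqueFinset_iff] at hQ
      refine (Finset.abs_sum_le_sum_abs _ _).trans ?_
      have : ∀ p ∈ Q.offDiag, |y p.1 p.2 * gadgetCoef k K p.1 p.2| ≤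
          2 * ((k + 2) ^ 2 * θ) / B2 := by
        intro p _
        rw [abs_mul]
        calc _ ≤ |y p.1 p.2| * 1 :=
              mul_le_mul_of_nonneg_left (abs_gadgetCoef_le k hk K _ _) (abs_nonneg _)
          _ ≤ _ := by rw [mul_one]; exact hyb _ _
      refine (Finset.sum_le_sum this).trans (le_of_eq ?_)
      rw [Finset.sum_const, nsmul_eq_mul, Finset.offDiag_card, hQ.1.2]
      congr 1
      rw [Nat.cast_sub (Nat.le_mul_self _)]
      push_cast; ring
    have h2 : (((G.cliqueFinset (k + 2)).filter (fun Q => K ⊆ Q)).card : ℝ) ≤ P := by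
      have h := card_filter_superset (univ : Finset V) K (k + 2) (by simp) (by rw [hK.2]; omega)
      rw [hK.2, Finset.card_univ, Nat.add_sub_cancel_left] at h
      rw [hP, ← h]
      norm_cast
      refine Finset.card_le_card fun Q hQ => ?_
      simp only [mem_filter, SimpleGraph.mem_cliqueFinset_iff] at hQ
      simp only [mem_filter, mem_powersetCard, Finset.subset_univ, true_and]
      exact ⟨hQ.1.2, hQ.2⟩
    rw [hR]
    refine (Finset.abs_sum_le_sum_abs _ _).trans ((Finset.sum_le_sum h1).trans ?_)
    rw [Finset.sum_const, nsmul_eq_mul]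
    refine (mul_le_mul_of_nonneg_right h2 (by positivity)).trans ?_
    have e : P * ((k + 2) * (k + 1) * (2 * ((k + 2) ^ 2 * θ) / B2)) =
        2 / B * ((k : ℝ) * (k - 1) / 2 * ((k + 1) * (k + 2) ^ 3 * θ)) := by
      have hP' : P = B2 * (k * (k - 1) / 2) / B := by rw [hBP]; field_simp
      rw [hP']; field_simp
    rw [e]
    exact mul_le_of_le_one_right (by positivity) hnum
  refine ⟨fun K => 1 / B + R K / 2, ?_, ?_, ?_⟩
  · intro K hK
    have := (abs_le.mp (hRb K hK)).1
    have e : 2 / B = 2 * (1 / B) := by ring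
    rw [e] at this
    simp only; linarith
  · intro K hK
    have := (abs_le.mp (hRb K hK)).2
    have e : 2 / B = 2 * (1 / B) := by ring
    rw [e] at this ⊢
    simp only; linarith
  · intro a b hab
    have hRsum : ∑ K ∈ edgeCliques G k a b, R K = 2 * y a b * (edgeCliques G (k + 2) a b).card := by
      rw [hR]; simp only
      rw [Finset.sum_comm' (t' := G.cliqueFinset (k + 2))
        (s' := fun Q => (Q.powersetCard k).filter (fun K => a ∈ K ∧ b ∈ K))]
      · have h1 : ∀ Q ∈ G.cliqueFinset (k + 2),
            ∑ K ∈ Q.powersetCard k with (a ∈ K ∧ b ∈ K),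
              ∑ p ∈ Q.offDiag, y p.1 p.2 * gadgetCoef k K p.1 p.2 =
            if a ∈ Q ∧ b ∈ Q then 2 * y a b else 0 := by
          intro Q hQ
          rw [SimpleGraph.mem_cliqueFinset_iff] at hQ
          split_ifs with hab'
          · rw [Finset.sum_comm]
            have h2 : ∀ p ∈ Q.offDiag, ∑ K ∈ Q.powersetCard k with (a ∈ K ∧ b ∈ K),
                y p.1 p.2 * gadgetCoef k K p.1 p.2 =
                if p ∈ ({(a, b), (b, a)} : Finset (V × V)) then y p.1 p.2 else 0 := by
              intro p hp
              rw [Finset.mem_offDiag] at hp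
              rw [← Finset.mul_sum, gadget_sum k hk Q hQ.2 a b p.1 p.2 hab'.1 hab'.2 hab.ne
                hp.1 hp.2.1 hp.2.2]
              have : (p.1 ∈ ({a, b} : Finset V) ∧ p.2 ∈ ({a, b} : Finset V)) ↔
                  p ∈ ({(a, b), (b, a)} : Finset (V × V)) := by
                obtain ⟨p1, p2⟩ := p
                have h3 := hp.2.2
                simp only [mem_insert, mem_singleton, Prod.mk.injEq] at h3 ⊢
                constructor
                · rintro ⟨rfl | rfl, rfl | rfl⟩ <;> simp_all
                · rintro (⟨rfl, rfl⟩ | ⟨rfl, rfl⟩) <;> simp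
              simp only [this]
              split_ifs <;> simp
            rw [Finset.sum_congr rfl h2, Finset.sum_ite_mem]
            have h4 : Q.offDiag ∩ {(a, b), (b, a)} = {(a, b), (b, a)} := by
              rw [Finset.inter_eq_right]
              intro p hp
              simp only [mem_insert, mem_singleton] at hp
              rw [Finset.mem_offDiag]
              rcases hp with rfl | rfl
              · exact ⟨hab'.1, hab'.2, hab.ne⟩
              · exact ⟨hab'.2, hab'.1, hab.ne'⟩
            rw [h4, Finset.sum_pair (by
              intro h; exact hab.ne (Prod.mk.injEq _ _ _ _ ▸ h).1)]
            simp only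
            rw [hysymm b a]; ring
          · refine Finset.sum_eq_zero_iff_of_nonneg ?_ |>.mpr ?_ <;>
            · intro K hK
              simp only [mem_filter, mem_powersetCard] at hK
              exact absurd ⟨hK.1.1 hK.2.1, hK.1.1 hK.2.2⟩ hab'
        rw [Finset.sum_congr rfl h1, ← Finset.sum_filter, Finset.sum_const, nsmul_eq_mul]
        unfold edgeCliques
        ring
      · intro K Q
        simp only [edgeCliques, mem_filter, SimpleGraph.mem_cliqueFinset_iff, mem_powersetCard]
        constructor
        · rintro ⟨⟨h1, h2⟩, h3, h4⟩
          exact ⟨⟨⟨h4, h1.2⟩, h2⟩, h3⟩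
        · rintro ⟨⟨⟨h4, h1⟩, h2⟩, h3⟩
          exact ⟨⟨⟨h3.1.subset h4, h1⟩, h2⟩, h3, h4⟩
    have h5 : 0 < ((edgeCliques G (k + 2) a b).card : ℝ) :=
      lt_of_lt_of_le (by positivity) (lowk2 a b hab)
    have e : ∑ K ∈ edgeCliques G k a b, R K / 2 = (∑ K ∈ edgeCliques G k a b, R K) / 2 :=
      (Finset.sum_div _ _ _).symm
    rw [Finset.sum_add_distrib, e, hRsum, Finset.sum_const, nsmul_eq_mul, hy]
    simp only [hab, if_true]
    field_simp
    ring

/-- Two-transitivity of the symmetric group, in counting form. -/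
lemma perm_count_const {k : ℕ} (P : Fin k → Fin k → Prop) [DecidableRel P] (i j i' j' : Fin k)
    (hij : i ≠ j) (hij' : i' ≠ j') :
    (univ.filter (fun π : Equiv.Perm (Fin k) => P (π i) (π j))).card =
      (univ.filter (fun π : Equiv.Perm (Fin k) => P (π i') (π j'))).card := by
  obtain ⟨τ, h1, h2⟩ : ∃ τ : Equiv.Perm (Fin k), τ i' = i ∧ τ j' = j := by
    refine ⟨Equiv.swap (Equiv.swap i' i j') j * Equiv.swap i' i, ?_, ?_⟩
    · rw [Equiv.Perm.mul_apply, Equiv.swap_apply_left, Equiv.swap_apply_of_ne_of_ne _ hij]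
      intro h
      apply hij'
      apply (Equiv.swap i' i).injective
      rw [← h, Equiv.swap_apply_left]
    · rw [Equiv.Perm.mul_apply, Equiv.swap_apply_left]
  refine Finset.card_equiv (Equiv.mulRight τ) ?_
  intro π
  simp [h1, h2]

/-- The copy of `H` placed on a `k`-clique via a permutation. -/
noncomputable def cliqueCopy {k n : ℕ} (H : SimpleGraph (Fin k)) (G : SimpleGraph (Fin n))
    (p : {K : Finset (Fin n) // G.IsNClique k K} × Equiv.Perm (Fin k)) :
    SimpleGraph.Copy H G where
  toHom := ⟨fun i => ((p.1.1.equivFinOfCardEq p.1.2.2).symm (p.2.symm i)).1, by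
    intro i j hij
    refine p.1.2.1 (Subtype.prop _) (Subtype.prop _) ?_
    intro h
    exact hij.ne (p.2.symm.injective ((p.1.1.equivFinOfCardEq p.1.2.2).symm.injective
      (Subtype.ext h)))⟩
  injective' := by
    intro i j h
    exact (p.2.symm.injective ((p.1.1.equivFinOfCardEq p.1.2.2).symm.injective
      (Subtype.ext h)))

lemma cliqueCopy_adj {k n : ℕ} (H : SimpleGraph (Fin k)) (G : SimpleGraph (Fin n))
    (p : {K : Finset (Fin n) // G.IsNClique k K} × Equiv.Perm (Fin k)) (a b : Fin n) :
    (cliqueCopy H G p).toSubgraph.Adj a b ↔ ∃ (ha : a ∈ p.1.1) (hb : b ∈ p.1.1),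
      H.Adj (p.2 (p.1.1.equivFinOfCardEq p.1.2.2 ⟨a, ha⟩))
        (p.2 (p.1.1.equivFinOfCardEq p.1.2.2 ⟨b, hb⟩)) := by
  constructor
  · rintro ⟨i, j, hij, rfl, rfl⟩
    refine ⟨Subtype.prop _, Subtype.prop _, ?_⟩
    simp only [cliqueCopy]
    simpa using hij
  · rintro ⟨ha, hb, h⟩
    refine ⟨_, _, h, ?_, ?_⟩
    · simp [cliqueCopy]
    · simp [cliqueCopy]

lemma cliqueCopy_ncard {k n : ℕ} (H : SimpleGraph (Fin k)) (G : SimpleGraph (Fin n))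
    (p : {K : Finset (Fin n) // G.IsNClique k K} × Equiv.Perm (Fin k)) :
    (cliqueCopy H G p).toSubgraph.edgeSet.ncard = H.edgeSet.ncard := by
  have : (cliqueCopy H G p).toSubgraph.edgeSet =
      Set.image (Sym2.map (cliqueCopy H G p)) H.edgeSet := by
    rw [SimpleGraph.Subgraph.edgeSet_map]
    simp
  rw [this]
  exact Set.ncard_image_of_injective _ (Sym2.map.injective (cliqueCopy H G p).injective)

open Classical in
/-- The edge set of `cliqueCopy` as a finset. -/
noncomputable def copyEdges {k n : ℕ} (H : SimpleGraph (Fin k)) (G : SimpleGraph (Fin n))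
    (p : {K : Finset (Fin n) // G.IsNClique k K} × Equiv.Perm (Fin k)) : Finset (Sym2 (Fin n)) :=
  univ.filter (fun e => e ∈ (cliqueCopy H G p).toSubgraph.edgeSet)

lemma mem_copyEdges {k n : ℕ} (H : SimpleGraph (Fin k)) (G : SimpleGraph (Fin n))
    (p : {K : Finset (Fin n) // G.IsNClique k K} × Equiv.Perm (Fin k)) (e : Sym2 (Fin n)) :
    e ∈ copyEdges H G p ↔ e ∈ (cliqueCopy H G p).toSubgraph.edgeSet := by
  simp [copyEdges]

lemma card_copyEdges {k n : ℕ} (H : SimpleGraph (Fin k)) (G : SimpleGraph (Fin n))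
    (p : {K : Finset (Fin n) // G.IsNClique k K} × Equiv.Perm (Fin k)) :
    (copyEdges H G p).card = H.edgeSet.ncard := by
  rw [← cliqueCopy_ncard H G p, ← Set.ncard_coe_finset]
  congr 1
  ext e
  simp [mem_copyEdges]

open Classical in
lemma card_cliques_three {k n : ℕ} (hk : 3 ≤ k) (G : SimpleGraph (Fin n)) (T : Finset (Fin n))
    (hT : T.card = 3) :
    (univ.filter (fun K : {K : Finset (Fin n) // G.IsNClique k K} => T ⊆ K.1)).card ≤
      (n - 3).choose (k - 3) := by
  have h := card_filter_superset (univ : Finset (Fin n)) T k (subset_univ _) (by omega)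
  rw [hT, Finset.card_univ, Fintype.card_fin] at h
  rw [← h]
  refine Finset.card_le_card_of_injOn (fun K => K.1) ?_ (fun a _ b _ h => Subtype.ext h)
  intro K hK
  simp only [coe_filter, mem_univ, true_and, Set.mem_ofPred_eq, mem_powersetCard] at hK ⊢
  exact ⟨⟨subset_univ _, K.2.2⟩, hK⟩

lemma exists_third {α : Type*} [DecidableEq α] (a b c d : α) (hab : a ≠ b) (hcd : c ≠ d)
    (h : s(a, b) ≠ s(c, d)) : ∃ x, (x = c ∨ x = d) ∧ x ≠ a ∧ x ≠ b := by
  by_contra! hcon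
  have h1 := hcon c (Or.inl rfl)
  have h2 := hcon d (Or.inr rfl)
  apply h
  rw [Sym2.eq_iff]
  by_cases hc : c = a
  · subst hc
    exact Or.inl ⟨rfl, (h2 hcd.symm).symm⟩
  · have := h1 hc
    subst this
    by_cases hd : d = a
    · exact Or.inr ⟨hd.symm, rfl⟩
    · exact absurd (h2 hd).symm hcd

set_option maxHeartbeats 1000000 in
open Classical in
lemma weighted_assembly {k n r : ℕ} (hk : 3 ≤ k) (hkn : k ≤ n) (H : SimpleGraph (Fin k))
    (hH : H.edgeSet.Nonempty)
    (hr : H.edgeSet.ncard = r) (G : SimpleGraph (Fin n)) (W : Finset (Fin n) → ℝ)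
    (hW0 : ∀ K, G.IsNClique k K → 0 ≤ W K)
    (hW1 : ∀ K, G.IsNClique k K → W K ≤ 2 / ((n - 2).choose (k - 2) : ℝ))
    (hW : ∀ a b, G.Adj a b → ∑ K ∈ edgeCliques G k a b, W K = 1) :
    ∃ w : {K : Finset (Fin n) // G.IsNClique k K} × Equiv.Perm (Fin k) → ℝ,
      (∀ i, 0 ≤ w i) ∧
      (∀ v ∈ G.edgeSet, ∑ i, w i *
        (if v ∈ copyEdges H G i then 1 else 0) = 1) ∧
      (∀ u ∈ G.edgeSet, ∀ v ∈ G.edgeSet, u ≠ v → ∑ i, w i *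
        (if u ∈ copyEdges H G i then 1 else 0) *
        (if v ∈ copyEdges H G i then 1 else 0) ≤
          (k.factorial : ℝ) * (2 * (k - 2)) / (n - 2)) := by
  have h01 : (⟨0, by omega⟩ : Fin k) ≠ ⟨1, by omega⟩ := by simp
  obtain ⟨c, hc⟩ : ∃ c : ℕ, c = (univ.filter (fun π : Equiv.Perm (Fin k) =>
    H.Adj (π ⟨0, by omega⟩) (π ⟨1, by omega⟩))).card := ⟨_, rfl⟩
  have hcc : ∀ i j : Fin k, i ≠ j →
      (univ.filter (fun π : Equiv.Perm (Fin k) => H.Adj (π i) (π j))).card = c := by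
    intro i j hij
    rw [hc]
    exact perm_count_const H.Adj i j _ _ hij h01
  have hc1 : 1 ≤ c := by
    obtain ⟨e, he⟩ := hH
    induction e using Sym2.ind with
    | _ i j =>
      rw [SimpleGraph.mem_edgeSet] at he
      rw [← hcc i j he.ne]
      exact Finset.card_pos.mpr ⟨1, by simpa using he⟩
  have hc1' : (1 : ℝ) ≤ c := by exact_mod_cast hc1
  have hc0 : (0 : ℝ) < c := by linarith
  have hC : 0 < (n - 2).choose (k - 2) := Nat.choose_pos (by omega)
  have hC' : (0 : ℝ) < ((n - 2).choose (k - 2) : ℝ) := by exact_mod_cast hC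
  have hmem : ∀ K : {K : Finset (Fin n) // G.IsNClique k K}, G.IsNClique k K.1 := fun K => K.2
  refine ⟨fun i => W i.1.1 / c, fun i => div_nonneg (hW0 _ (hmem i.1)) hc0.le, ?_, ?_⟩
  · intro v hv
    induction v using Sym2.ind with
    | _ a b =>
      rw [SimpleGraph.mem_edgeSet] at hv
      simp only [mem_copyEdges, SimpleGraph.Subgraph.mem_edgeSet, cliqueCopy_adj]
      rw [Fintype.sum_prod_type]
      have h1 : ∀ K : {K : Finset (Fin n) // G.IsNClique k K},
          ∑ π : Equiv.Perm (Fin k), W K.1 / c * (if ∃ (ha : a ∈ K.1) (hb : b ∈ K.1),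
            H.Adj (π (K.1.equivFinOfCardEq K.2.2 ⟨a, ha⟩))
              (π (K.1.equivFinOfCardEq K.2.2 ⟨b, hb⟩)) then (1 : ℝ) else 0) =
          if a ∈ K.1 ∧ b ∈ K.1 then W K.1 else 0 := by
        intro K
        split_ifs with h
        · obtain ⟨ha, hb⟩ := h
          simp only [ha, hb, exists_true_left]
          rw [← Finset.mul_sum, Finset.sum_boole, hcc]
          · field_simp
          · intro h
            have := (K.1.equivFinOfCardEq K.2.2).injective h
            exact hv.ne (Subtype.ext_iff.mp this)
        · apply Finset.sum_eq_zero
          intro π _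
          rw [if_neg, mul_zero]
          rintro ⟨ha, hb, _⟩
          exact h ⟨ha, hb⟩
      rw [Finset.sum_congr rfl (fun K _ => h1 K)]
      rw [← hW a b hv, edgeCliques, Finset.sum_filter]
      have h2 := Finset.sum_subtype (F := inferInstance) (p := fun K => G.IsNClique k K)
        (G.cliqueFinset k) (fun K => SimpleGraph.mem_cliqueFinset_iff)
        (fun K => if a ∈ K ∧ b ∈ K then W K else 0)
      convert h2.symm
  · intro u hu v hv huv
    induction u using Sym2.ind with
    | _ a b =>
    induction v using Sym2.ind with
    | _ x y =>
      rw [SimpleGraph.mem_edgeSet] at hu hv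
      obtain ⟨z, hz, hza, hzb⟩ := exists_third a b x y hu.ne hv.ne huv
      have hT : ({a, b, z} : Finset (Fin n)).card = 3 :=
        Finset.card_eq_three.mpr ⟨a, b, z, hu.ne, hza.symm, hzb.symm, rfl⟩
      have hle : ∀ i : {K : Finset (Fin n) // G.IsNClique k K} × Equiv.Perm (Fin k),
          W i.1.1 / c *
          (if s(a, b) ∈ copyEdges H G i then 1 else 0) *
          (if s(x, y) ∈ copyEdges H G i then 1 else 0) ≤
          if ({a, b, z} : Finset (Fin n)) ⊆ i.1.1 then
            2 / ((n - 2).choose (k - 2) : ℝ) else 0 := by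
        intro i
        have hp : W i.1.1 / c ≤ 2 / ((n - 2).choose (k - 2) : ℝ) :=
          (div_le_self (hW0 _ (hmem i.1)) hc1').trans (hW1 _ (hmem i.1))
        simp only [mem_copyEdges, SimpleGraph.Subgraph.mem_edgeSet, cliqueCopy_adj]
        by_cases h : ({a, b, z} : Finset (Fin n)) ⊆ i.1.1
        · rw [if_pos h]
          have : (0 : ℝ) ≤ 2 / ((n - 2).choose (k - 2) : ℝ) := by positivity
          split_ifs <;> simp <;> assumption
        · rw [if_neg h]
          split_ifs with h1 h2
          · exfalso
            obtain ⟨ha, hb, _⟩ := h1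
            obtain ⟨hx, hy, _⟩ := h2
            apply h
            intro t ht
            simp only [mem_insert, mem_singleton] at ht
            rcases ht with rfl | rfl | rfl
            · exact ha
            · exact hb
            · rcases hz with rfl | rfl <;> assumption
          all_goals simp
      refine (Finset.sum_le_sum (fun i _ => hle i)).trans ?_
      rw [Fintype.sum_prod_type]
      change (∑ K : {K : Finset (Fin n) // G.IsNClique k K}, ∑ _π : Equiv.Perm (Fin k),
        if ({a, b, z} : Finset (Fin n)) ⊆ K.1 then
            2 / ((n - 2).choose (k - 2) : ℝ) else 0) ≤ _
      simp only [Finset.sum_const, Finset.card_univ, Fintype.card_perm, Fintype.card_fin]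
      rw [← Finset.smul_sum, ← Finset.sum_filter, Finset.sum_const, nsmul_eq_mul, nsmul_eq_mul]
      have h3 := card_cliques_three hk G _ hT
      have h3' : ((univ.filter (fun K : {K : Finset (Fin n) // G.IsNClique k K} =>
          ({a, b, z} : Finset (Fin n)) ⊆ K.1)).card : ℝ) ≤ ((n - 3).choose (k - 3) : ℝ) := by
        exact_mod_cast h3
      obtain ⟨m, rfl⟩ : ∃ m, n = m + 3 := ⟨n - 3, by omega⟩
      obtain ⟨l, rfl⟩ : ∃ l, k = l + 3 := ⟨k - 3, by omega⟩
      have e1 : m + 3 - 2 = m + 1 := by omega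
      have e2 : l + 3 - 2 = l + 1 := by omega
      rw [e1, e2] at hC' ⊢
      simp only [Nat.add_sub_cancel] at h3'
      have hid : ((m : ℝ) + 1) * (m.choose l : ℝ) = ((m + 1).choose (l + 1) : ℝ) * (l + 1) := by
        exact_mod_cast Nat.add_one_mul_choose_eq m l
      rw [mul_div_assoc]
      refine mul_le_mul_of_nonneg_left ?_ (by positivity)
      refine (mul_le_mul_of_nonneg_right h3' (by positivity)).trans ?_
      push_cast
      have e3 : (m : ℝ) + 3 - 2 = m + 1 := by ring
      have e4 : (l : ℝ) + 3 - 2 = l + 1 := by ring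
      rw [e3, e4, ← mul_div_assoc, div_le_div_iff₀ hC' (by positivity)]
      nlinarith [hid]

end Helpers

set_option maxHeartbeats 400000 in
theorem h_packing_aux (k : ℕ) (hk : 3 ≤ k) (H : SimpleGraph (Fin k))
    (hH : H.edgeSet.Nonempty) (ε : ℝ) (hε : 0 < ε) :
    ∃ n₀ : ℕ, ∀ n : ℕ, n₀ ≤ n → ∀ G : SimpleGraph (Fin n),
      (∀ v, ((1 : ℝ) - 1 / (9 * (k : ℝ) ^ 10)) * ((n : ℝ) - 1) ≤ ((G.neighborSet v).ncard : ℝ)) →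
      ∃ P : Finset G.Subgraph,
        (∀ c ∈ P, c.IsCopy H) ∧
        (P : Set G.Subgraph).Pairwise (fun c d => Disjoint c.edgeSet d.edgeSet) ∧
        (1 - ε) * ((G.edgeSet.ncard : ℝ) / (H.edgeSet.ncard : ℝ)) ≤ (P.card : ℝ) := by
  classical
  have hr1 : 1 ≤ H.edgeSet.ncard := (Set.ncard_pos (Set.toFinite _)).mpr hH
  obtain ⟨δ, hδ, hnib⟩ := nibble H.edgeSet.ncard hr1 ε hε
  obtain ⟨N1, hN1⟩ := exists_nat_ge ((k.factorial : ℝ) * (2 * (k - 2)) / δ)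
  obtain ⟨N2, hN2⟩ := exists_nat_ge (2 / (δ * ε))
  refine ⟨2 * k + 10 + N1 + N2, fun n hn G hG => ?_⟩
  have hnR : 2 * (k : ℝ) + 10 + N1 + N2 ≤ n := by exact_mod_cast hn
  have hk3 : (3 : ℝ) ≤ k := by exact_mod_cast hk
  have hN1' : (0 : ℝ) ≤ N1 := Nat.cast_nonneg _
  have hN2' : (0 : ℝ) ≤ N2 := Nat.cast_nonneg _
  have hdeg : ∀ v, (G.neighborSet v).ncard = G.degree v := by
    intro v
    rw [Set.ncard_eq_toFinset_card']
    rfl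
  have hΔ : ∀ v, ((Finset.univ.filter (fun u => u ≠ v ∧ ¬ G.Adj v u)).card : ℝ) ≤
      1 / (9 * (k : ℝ) ^ 10) * (Fintype.card (Fin n) - 1) := by
    intro v
    have h1 : (Finset.univ.filter (fun u => u ≠ v ∧ ¬ G.Adj v u)).card + G.degree v + 1 = n := by
      have h2 : Finset.univ.filter (fun u => u ≠ v ∧ ¬ G.Adj v u) = Gᶜ.neighborFinset v := by
        ext u
        simp [SimpleGraph.compl_adj, eq_comm]
      rw [h2, SimpleGraph.card_neighborFinset_eq_degree, SimpleGraph.degree_compl,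
        Fintype.card_fin]
      have := G.degree_lt_card_verts v
      rw [Fintype.card_fin] at this
      omega
    have h1' : ((Finset.univ.filter (fun u => u ≠ v ∧ ¬ G.Adj v u)).card : ℝ) + G.degree v + 1
        = n := by exact_mod_cast h1
    have h3 := hG v
    rw [hdeg] at h3
    rw [Fintype.card_fin]
    linarith
  obtain ⟨W, hW0, hW1, hW⟩ := fractional_clique_decomposition G k hk
    (by rw [Fintype.card_fin]; omega) (fun v => by convert hΔ v)
  rw [Fintype.card_fin] at hW1
  obtain ⟨w, hw0, hw1, hw2⟩ := weighted_assembly hk (by omega) H hH rfl G W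
    (fun K hK => hW0 K (by
      convert SimpleGraph.mem_cliqueFinset_iff.mpr hK))
    (fun K hK => hW1 K (by
      convert SimpleGraph.mem_cliqueFinset_iff.mpr hK)) hW
  have hE : ((n : ℝ) - 1) / 2 ≤ G.edgeFinset.card := by
    have v : Fin n := ⟨0, by omega⟩
    have h1 : G.degree v ≤ G.edgeFinset.card := by
      rw [← SimpleGraph.card_incidenceFinset_eq_degree]
      exact Finset.card_le_card (SimpleGraph.incidenceFinset_subset G v)
    have h1' : (G.degree v : ℝ) ≤ G.edgeFinset.card := by exact_mod_cast h1
    have h2 := hG v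
    rw [hdeg] at h2
    have h3 : 1 / (9 * (k : ℝ) ^ 10) ≤ 1 / 2 := by
      have : (1 : ℝ) ≤ (k : ℝ) ^ 10 := one_le_pow₀ (by linarith)
      exact one_div_le_one_div_of_le (by norm_num) (by linarith)
    have h4 : (1 / 2 : ℝ) * ((n : ℝ) - 1) ≤ (1 - 1 / (9 * (k : ℝ) ^ 10)) * ((n : ℝ) - 1) :=
      mul_le_mul_of_nonneg_right (by linarith) (by linarith)
    linarith
  have hcod : (k.factorial : ℝ) * (2 * (k - 2)) / (n - 2) ≤ δ := by
    rw [div_le_iff₀ hδ] at hN1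
    rw [div_le_iff₀ (by linarith)]
    have h5 : (N1 : ℝ) * δ ≤ (n - 2) * δ := mul_le_mul_of_nonneg_right (by linarith) hδ.le
    linarith
  have hlarge : 1 ≤ δ * (ε * G.edgeFinset.card) := by
    rw [div_le_iff₀ (by positivity)] at hN2
    have : (N2 : ℝ) / 2 ≤ G.edgeFinset.card := by linarith
    have h5 := mul_le_mul_of_nonneg_left this (by positivity : 0 ≤ δ * ε)
    linarith
  have hsub : ∀ i ∈ (Finset.univ : Finset ({K : Finset (Fin n) // G.IsNClique k K} ×
      Equiv.Perm (Fin k))), copyEdges H G i ⊆ G.edgeFinset := by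
    intro i _ e he
    rw [mem_copyEdges] at he
    rw [SimpleGraph.mem_edgeFinset]
    exact SimpleGraph.Subgraph.edgeSet_subset _ he
  obtain ⟨M, -, hM1, hM2⟩ := hnib Finset.univ (copyEdges H G) w G.edgeFinset hw0 hsub
    (fun i _ => card_copyEdges H G i)
    (fun v hv => by convert hw1 v (SimpleGraph.mem_edgeFinset.mp hv))
    (fun u hu v hv huv => by
      refine le_trans (le_of_eq ?_) ((hw2 u (SimpleGraph.mem_edgeFinset.mp hu) v
        (SimpleGraph.mem_edgeFinset.mp hv) huv).trans hcod)
      congr!)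
    hlarge
  have hdisj : ∀ i ∈ M, ∀ j ∈ M, i ≠ j → Disjoint (cliqueCopy H G i).toSubgraph.edgeSet
      (cliqueCopy H G j).toSubgraph.edgeSet := by
    intro i hi j hj hij
    have h1 := hM1 i hi j hj hij
    rw [Finset.disjoint_left] at h1
    rw [Set.disjoint_left]
    intro e he he'
    exact h1 ((mem_copyEdges H G i e).mpr he) ((mem_copyEdges H G j e).mpr he')
  have hinj : Set.InjOn (fun i => (cliqueCopy H G i).toSubgraph) (M : Set _) := by
    intro i hi j hj hij
    by_contra hne
    have h1 := hdisj i hi j hj hne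
    simp only at hij
    rw [← hij, disjoint_self] at h1
    have h2 := cliqueCopy_ncard H G i
    rw [h1] at h2
    simp at h2
    omega
  refine ⟨M.image (fun i => (cliqueCopy H G i).toSubgraph), ?_, ?_, ?_⟩
  · intro c hc
    obtain ⟨i, _, rfl⟩ := Finset.mem_image.mp hc
    exact ⟨(cliqueCopy H G i).isoToSubgraph.symm⟩
  · intro c hc d hd hcd
    obtain ⟨i, hi, rfl⟩ := Finset.mem_image.mp (Finset.mem_coe.mp hc)
    obtain ⟨j, hj, rfl⟩ := Finset.mem_image.mp (Finset.mem_coe.mp hd)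
    exact hdisj i hi j hj (fun h => hcd (by rw [h]))
  · rw [Finset.card_image_of_injOn hinj, Set.ncard_eq_toFinset_card' G.edgeSet]
    convert hM2
    ext e
    rw [Set.mem_toFinset, SimpleGraph.mem_edgeFinset]

/-- For every integer `k ≥ 3`, every graph `H` with `k` vertices and at least one edge, and every
`ε > 0`, there exists `n₀` such that every graph `G` on `n ≥ n₀` vertices with minimum degree at
least `(1 - 1/(9k^10))·(n-1)` has an `H`-packing of size at least `(1-ε)·e(G)/e(H)`. -/
theorem h_packing_of_min_degree (k : ℕ) (hk : 3 ≤ k) (H : SimpleGraph (Fin k))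
    (hH : H.edgeSet.Nonempty) (ε : ℝ) (hε : 0 < ε) :
    ∃ n₀ : ℕ, ∀ n : ℕ, n₀ ≤ n → ∀ G : SimpleGraph (Fin n),
      (∀ v, ((1 : ℝ) - 1 / (9 * (k : ℝ) ^ 10)) * ((n : ℝ) - 1) ≤ ((G.neighborSet v).ncard : ℝ)) →
      ∃ P : Finset G.Subgraph,
        (∀ c ∈ P, c.IsCopy H) ∧
        (P : Set G.Subgraph).Pairwise (fun c d => Disjoint c.edgeSet d.edgeSet) ∧
        (1 - ε) * ((G.edgeSet.ncard : ℝ) / (H.edgeSet.ncard : ℝ)) ≤ (P.card : ℝ) := by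
  exact h_packing_aux k hk H hH ε hε
end
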